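/- arXiv:1712.04016 — 7 statements merged into one kernel-verified Lean document; each statement's English description precedes it below -/
import Mathlib

section
/- Let k be a field, e ≥ 3 an integer, 𝓠 = k[X₁, …, X_e] the polynomial ring, and Q the localization of 𝓠 at the maximal ideal (X₁, …, X_e). Let Φ be a 3 × 3 symmetric matrix whose entries are linear forms (homogeneous polynomials of degree 1) in 𝓠, let 𝓘 be the ideal of 𝓠 generated by the 2 × 2 minors of Φ, and assume that 𝓘 contains a 𝓠-regular sequence of length 3. Then the extension I of 𝓘 to Q is a grade 3 perfect ideal of resolution format (1, 6, 8, 3), and I is not licci. -/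
/-- An ideal `I` in a commutative Noetherian local ring `Q` has **resolution format**
`(1, m, m+n-1, n)` if the minimal free resolution of `Q/I` over `Q` is
`0 → Q^n → Q^{m+n-1} → Q^m → Q`, i.e. there is an exact complex of free modules of the
indicated ranks augmented by `Q → Q/I → 0`, which is minimal in the sense that each
differential maps into `𝔫` times the target (`𝔫` the maximal ideal).  Equivalently, the
`i`-th entry of the format is the Betti number `dim_k Tor_i^Q(Q/I, k)`. -/
def HasResolutionFormat {Q : Type*} [CommRing Q] [IsLocalRing Q]
    (I : Ideal Q) (m n : ℕ) : Prop :=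
  ∃ (d1 : (Fin m → Q) →ₗ[Q] Q)
    (d2 : (Fin (m + n - 1) → Q) →ₗ[Q] (Fin m → Q))
    (d3 : (Fin n → Q) →ₗ[Q] (Fin (m + n - 1) → Q)),
    LinearMap.range d1 = I ∧
    LinearMap.range d2 = LinearMap.ker d1 ∧
    LinearMap.range d3 = LinearMap.ker d2 ∧
    LinearMap.ker d3 = ⊥ ∧
    I ≤ IsLocalRing.maximalIdeal Q ∧
    LinearMap.range d2 ≤ (IsLocalRing.maximalIdeal Q) • (⊤ : Submodule Q (Fin m → Q)) ∧
    LinearMap.range d3 ≤ (IsLocalRing.maximalIdeal Q) • (⊤ : Submodule Q (Fin (m + n - 1) → Q))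

/-- `I` is a grade `3` perfect ideal of resolution format `(1, m, m+n-1, n)`:
`I` contains a `Q`-regular sequence of length `3`, one has `m ≥ 3` and `n ≥ 1`, and the
minimal free resolution of `Q/I` has the format `(1, m, m+n-1, n)` (in particular `Q/I`
has projective dimension `3` as a `Q`-module, since `n ≥ 1`). -/
def IsGrade3PerfectOfFormat {Q : Type*} [CommRing Q] [IsLocalRing Q]
    (I : Ideal Q) (m n : ℕ) : Prop :=
  (∃ x y z : Q, x ∈ I ∧ y ∈ I ∧ z ∈ I ∧ RingTheory.Sequence.IsRegular Q [x, y, z]) ∧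
  3 ≤ m ∧ 1 ≤ n ∧ HasResolutionFormat I m n

/-- `J` is **directly linked** to `I` if there is a `Q`-regular sequence `x₁, x₂, x₃` of
elements of `I` with `J = (x₁, x₂, x₃) : I`. -/
def DirectlyLinked {Q : Type*} [CommRing Q] (I J : Ideal Q) : Prop :=
  ∃ x y z : Q, x ∈ I ∧ y ∈ I ∧ z ∈ I ∧ RingTheory.Sequence.IsRegular Q [x, y, z] ∧
    J = Submodule.colon (Ideal.span {x, y, z}) I

/-- `J` is **linked** to `I` if there is a finite chain of ideals
`I = J₀, J₁, …, J_r = J` in which `J_{i+1}` is directly linked to `J_i` for every `i`. -/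
def Linked {Q : Type*} [CommRing Q] (I J : Ideal Q) : Prop :=
  Relation.ReflTransGen (fun A B => DirectlyLinked A B) I J

/-- `I` is **licci** if it is linked to an ideal generated by a `Q`-regular sequence of
length `3`, i.e. `I` is in the linkage class of a complete intersection ideal. -/
def Licci {Q : Type*} [CommRing Q] (I : Ideal Q) : Prop :=
  ∃ C : Ideal Q, Linked I C ∧
    ∃ x y z : Q, RingTheory.Sequence.IsRegular Q [x, y, z] ∧ C = Ideal.span {x, y, z}

/-- The ideal of `2 × 2` minors of a matrix `Φ` over a commutative ring: the ideal
generated by the determinants of all `2 × 2` submatrices of `Φ`. -/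
def minors2 {R : Type*} [CommRing R] {p q : ℕ}
    (Φ : Matrix (Fin p) (Fin q) R) : Ideal R :=
  Ideal.span { d : R | ∃ (r : Fin 2 → Fin p) (c : Fin 2 → Fin q),
    Function.Injective r ∧ Function.Injective c ∧ d = (Φ.submatrix r c).det }

/-!
Józefiak's complex for the minors of a symmetric `3 × 3` matrix carries a multiplication, so its
homology is annihilated by the ideal of minors; as that ideal has grade `3`, the complex is exact.
It is minimal, which gives the format `(1, 6, 8, 3)`.

To see that the ideal is not licci, first extend `k` to an infinite field: linkage survives
faithfully flat base change. Then cut by `e - 3` generic linear forms. Only finitely many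
quotients occur along a chain of links, and the forms can be chosen regular on all of them, so
linkage survives again, now in a ring whose maximal ideal `𝔪` is generated by three elements.
There the six minors are linearly independent quadrics, by minimality of the resolution, so they
span all quadrics in three variables and the ideal becomes `𝔪²`.

If `J = c : I` is a link through the complete intersection `c`, then `I ⊗ J` modulo the image of
`c ⊗ c` is symmetric in `I` and `J`. Computing its length in two ways shows that the equality
`ℓ(I ⊗ ω) = 3 ℓ(R/I)`, with `ω` the canonical module of `R/I`, passes from `J` to `I`. It holds
for complete intersections and fails for `𝔪²`.
-/

open RingTheory.Sequence IsLocalRing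
open scoped Pointwise TensorProduct

/-! ### Independence of the regular sequence -/

section ExtRegularSequence

open CategoryTheory Abelian

universe u

variable {R : Type u} [CommRing R] {N : ModuleCat.{u} R}

/-- The connecting map `Extⁿ(N, M/aM) → Extⁿ⁺¹(N, M)` of an `M`-regular element `a`. -/
noncomputable def extConnecting (N : ModuleCat.{u} R) {M : ModuleCat.{u} R} {a : R}
    (ha : IsSMulRegular M a) (n : ℕ) :
    Ext N (ModuleCat.of R (QuotSMulTop a M)) n →ₗ[R] Ext N M (n + 1) :=
  (Ext.bilinearCompOfLinear R N (ModuleCat.of R (QuotSMulTop a M)) M n 1 (n + 1) rfl).flip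
    ha.smulShortComplex_shortExact.extClass

lemma extConnecting_surjective {M : ModuleCat.{u} R} {a : R} (ha : IsSMulRegular M a)
    (haN : a ∈ Module.annihilator R N) (n : ℕ) : Function.Surjective (extConnecting N ha n) := by
  intro y
  have h_zero := congrArg AddCommGrpCat.Hom.hom
    (Ext.postcomp_smul_id_eq_zero_of_mem_annihilator (M := M) haN (n + 1))
  exact Ext.covariant_sequence_exact₁ N ha.smulShortComplex_shortExact y
    (DFunLike.congr_fun h_zero y) rfl

lemma extConnecting_injective {M : ModuleCat.{u} R} {a : R} (ha : IsSMulRegular M a) (n : ℕ)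
    [Subsingleton (Ext N M n)] : Function.Injective (extConnecting N ha n) := by
  refine (injective_iff_map_eq_zero _).mpr fun y hy => ?_
  obtain ⟨x, rfl⟩ := Ext.covariant_sequence_exact₃ N ha.smulShortComplex_shortExact y rfl hy
  rw [Subsingleton.elim (α := Ext N M n) x 0]
  exact Ext.zero_comp ..

lemma subsingleton_ext_of_isWeaklyRegular {xs : List R}
    (hxN : ∀ x ∈ xs, x ∈ Module.annihilator R N) (M : ModuleCat.{u} R)
    (hxM : IsWeaklyRegular M xs) : ∀ i < xs.length, Subsingleton (Ext N M i) := by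
  induction xs generalizing M with
  | nil => simp
  | cons a xs ih =>
    obtain ⟨haN, hxN⟩ := List.forall_mem_cons.mp hxN
    obtain ⟨haM, hxM⟩ := (isWeaklyRegular_cons_iff M a xs).mp hxM
    rintro (_ | i) hi
    · have := haM.linearMap_subsingleton_of_mem_annihilator haN
      exact (Ext.addEquiv₀.trans ModuleCat.homAddEquiv).subsingleton
    · have := ih hxN (ModuleCat.of R (QuotSMulTop a M)) hxM i (by simpa using hi)
      exact (extConnecting_surjective haM haN i).subsingleton

theorem nonempty_linearEquiv_ext_length {xs : List R}
    (hxN : ∀ x ∈ xs, x ∈ Module.annihilator R N) (M : ModuleCat.{u} R)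
    (hxM : IsWeaklyRegular M xs) :
    Nonempty ((N →ₗ[R] M ⧸ (Ideal.ofList xs • ⊤ : Submodule R M)) ≃ₗ[R] Ext N M xs.length) := by
  induction xs generalizing M with
  | nil =>
    have h : (Ideal.ofList ([] : List R) • ⊤ : Submodule R M) = ⊥ := by simp
    exact ⟨(Submodule.quotEquivOfEqBot _ h).congrRight ≪≫ₗ ModuleCat.homLinearEquiv.symm ≪≫ₗ
      (Ext.linearEquiv₀ (R := R) (X := N) (Y := M)).symm⟩
  | cons a xs ih =>
    have := subsingleton_ext_of_isWeaklyRegular hxN M hxM xs.length (by simp)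
    obtain ⟨haN, hxN⟩ := List.forall_mem_cons.mp hxN
    obtain ⟨haM, hxM⟩ := (isWeaklyRegular_cons_iff M a xs).mp hxM
    obtain ⟨e⟩ := ih hxN (ModuleCat.of R (QuotSMulTop a M)) hxM
    exact ⟨(Submodule.quotOfListConsSMulTopEquivQuotSMulTopInner M a xs).congrRight ≪≫ₗ e ≪≫ₗ
      LinearEquiv.ofBijective (extConnecting N haM _)
        ⟨extConnecting_injective haM _, extConnecting_surjective haM haN _⟩⟩

end ExtRegularSequence

section TorsionBySet

variable {R : Type*} [CommRing R] {I : Ideal R} {M : Type*} [AddCommGroup M] [Module R M]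

lemma mem_torsionBySet_ideal {m : M} :
    m ∈ Submodule.torsionBySet R M I ↔ ∀ i ∈ I, i • m = 0 := by
  simp

/-- Evaluation at `1`, identifying `Hom(R/I, M)` with the submodule `(0 :_M I)`; for `M = R/c` this
is `(c : I)/c`. -/
def homQuotientToTorsionBySet (I : Ideal R) (M : Type*) [AddCommGroup M] [Module R M] :
    ((R ⧸ I) →ₗ[R] M) →ₗ[R] Submodule.torsionBySet R M I :=
  (LinearMap.applyₗ (1 : R ⧸ I)).codRestrict _ fun φ => mem_torsionBySet_ideal.mpr fun i hi => by
    rw [LinearMap.applyₗ_apply_apply, ← map_smul, Algebra.smul_def, mul_one]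
    exact (congrArg φ (Ideal.Quotient.eq_zero_iff_mem.mpr hi)).trans (map_zero φ)

lemma homQuotientToTorsionBySet_bijective :
    Function.Bijective (homQuotientToTorsionBySet I M) := by
  constructor
  · intro φ ψ h
    exact Submodule.linearMap_qext _ (LinearMap.ext_ring (congrArg Subtype.val h))
  · intro m
    refine ⟨I.liftQ (LinearMap.toSpanSingleton R M m)
      fun i hi => mem_torsionBySet_ideal.mp m.2 i hi, Subtype.ext ?_⟩
    exact one_smul R (m : M)

theorem nonempty_torsionBySet_linearEquiv {xs ys : List R} (hxs : ∀ x ∈ xs, x ∈ I)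
    (hys : ∀ y ∈ ys, y ∈ I) (h_length : xs.length = ys.length) (hx : IsWeaklyRegular R xs)
    (hy : IsWeaklyRegular R ys) :
    Nonempty (Submodule.torsionBySet R (R ⧸ Ideal.ofList xs) I ≃ₗ[R]
      Submodule.torsionBySet R (R ⧸ Ideal.ofList ys) I) := by
  have equiv_ext : ∀ zs : List R, (∀ z ∈ zs, z ∈ I) → IsWeaklyRegular R zs →
      Nonempty (Submodule.torsionBySet R (R ⧸ Ideal.ofList zs) I ≃ₗ[R]
        CategoryTheory.Abelian.Ext (ModuleCat.of R (R ⧸ I)) (ModuleCat.of R R) zs.length) := by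
    intro zs hzs hz
    obtain ⟨e⟩ := nonempty_linearEquiv_ext_length (N := ModuleCat.of R (R ⧸ I)) (xs := zs)
      (fun z h => (Ideal.annihilator_quotient (I := I)).ge (hzs z h)) (ModuleCat.of R R) hz
    have h_smul : (Ideal.ofList zs • ⊤ : Ideal R) = Ideal.ofList zs := by
      rw [smul_eq_mul, Ideal.mul_top]
    rw [h_smul] at e
    exact ⟨(LinearEquiv.ofBijective _ homQuotientToTorsionBySet_bijective).symm ≪≫ₗ e⟩
  obtain ⟨ex⟩ := equiv_ext xs hxs hx
  obtain ⟨ey⟩ := equiv_ext ys hys hy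
  rw [← h_length] at ey
  exact ⟨ex ≪≫ₗ ey.symm⟩

end TorsionBySet

/-! ### Regular sequences modulo an ideal -/

section RegularModIdeal

variable {R : Type*} [CommRing R] {c : Ideal R}

lemma smul_top_quotient_eq_map_mkQ (J c : Ideal R) :
    (J • ⊤ : Submodule R (R ⧸ c)) = Submodule.map c.mkQ J := by
  rw [← Submodule.range_mkQ c, ← Submodule.map_top, ← Submodule.map_smul'', smul_eq_mul,
    Ideal.mul_top]

lemma isWeaklyRegular_quotient_append_iff {l l' : List R} :
    IsWeaklyRegular (R ⧸ c) (l ++ l') ↔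
      IsWeaklyRegular (R ⧸ c) l ∧ IsWeaklyRegular (R ⧸ (c ⊔ Ideal.ofList l)) l' := by
  rw [isWeaklyRegular_append_iff, smul_top_quotient_eq_map_mkQ]
  exact and_congr_right fun _ =>
    (Submodule.quotientQuotientEquivQuotientSup c (Ideal.ofList l)).isWeaklyRegular_congr l'

lemma isWeaklyRegular_quotient_cons_iff {a : R} {l : List R} :
    IsWeaklyRegular (R ⧸ c) (a :: l) ↔
      IsSMulRegular (R ⧸ c) a ∧ IsWeaklyRegular (R ⧸ (c ⊔ Ideal.span {a})) l := by
  rw [← List.singleton_append, isWeaklyRegular_quotient_append_iff, isWeaklyRegular_singleton_iff,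
    Ideal.ofList_singleton]

lemma isWeaklyRegular_quotient_bot_iff {l : List R} :
    IsWeaklyRegular (R ⧸ (⊥ : Ideal R)) l ↔ IsWeaklyRegular R l :=
  (Submodule.quotEquivOfEqBot ⊥ rfl).isWeaklyRegular_congr l

end RegularModIdeal

/-! ### Length and duality -/

section Length

variable {R : Type*} [CommRing R] {M : Type*} [AddCommGroup M] [Module R M]

lemma length_eq_length_add_length_quotient (N : Submodule R M) :
    Module.length R M = Module.length R N + Module.length R (M ⧸ N) :=
  Module.length_eq_add_of_exact N.subtype N.mkQ N.injective_subtype N.mkQ_surjective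
    (LinearMap.exact_subtype_mkQ N)

lemma eq_top_of_length_le {N : Submodule R M} (hM : Module.length R M ≠ ⊤)
    (h : Module.length R M ≤ Module.length R N) : N = ⊤ := by
  by_contra hN
  obtain ⟨_, _⟩ :=
    isFiniteLength_iff_isNoetherian_isArtinian.mp (Module.length_ne_top_iff.mp hM)
  exact (Submodule.length_lt hN).not_ge h

lemma eq_of_le_of_length_quotient_eq {N P : Submodule R M} (hle : N ≤ P)
    (hN : Module.length R (M ⧸ N) ≠ ⊤)
    (h : Module.length R (M ⧸ N) = Module.length R (M ⧸ P)) : N = P := by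
  have h_sum := length_eq_length_add_length_quotient (Submodule.map N.mkQ P)
  rw [(Submodule.quotientQuotientEquivQuotient N P hle).length_eq, ← h] at h_sum
  have h_zero : Module.length R (Submodule.map N.mkQ P) = 0 :=
    (ENat.add_left_injective_of_ne_top hN ((zero_add _).trans h_sum)).symm
  rw [Module.length_eq_zero_iff, Submodule.subsingleton_iff_eq_bot, ← le_bot_iff,
    Submodule.map_le_iff_le_comap, ← LinearMap.ker, Submodule.ker_mkQ] at h_zero
  exact hle.antisymm h_zero

lemma length_hom_quotient (I : Ideal R) (E : Type*) [AddCommGroup E] [Module R E] :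
    Module.length R ((R ⧸ I) →ₗ[R] E) = Module.length R (Submodule.torsionBySet R E I) :=
  (LinearEquiv.ofBijective _ homQuotientToTorsionBySet_bijective).length_eq

variable {E : Type*} [AddCommGroup E] [Module R E]

lemma length_hom_eq_add_length_range_lcomp (N : Submodule R M) :
    Module.length R (M →ₗ[R] E) = Module.length R ((M ⧸ N) →ₗ[R] E) +
      Module.length R (LinearMap.range (LinearMap.lcomp R E N.subtype)) := by
  refine Module.length_eq_add_of_exact (LinearMap.lcomp R E N.mkQ)
    (LinearMap.lcomp R E N.subtype).rangeRestrict
    (LinearMap.lcomp_injective_of_surjective N.mkQ N.mkQ_surjective)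
    (LinearMap.surjective_rangeRestrict _) ?_
  have h_exact := LinearMap.exact_lcomp_of_exact_of_surjective E
    (LinearMap.exact_subtype_mkQ N) N.mkQ_surjective
  exact fun φ => Subtype.ext_iff.trans (h_exact φ)

variable [IsLocalRing R]

lemma length_hom_le (hE : Module.length R (Submodule.torsionBySet R E (maximalIdeal R)) ≤ 1)
    (hM : IsFiniteLength R M) : Module.length R (M →ₗ[R] E) ≤ Module.length R M := by
  induction hM with
  | of_subsingleton => rw [Module.length_eq_zero]; exact zero_le
  | @of_simple_quotient M _ _ N h_simple _ ih =>
    obtain ⟨m, hm, ⟨e⟩⟩ := isSimpleModule_iff_quot_maximal.mp h_simple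
    obtain rfl := eq_maximalIdeal hm
    have h_quot : Module.length R ((M ⧸ N) →ₗ[R] E) ≤ 1 :=
      ((e.congrLeft E R).length_eq.trans (length_hom_quotient (maximalIdeal R) E)).trans_le hE
    have h_range := (Module.length_le_of_injective _
      (LinearMap.range (LinearMap.lcomp R E N.subtype)).injective_subtype).trans ih
    rw [length_hom_eq_add_length_range_lcomp N, length_eq_length_add_length_quotient N, add_comm,
      Module.length_eq_one (R := R) (M := M ⧸ N)]
    exact add_le_add h_range h_quot

theorem length_hom_quotient_eq_and_lcomp_subtype_surjective
    (hE : Module.length R (Submodule.torsionBySet R E (maximalIdeal R)) ≤ 1)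
    (hM : Module.length R M ≠ ⊤) (h : Module.length R M ≤ Module.length R (M →ₗ[R] E))
    (N : Submodule R M) :
    Module.length R ((M ⧸ N) →ₗ[R] E) = Module.length R (M ⧸ N) ∧
      Function.Surjective (LinearMap.lcomp R E N.subtype) := by
  rw [length_eq_length_add_length_quotient N] at hM h
  obtain ⟨hN, hMN⟩ := WithTop.add_ne_top.mp hM
  have h_sub := length_hom_le hE (Module.length_ne_top_iff.mp hN)
  have h_quot := length_hom_le hE (Module.length_ne_top_iff.mp hMN)
  have h_range := Module.length_le_of_injective _
    (LinearMap.range (LinearMap.lcomp R E N.subtype)).injective_subtype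
  rw [length_hom_eq_add_length_range_lcomp N, add_comm] at h
  refine ⟨h_quot.antisymm ((ENat.add_le_add_iff_right hN).mp
    (h.trans (add_le_add_right (h_range.trans h_sub) _))), LinearMap.range_eq_top.mp ?_⟩
  refine eq_top_of_length_le (ne_top_of_le_ne_top hN h_sub) (h_sub.trans ?_)
  rw [add_comm, add_comm (Module.length R ((M ⧸ N) →ₗ[R] E))] at h
  exact (ENat.add_le_add_iff_right hMN).mp (h.trans (add_le_add_right h_quot _))

end Length

section ArtinianGorenstein

variable {R : Type*} [CommRing R] {c I : Ideal R}

lemma torsionBySet_quotient_eq_map_colon (c I : Ideal R) :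
    Submodule.torsionBySet R (R ⧸ c) I = Submodule.map c.mkQ (Submodule.colon c (I : Set R)) := by
  have h_iff : ∀ r : R,
      c.mkQ r ∈ Submodule.torsionBySet R (R ⧸ c) I ↔ r ∈ Submodule.colon c (I : Set R) := by
    intro r
    rw [mem_torsionBySet_ideal, Submodule.mem_colon]
    refine forall₂_congr fun i _ => ?_
    rw [← map_smul, Submodule.mkQ_apply, Submodule.Quotient.mk_eq_zero, smul_eq_mul, smul_eq_mul,
      mul_comm]
  rw [show Submodule.colon c (I : Set R) =
    Submodule.comap c.mkQ (Submodule.torsionBySet R (R ⧸ c) I) from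
      Submodule.ext fun r => (h_iff r).symm, Submodule.map_comap_eq_self]
  simp

lemma le_colon (c : Ideal R) (S : Set R) : c ≤ Submodule.colon c S :=
  fun _ hr => Submodule.mem_colon.mpr fun _ _ => Ideal.mul_mem_right _ _ hr

/-- Every homomorphism `I/c → R/c` is multiplication by an element of `R`. For `c ≤ I` this is the
vanishing of `Ext¹(R/I, R/c)` over the ring `R/c`. -/
def HomsAreScalar (c I : Ideal R) : Prop :=
  ∀ φ : Submodule.map c.mkQ I →ₗ[R] R ⧸ c, ∃ r : R, φ = r • (Submodule.map c.mkQ I).subtype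

/-- `R/c` is zero or an Artinian Gorenstein local ring: it has finite length, and its socle has
length at most one. -/
def IsArtinianGorensteinQuotient [IsLocalRing R] (c : Ideal R) : Prop :=
  Module.length R (R ⧸ c) ≠ ⊤ ∧
    Module.length R (Submodule.torsionBySet R (R ⧸ c) (maximalIdeal R)) ≤ 1

namespace IsArtinianGorensteinQuotient

variable [IsLocalRing R]

lemma length_hom_quotient_eq_and_lcomp_surjective (h : IsArtinianGorensteinQuotient c)
    (N : Submodule R (R ⧸ c)) :
    Module.length R (((R ⧸ c) ⧸ N) →ₗ[R] R ⧸ c) = Module.length R ((R ⧸ c) ⧸ N) ∧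
      Function.Surjective (LinearMap.lcomp R (R ⧸ c) N.subtype) := by
  refine length_hom_quotient_eq_and_lcomp_subtype_surjective h.2 h.1 ?_ N
  have h_torsion : Submodule.torsionBySet R (R ⧸ c) c = ⊤ := eq_top_iff.mpr fun m _ =>
    mem_torsionBySet_ideal.mpr fun i hi => by
      rw [Algebra.smul_def]
      exact (congrArg (· * m) (Ideal.Quotient.eq_zero_iff_mem.mpr hi)).trans (zero_mul m)
  rw [length_hom_quotient, h_torsion, Submodule.topEquiv.length_eq]

theorem homsAreScalar (h : IsArtinianGorensteinQuotient c) (I : Ideal R) :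
    HomsAreScalar c I := by
  intro φ
  obtain ⟨ψ, rfl⟩ := (h.length_hom_quotient_eq_and_lcomp_surjective (Submodule.map c.mkQ I)).2 φ
  obtain ⟨r, hr⟩ := Submodule.mkQ_surjective c (ψ (c.mkQ 1))
  have hψ : ψ = r • LinearMap.id := by
    refine Submodule.linearMap_qext _ (LinearMap.ext_ring ?_)
    rw [LinearMap.comp_apply, ← hr]
    exact (congrArg c.mkQ (mul_one r)).symm
  exact ⟨r, by rw [hψ]; rfl⟩

theorem length_torsionBySet (h : IsArtinianGorensteinQuotient c) (hcI : c ≤ I) :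
    Module.length R (Submodule.torsionBySet R (R ⧸ c) I) = Module.length R (R ⧸ I) := by
  have e := Submodule.quotientQuotientEquivQuotient c I hcI
  rw [← length_hom_quotient, ← (e.congrLeft (R ⧸ c) R).length_eq, ← e.length_eq]
  exact (h.length_hom_quotient_eq_and_lcomp_surjective _).1

theorem colon_colon (h : IsArtinianGorensteinQuotient c) (hcI : c ≤ I) :
    Submodule.colon c (Submodule.colon c (I : Set R) : Set R) = I := by
  set J : Ideal R := Submodule.colon c (I : Set R)
  have hIK : I ≤ Submodule.colon c (J : Set R) := fun i hi => Submodule.mem_colon.mpr fun j hj => by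
    rw [smul_eq_mul, mul_comm]
    exact Submodule.mem_colon.mp hj i hi
  have hJ : Submodule.colon c (Submodule.colon c (J : Set R) : Set R) = J :=
    le_antisymm (Submodule.colon_mono le_rfl hIK) fun j hj => Submodule.mem_colon.mpr fun k hk => by
      rw [smul_eq_mul, mul_comm]
      exact Submodule.mem_colon.mp hk j hj
  have h_length :
      Module.length R (R ⧸ I) = Module.length R (R ⧸ Submodule.colon c (J : Set R)) := by
    rw [← h.length_torsionBySet hcI, ← h.length_torsionBySet (hcI.trans hIK),
      torsionBySet_quotient_eq_map_colon, torsionBySet_quotient_eq_map_colon, hJ]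
  refine (eq_of_le_of_length_quotient_eq hIK (ne_top_of_le_ne_top h.1 ?_) h_length).symm
  exact Module.length_le_of_surjective (Submodule.factor hcI) (Submodule.factor_surjective hcI)

end IsArtinianGorensteinQuotient

end ArtinianGorenstein

/-! ### Reduction modulo a regular sequence -/

section Reduction

variable {R : Type*} [CommRing R]

lemma exists_eq_smul_of_forall_mem_smul_top {M E : Type*} [AddCommGroup M] [Module R M]
    [AddCommGroup E] [Module R E] {l : R} (hl : IsSMulRegular E l) (φ : M →ₗ[R] E)
    (hφ : ∀ m, ∃ e, φ m = l • e) : ∃ ψ : M →ₗ[R] E, φ = l • ψ := by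
  choose ψ hψ using hφ
  refine ⟨⟨⟨ψ, fun m n => hl ?_⟩, fun r m => hl ?_⟩, LinearMap.ext hψ⟩
  · simp only [smul_add, ← hψ, map_add]
  · simp only [RingHom.id_apply, smul_comm l r, ← hψ, map_smul]

lemma exists_comp_eq_of_surjective {M N P : Type*} [AddCommGroup M] [Module R M] [AddCommGroup N]
    [Module R N] [AddCommGroup P] [Module R P] {f : M →ₗ[R] N} (hf : Function.Surjective f)
    (g : M →ₗ[R] P) (h : ∀ x, f x = 0 → g x = 0) : ∃ k : N →ₗ[R] P, k ∘ₗ f = g :=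
  (LinearMap.exact_lcomp_of_exact_of_surjective P (LinearMap.exact_subtype_ker_map f) hf g).mp
    (LinearMap.ext fun x => h x x.2)

variable {c I : Ideal R} {l : R}

lemma factor_apply_eq_zero_iff {m : R ⧸ c} :
    Submodule.factor (le_sup_left : c ≤ c ⊔ Ideal.span {l}) m = 0 ↔ ∃ e, m = l • e := by
  obtain ⟨r, rfl⟩ := c.mkQ_surjective m
  rw [Submodule.factor_mk, Submodule.mkQ_apply, Submodule.Quotient.mk_eq_zero, sup_comm,
    Ideal.mem_span_singleton_sup]
  constructor
  · rintro ⟨s, a, ha, rfl⟩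
    refine ⟨c.mkQ s, ?_⟩
    rw [← map_smul, smul_eq_mul, mul_comm, Submodule.mkQ_apply, Submodule.mkQ_apply,
      Submodule.Quotient.eq, add_sub_cancel_left]
    exact ha
  · rintro ⟨e, he⟩
    obtain ⟨s, rfl⟩ := c.mkQ_surjective e
    rw [← map_smul, Submodule.mkQ_apply, Submodule.mkQ_apply, Submodule.Quotient.eq] at he
    exact ⟨s, _, he, by rw [smul_eq_mul]; ring⟩

lemma map_factor_map_mkQ : Submodule.map (Submodule.factor (le_sup_left : c ≤ c ⊔ Ideal.span {l}))
    (Submodule.map c.mkQ I) =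
      Submodule.map (c ⊔ Ideal.span {l}).mkQ (I ⊔ Ideal.span {l}) := by
  rw [← Submodule.map_comp, Submodule.factor_comp_mk, Submodule.map_sup]
  refine (sup_eq_left.mpr ?_).symm
  refine (le_bot_iff.mpr (LinearMap.le_ker_iff_map.mp ?_)).trans bot_le
  rw [Submodule.ker_mkQ]
  exact le_sup_right

lemma exists_eq_smul_subtype_add_smul (hcI : c ≤ I) (hlc : IsSMulRegular (R ⧸ c) l)
    (hlI : IsSMulRegular (R ⧸ I) l)
    (h : HomsAreScalar (c ⊔ Ideal.span {l}) (I ⊔ Ideal.span {l})) :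
    ∀ φ : Submodule.map c.mkQ I →ₗ[R] R ⧸ c, ∃ (r : R) (ψ : Submodule.map c.mkQ I →ₗ[R] R ⧸ c),
      φ = r • (Submodule.map c.mkQ I).subtype + l • ψ := by
  rw [HomsAreScalar, ← map_factor_map_mkQ] at h
  set M := Submodule.map c.mkQ I
  set p := Submodule.factor (le_sup_left : c ≤ c ⊔ Ideal.span {l})
  have hlM : IsSMulRegular ((R ⧸ c) ⧸ M) l :=
    ((Submodule.quotientQuotientEquivQuotient c I hcI).isSMulRegular_congr l).mpr hlI
  intro φ
  obtain ⟨k, hk⟩ := exists_comp_eq_of_surjective (p.submoduleMap_surjective M) (p ∘ₗ φ) <| by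
    intro m hm
    obtain ⟨e, he⟩ := factor_apply_eq_zero_iff.mp (congrArg Subtype.val hm)
    have heM : e ∈ M := mem_of_isSMulRegular_quotient_of_smul_mem hlM (he ▸ m.2)
    rw [LinearMap.comp_apply, show m = l • (⟨e, heM⟩ : M) from Subtype.ext he, map_smul]
    exact factor_apply_eq_zero_iff.mpr ⟨_, rfl⟩
  obtain ⟨r, rfl⟩ := h k
  obtain ⟨ψ, hψ⟩ := exists_eq_smul_of_forall_mem_smul_top hlc (φ - r • M.subtype) <| by
    intro m
    refine factor_apply_eq_zero_iff.mp ?_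
    rw [LinearMap.sub_apply, map_sub, sub_eq_zero]
    refine (LinearMap.congr_fun hk m).symm.trans ?_
    exact (map_smul p r (m : R ⧸ c)).symm
  exact ⟨r, ψ, by rw [← hψ, add_sub_cancel]⟩

theorem HomsAreScalar.of_sup_span_singleton [IsLocalRing R] [IsNoetherianRing R]
    (hl : l ∈ maximalIdeal R) (hcI : c ≤ I) (hlc : IsSMulRegular (R ⧸ c) l)
    (hlI : IsSMulRegular (R ⧸ I) l)
    (h : HomsAreScalar (c ⊔ Ideal.span {l}) (I ⊔ Ideal.span {l})) : HomsAreScalar c I := by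
  have h_le : (⊤ : Submodule R (Submodule.map c.mkQ I →ₗ[R] R ⧸ c)) ≤
      Submodule.span R {(Submodule.map c.mkQ I).subtype} ⊔ Ideal.span {l} • ⊤ := by
    intro φ _
    obtain ⟨r, ψ, rfl⟩ := exists_eq_smul_subtype_add_smul hcI hlc hlI h φ
    exact Submodule.add_mem_sup (Submodule.smul_mem _ r (Submodule.mem_span_singleton_self _))
      (Submodule.smul_mem_smul (Ideal.mem_span_singleton_self l) trivial)
  have hl_jacobson : Ideal.span {l} ≤ (⊥ : Ideal R).jacobson := by
    rwa [jacobson_eq_maximalIdeal ⊥ bot_ne_top, Ideal.span_singleton_le_iff_mem]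
  intro φ
  obtain ⟨r, hr⟩ := Submodule.mem_span_singleton.mp <|
    Submodule.le_of_le_smul_of_le_jacobson_bot (IsNoetherian.noetherian ⊤) hl_jacobson h_le
      (Submodule.mem_top (x := φ))
  exact ⟨r, hr.symm⟩

theorem HomsAreScalar.colon_sup_span_singleton (h : HomsAreScalar c I)
    (hlc : IsSMulRegular (R ⧸ c) l) :
    Submodule.colon (c ⊔ Ideal.span {l}) ((I ⊔ Ideal.span {l} : Ideal R) : Set R) =
      Submodule.colon c (I : Set R) ⊔ Ideal.span {l} := by
  refine le_antisymm (fun r hr => ?_) (sup_le (fun r hr => ?_)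
    (le_sup_right.trans (le_colon _ _)))
  · obtain ⟨ψ, hψ⟩ := exists_eq_smul_of_forall_mem_smul_top hlc
      (r • (Submodule.map c.mkQ I).subtype) <| by
      rintro ⟨_, i, hi, rfl⟩
      refine factor_apply_eq_zero_iff.mp ((Submodule.Quotient.mk_eq_zero _).mpr ?_)
      exact Submodule.mem_colon.mp hr i (Ideal.mem_sup_left hi)
    obtain ⟨s, rfl⟩ := h ψ
    refine Submodule.mem_sup.mpr ⟨r - l * s, Submodule.mem_colon.mpr fun i hi => ?_, l * s,
      Ideal.mul_mem_right _ _ (Ideal.mem_span_singleton_self l), sub_add_cancel _ _⟩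
    have h_eq := LinearMap.congr_fun hψ ⟨c.mkQ i, i, hi, rfl⟩
    rw [← Submodule.Quotient.mk_eq_zero c, sub_smul, Submodule.Quotient.mk_sub, sub_eq_zero,
      mul_smul]
    exact h_eq
  · refine Submodule.mem_colon.mpr fun i hi => ?_
    obtain ⟨s, j, hj, rfl⟩ := Ideal.mem_span_singleton_sup.mp (sup_comm I _ ▸ hi)
    rw [smul_add]
    refine add_mem (Ideal.mem_sup_right ?_) (Ideal.mem_sup_left (Submodule.mem_colon.mp hr j hj))
    exact Ideal.mul_mem_left _ _ (Ideal.mul_mem_left _ _ (Ideal.mem_span_singleton_self l))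

lemma isSMulRegular_quotient_colon (hlc : IsSMulRegular (R ⧸ c) l) (S : Set R) :
    IsSMulRegular (R ⧸ Submodule.colon c S) l := by
  refine (isSMulRegular_quotient_iff_mem_of_smul_mem _ _).mpr fun r hr => ?_
  rw [Submodule.mem_colon] at hr ⊢
  refine fun s hs => mem_of_isSMulRegular_quotient_of_smul_mem hlc ?_
  rw [← smul_assoc]
  exact hr s hs

theorem HomsAreScalar.colon_sup_ofList [IsLocalRing R] [IsNoetherianRing R] {ls : List R}
    (hls : ∀ l ∈ ls, l ∈ maximalIdeal R) (hcI : c ≤ I) (hc : IsWeaklyRegular (R ⧸ c) ls)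
    (hI : IsWeaklyRegular (R ⧸ I) ls)
    (h : HomsAreScalar (c ⊔ Ideal.ofList ls) (I ⊔ Ideal.ofList ls)) :
    HomsAreScalar c I ∧
      Submodule.colon (c ⊔ Ideal.ofList ls) ((I ⊔ Ideal.ofList ls : Ideal R) : Set R) =
        Submodule.colon c (I : Set R) ⊔ Ideal.ofList ls ∧
      IsWeaklyRegular (R ⧸ Submodule.colon c (I : Set R)) ls := by
  induction ls generalizing c I with
  | nil => simpa only [Ideal.ofList_nil, sup_bot_eq, IsWeaklyRegular.nil, and_true] using h
  | cons l ls ih =>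
    obtain ⟨hl, hls⟩ := List.forall_mem_cons.mp hls
    obtain ⟨hlc, hc⟩ := isWeaklyRegular_quotient_cons_iff.mp hc
    obtain ⟨hlI, hI⟩ := isWeaklyRegular_quotient_cons_iff.mp hI
    rw [Ideal.ofList_cons, ← sup_assoc, ← sup_assoc] at *
    obtain ⟨h_scalar, h_colon, h_reg⟩ := ih hls (sup_le_sup_right hcI _) hc hI h
    replace h_scalar := h_scalar.of_sup_span_singleton hl hcI hlc hlI
    rw [h_scalar.colon_sup_span_singleton hlc] at h_colon h_reg
    exact ⟨h_scalar, by rw [h_colon, sup_assoc],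
      isWeaklyRegular_quotient_cons_iff.mpr ⟨isSMulRegular_quotient_colon hlc _, h_reg⟩⟩

end Reduction

/-! ### An invariant of linkage -/

section TensorLength

variable {R : Type*} [CommRing R] {n : ℕ}

lemma ofList_ofFn (x : Fin n → R) :
    Ideal.ofList (List.ofFn x) = Ideal.span (Set.range x) := by
  simp only [Ideal.ofList, List.mem_ofFn', Set.ofPred_mem_eq]

-- The syzygies of a regular sequence are generated by the Koszul relations.
lemma mem_span_range_of_sum_mul_eq_zero {x a : Fin n → R}
    (hx : IsWeaklyRegular R (List.ofFn x)) (h : ∑ i, a i * x i = 0) (i : Fin n) :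
    a i ∈ Ideal.span (Set.range x) := by
  induction n with
  | zero => exact i.elim0
  | succ n ih =>
    rw [List.ofFn_succ', List.concat_eq_append, ← isWeaklyRegular_quotient_bot_iff,
      isWeaklyRegular_quotient_append_iff, isWeaklyRegular_quotient_bot_iff, bot_sup_eq,
      isWeaklyRegular_singleton_iff, ofList_ofFn] at hx
    obtain ⟨h_init, h_last⟩ := hx
    set y : Fin n → R := fun i => x i.castSucc
    have hy_le : Ideal.span (Set.range y) ≤ Ideal.span (Set.range x) :=
      Ideal.span_mono (Set.range_comp_subset_range Fin.castSucc x)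
    rw [Fin.sum_univ_castSucc] at h
    have ha_last : a (Fin.last n) ∈ Ideal.span (Set.range y) := by
      refine mem_of_isSMulRegular_quotient_of_smul_mem h_last ?_
      rw [smul_eq_mul, mul_comm, eq_neg_of_add_eq_zero_right h]
      exact neg_mem (sum_mem fun j _ => Ideal.mul_mem_left _ _ (Ideal.subset_span ⟨j, rfl⟩))
    obtain ⟨b, hb⟩ := Ideal.mem_span_range_iff_exists_fun.mp ha_last
    refine Fin.lastCases (hy_le ha_last) (fun j => ?_) i
    have h_sum : ∑ j, (a j.castSucc + b j * x (Fin.last n)) * y j = 0 := by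
      rw [← h, ← hb, Finset.sum_mul, ← Finset.sum_add_distrib]
      exact Finset.sum_congr rfl fun j _ => by ring
    have h_mem := sub_mem (hy_le (ih h_init h_sum j))
      (Ideal.mul_mem_left _ (b j) (Ideal.subset_span (Set.mem_range_self (Fin.last n))))
    rwa [add_sub_cancel_right] at h_mem

lemma mem_span_range_of_sum_mul_mem_mul {x a : Fin n → R}
    (hx : IsWeaklyRegular R (List.ofFn x))
    (h : ∑ i, a i * x i ∈ Ideal.span (Set.range x) * Ideal.span (Set.range x)) (i : Fin n) :
    a i ∈ Ideal.span (Set.range x) := by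
  obtain ⟨b, hb, h_sum⟩ := (Submodule.mem_ideal_smul_span_iff_exists_sum _ _ _).mp h
  rw [Finsupp.sum_fintype b (fun i r => r • x i) fun _ => zero_smul R _] at h_sum
  have h_diff := mem_span_range_of_sum_mul_eq_zero hx (a := a - ⇑b) (by
    simp only [Pi.sub_apply, sub_mul, Finset.sum_sub_distrib, ← h_sum, smul_eq_mul, sub_self]) i
  rw [← sub_add_cancel (a i) (b i)]
  exact add_mem h_diff (hb i)

/-- The map `(mᵢ) ↦ ∑ mᵢ ⊗ xᵢ`. -/
def sumTmul (M : Type*) [AddCommGroup M] [Module R M] {N : Type*} [AddCommGroup N] [Module R N]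
    (x : Fin n → N) : (Fin n → M) →ₗ[R] M ⊗[R] N :=
  LinearMap.lsum R (fun _ => M) R fun i => (TensorProduct.mk R M N).flip (x i)

lemma sumTmul_apply {M N : Type*} [AddCommGroup M] [Module R M] [AddCommGroup N] [Module R N]
    (x : Fin n → N) (m : Fin n → M) : sumTmul M x m = ∑ i, m i ⊗ₜ[R] x i := by
  simp [sumTmul]

lemma range_sumTmul {M N : Type*} [AddCommGroup M] [Module R M] [AddCommGroup N] [Module R N]
    (x : Fin n → N) : LinearMap.range (sumTmul M x) =
      LinearMap.range (LinearMap.lTensor M (Submodule.span R (Set.range x)).subtype) := by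
  refine le_antisymm ?_ ?_
  · rintro _ ⟨m, rfl⟩
    rw [sumTmul_apply]
    exact sum_mem fun i _ => ⟨m i ⊗ₜ ⟨x i, Submodule.subset_span ⟨i, rfl⟩⟩, rfl⟩
  · rintro _ ⟨t, rfl⟩
    induction t using TensorProduct.induction_on with
    | zero => exact zero_mem _
    | add s t hs ht => rw [map_add]; exact add_mem hs ht
    | tmul m y =>
      obtain ⟨a, ha⟩ := (Submodule.mem_span_range_iff_exists_fun R).mp y.2
      refine ⟨fun i => a i • m, ?_⟩
      rw [sumTmul_apply, LinearMap.lTensor_tmul, Submodule.subtype_apply, ← ha,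
        TensorProduct.tmul_sum]
      simp only [TensorProduct.smul_tmul]

/-- The image of `c ⊗ c` in `I ⊗ J`. -/
def tensorSquareImage (c I J : Ideal R) : Submodule R (I ⊗[R] J) :=
  Submodule.map₂ (TensorProduct.mk R I J) (c.submoduleOf I) (c.submoduleOf J)

lemma length_quotient_tensorSquareImage_comm (c I J : Ideal R) :
    Module.length R ((I ⊗[R] J) ⧸ tensorSquareImage c I J) =
      Module.length R ((J ⊗[R] I) ⧸ tensorSquareImage c J I) := by
  refine (Submodule.Quotient.equiv _ _ (TensorProduct.comm R I J) ?_).length_eq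
  rw [tensorSquareImage, tensorSquareImage, Submodule.map_map₂, ← Submodule.map₂_flip]
  rfl

lemma ker_mkQ_submoduleMap (c I : Ideal R) :
    LinearMap.ker (c.mkQ.submoduleMap I) = c.submoduleOf I := by
  ext i
  exact Subtype.ext_iff.trans (Submodule.Quotient.mk_eq_zero c)

variable {I J : Ideal R} {x : Fin n → R}

lemma sumTmul_mem_tensorSquareImage_iff (hx : IsWeaklyRegular R (List.ofFn x))
    (hxJ : ∀ i, x i ∈ J) (a : Fin n → I) :
    sumTmul I (fun i => (⟨x i, hxJ i⟩ : J)) a ∈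
        tensorSquareImage (Ideal.span (Set.range x)) I J ↔
      ∀ i, (a i : R) ∈ Ideal.span (Set.range x) := by
  set c := Ideal.span (Set.range x)
  rw [sumTmul_apply]
  constructor
  · intro h
    let mul : I ⊗[R] J →ₗ[R] R :=
      TensorProduct.lift ((LinearMap.mul R R).compl₁₂ I.subtype J.subtype)
    have h_le : tensorSquareImage c I J ≤ Submodule.comap mul (c * c) :=
      Submodule.map₂_le.mpr fun a ha b hb => Ideal.mul_mem_mul ha hb
    have h_mul := h_le h
    rw [Submodule.mem_comap, map_sum] at h_mul
    exact mem_span_range_of_sum_mul_mem_mul hx h_mul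
  · exact fun ha => sum_mem fun i _ =>
      Submodule.apply_mem_map₂ _ (ha i) (Ideal.subset_span (Set.mem_range_self i))

lemma ker_lTensor_mkQ_submoduleMap (hxJ : ∀ i, x i ∈ J) :
    LinearMap.ker (LinearMap.lTensor I ((Ideal.span (Set.range x)).mkQ.submoduleMap J)) =
      LinearMap.range (sumTmul I fun i => (⟨x i, hxJ i⟩ : J)) := by
  set q := (Ideal.span (Set.range x)).mkQ.submoduleMap J
  have h_ker : LinearMap.ker q = Submodule.span R (Set.range fun i => (⟨x i, hxJ i⟩ : J)) := by
    refine Submodule.map_injective_of_injective J.injective_subtype ?_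
    rw [ker_mkQ_submoduleMap, Submodule.submoduleOf, Submodule.map_comap_subtype,
      Submodule.map_span, ← Set.range_comp]
    exact inf_eq_right.mpr (Ideal.span_le.mpr (Set.range_subset_iff.mpr hxJ))
  rw [range_sumTmul, ← h_ker]
  exact LinearMap.exact_iff.mp (lTensor_exact I (LinearMap.exact_subtype_ker_map q)
    (LinearMap.submoduleMap_surjective _ _))

-- `I ⊗ J / c ⊗ c` is an extension of `I ⊗ (J/c)` by `(I/c) ⊗ (c/c²)`, and `c/c²` is free.
theorem length_quotient_tensorSquareImage (hx : IsWeaklyRegular R (List.ofFn x))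
    (hxJ : ∀ i, x i ∈ J) :
    Module.length R ((I ⊗[R] J) ⧸ tensorSquareImage (Ideal.span (Set.range x)) I J) =
      n * Module.length R (Submodule.map (Ideal.span (Set.range x)).mkQ I) +
        Module.length R (I ⊗[R] Submodule.map (Ideal.span (Set.range x)).mkQ J) := by
  set c := Ideal.span (Set.range x)
  set W := tensorSquareImage c I J
  let f := W.mkQ ∘ₗ sumTmul I fun i => (⟨x i, hxJ i⟩ : J)
  let q : (Fin n → I) →ₗ[R] (Fin n → Submodule.map c.mkQ I) := (c.mkQ.submoduleMap I).compLeft _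
  let B := LinearMap.lTensor I (c.mkQ.submoduleMap J)
  have hq : Function.Surjective q := (c.mkQ.submoduleMap_surjective I).comp_left
  have hB : Function.Surjective B :=
    LinearMap.lTensor_surjective I (c.mkQ.submoduleMap_surjective J)
  have hWB : W ≤ LinearMap.ker B := Submodule.map₂_le.mpr fun a _ b hb => by
    rw [← ker_mkQ_submoduleMap] at hb
    exact (congrArg (a ⊗ₜ[R] ·) hb).trans (TensorProduct.tmul_zero _ _)
  have h_ker : LinearMap.ker f = LinearMap.ker q := by
    ext a
    refine ((Submodule.Quotient.mk_eq_zero W).trans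
      (sumTmul_mem_tensorSquareImage_iff hx hxJ a)).trans ?_
    exact (forall_congr' fun i => (SetLike.ext_iff.mp (ker_mkQ_submoduleMap c I) (a i)).symm).trans
      funext_iff.symm
  have h_sub : Module.length R (Submodule.map W.mkQ (LinearMap.ker B)) =
      n * Module.length R (Submodule.map c.mkQ I) := by
    rw [ker_lTensor_mkQ_submoduleMap hxJ, ← LinearMap.range_comp,
      ← f.quotKerEquivRange.length_eq, h_ker, (q.quotKerEquivOfSurjective hq).length_eq,
      Module.length_pi_of_fintype]
    simp
  rw [length_eq_length_add_length_quotient (Submodule.map W.mkQ (LinearMap.ker B)), h_sub,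
    (Submodule.quotientQuotientEquivQuotient W _ hWB).length_eq,
    (B.quotKerEquivOfSurjective hB).length_eq]

end TensorLength

section LinkageInvariant

variable {R : Type*} [CommRing R] {I J : Ideal R} {x y z : R}

lemma ofList_triple (x y z : R) : Ideal.ofList [x, y, z] = Ideal.span {x, y, z} := by
  rw [Ideal.ofList_cons, Ideal.ofList_cons, Ideal.ofList_singleton, ← Ideal.span_insert,
    ← Ideal.span_insert]

lemma span_triple_le : Ideal.span {x, y, z} ≤ I ↔ x ∈ I ∧ y ∈ I ∧ z ∈ I := by
  simp [Ideal.span_le, Set.insert_subset_iff]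

/-- The equality `ℓ(I ⊗ ω) = 3 ℓ(R/I)`, where `ω = ((x, y, z) : I)/(x, y, z)` is the canonical
module of `R/I` when `R` is Gorenstein and `x, y, z` is a regular sequence in `I`. Complete
intersections satisfy it, and it is preserved by linkage. -/
def HasCompleteIntersectionLength (I : Ideal R) : Prop :=
  ∀ x y z : R, x ∈ I → y ∈ I → z ∈ I → IsRegular R [x, y, z] →
    Module.length R (I ⊗[R] Submodule.torsionBySet R (R ⧸ Ideal.span {x, y, z}) I) =
      3 * Module.length R (R ⧸ I)

lemma hasCompleteIntersectionLength_top : HasCompleteIntersectionLength (⊤ : Ideal R) := by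
  intro x y z _ _ _ _
  have h_sub : Subsingleton (Submodule.torsionBySet R (R ⧸ Ideal.span {x, y, z})
      ((⊤ : Ideal R) : Set R)) := by
    refine (Submodule.subsingleton_iff_eq_bot).mpr (eq_bot_iff.mpr fun m hm => ?_)
    simpa using mem_torsionBySet_ideal.mp hm 1 trivial
  rw [Module.length_eq_zero, Module.length_eq_zero, mul_zero]

lemma hasCompleteIntersectionLength_of_isRegular (hx : x ∈ I) (hy : y ∈ I) (hz : z ∈ I)
    (h_reg : IsRegular R [x, y, z])
    (h : Module.length R (I ⊗[R] Submodule.torsionBySet R (R ⧸ Ideal.span {x, y, z}) I) =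
      3 * Module.length R (R ⧸ I)) : HasCompleteIntersectionLength I := by
  intro x' y' z' hx' hy' hz' h_reg'
  obtain ⟨e⟩ := nonempty_torsionBySet_linearEquiv (I := I) (xs := [x, y, z]) (ys := [x', y', z'])
    (by simp [hx, hy, hz]) (by simp [hx', hy', hz']) rfl h_reg.toIsWeaklyRegular
    h_reg'.toIsWeaklyRegular
  rw [ofList_triple, ofList_triple] at e
  rw [← h]
  exact (e.lTensor I).length_eq.symm

lemma length_quotient_tensorSquareImage_triple (h_reg : IsRegular R [x, y, z])
    (hJ : Ideal.span {x, y, z} ≤ J) :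
    Module.length R ((I ⊗[R] J) ⧸ tensorSquareImage (Ideal.span {x, y, z}) I J) =
      3 * Module.length R (Submodule.map (Ideal.span {x, y, z}).mkQ I) +
        Module.length R (I ⊗[R] Submodule.map (Ideal.span {x, y, z}).mkQ J) := by
  have h_range : Set.range ![x, y, z] = {x, y, z} := by
    simp only [Matrix.range_cons, Matrix.range_empty, Set.union_empty, Set.singleton_union]
  have h := length_quotient_tensorSquareImage (I := I) (J := J) (x := ![x, y, z])
    (by simpa using h_reg.toIsWeaklyRegular)
    (fun i => hJ (Ideal.subset_span (h_range ▸ Set.mem_range_self i)))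
  rwa [h_range] at h

-- Both lengths are read off the symmetric module `I ⊗ J / c ⊗ c`.
lemma length_tensor_map_mkQ_of_swap (h_reg : IsRegular R [x, y, z])
    (hI : Ideal.span {x, y, z} ≤ I) (hJ : Ideal.span {x, y, z} ≤ J)
    (h_fin : Module.length R (R ⧸ Ideal.span {x, y, z}) ≠ ⊤)
    (h : Module.length R (J ⊗[R] Submodule.map (Ideal.span {x, y, z}).mkQ I) =
      3 * Module.length R (R ⧸ J)) :
    Module.length R (I ⊗[R] Submodule.map (Ideal.span {x, y, z}).mkQ J) =
      3 * Module.length R (R ⧸ I) := by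
  have h_sum {K : Ideal R} (hK : Ideal.span {x, y, z} ≤ K) :
      Module.length R (R ⧸ Ideal.span {x, y, z}) =
        Module.length R (Submodule.map (Ideal.span {x, y, z}).mkQ K) +
          Module.length R (R ⧸ K) := by
    rw [length_eq_length_add_length_quotient (Submodule.map (Ideal.span {x, y, z}).mkQ K),
      (Submodule.quotientQuotientEquivQuotient _ _ hK).length_eq]
  have h_fin_I : 3 * Module.length R (Submodule.map (Ideal.span {x, y, z}).mkQ I) ≠ ⊤ := by
    refine WithTop.mul_ne_top (by decide) (ne_top_of_le_ne_top h_fin ?_)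
    rw [h_sum hI]
    exact le_self_add (α := ℕ∞)
  refine ENat.add_right_injective_of_ne_top h_fin_I ?_
  dsimp only
  rw [← length_quotient_tensorSquareImage_triple h_reg hJ,
    length_quotient_tensorSquareImage_comm, length_quotient_tensorSquareImage_triple h_reg hI, h,
    ← mul_add, ← mul_add, ← h_sum hI, ← h_sum hJ]

variable [IsLocalRing R]

/-- `R` has the property of a Gorenstein local ring of dimension 3 on which linkage relies: each
regular sequence of length 3 cuts out an Artinian Gorenstein quotient. -/
def TriplesAreGorenstein (R : Type*) [CommRing R] [IsLocalRing R] : Prop :=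
  ∀ x y z : R, IsRegular R [x, y, z] → IsArtinianGorensteinQuotient (Ideal.span {x, y, z})

lemma HasCompleteIntersectionLength.of_directlyLinked (hR : TriplesAreGorenstein R)
    (h_link : DirectlyLinked I J) (hJ : HasCompleteIntersectionLength J) :
    HasCompleteIntersectionLength I := by
  obtain ⟨x, y, z, hx, hy, hz, h_reg, rfl⟩ := h_link
  refine hasCompleteIntersectionLength_of_isRegular hx hy hz h_reg ?_
  have h_gor := hR x y z h_reg
  have hcI : Ideal.span {x, y, z} ≤ I := span_triple_le.mpr ⟨hx, hy, hz⟩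
  have hcJ := le_colon (Ideal.span {x, y, z}) (I : Set R)
  obtain ⟨hxJ, hyJ, hzJ⟩ := span_triple_le.mp hcJ
  have hJ_length := hJ x y z hxJ hyJ hzJ h_reg
  rw [torsionBySet_quotient_eq_map_colon] at hJ_length ⊢
  rw [h_gor.colon_colon hcI] at hJ_length
  exact length_tensor_map_mkQ_of_swap h_reg hcI hcJ h_gor.1 hJ_length

theorem Licci.hasCompleteIntersectionLength (hR : TriplesAreGorenstein R) (hI : Licci I) :
    HasCompleteIntersectionLength I := by
  obtain ⟨C, h_linked, x, y, z, h_reg, rfl⟩ := hI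
  induction h_linked using Relation.ReflTransGen.head_induction_on with
  | refl =>
    obtain ⟨hx, hy, hz⟩ := span_triple_le.mp (le_refl (Ideal.span {x, y, z}))
    exact hasCompleteIntersectionLength_top.of_directlyLinked hR
      ⟨x, y, z, hx, hy, hz, h_reg, (Submodule.colon_eq_top_iff_subset _).mpr subset_rfl |>.symm⟩
  | head h_direct _ ih => exact ih.of_directlyLinked hR h_direct

end LinkageInvariant

/-! ### Józefiak's resolution of the minors of a symmetric matrix -/

section AcyclicityCriterion

variable {R F₁ F₂ F₃ : Type*} [CommRing R] [AddCommGroup F₁] [Module R F₁] [AddCommGroup F₂]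
  [Module R F₂] [AddCommGroup F₃] [Module R F₃] {x y z : R}

lemma isWeaklyRegular_of_flat (M : Type*) [AddCommGroup M] [Module R M] [Module.Flat R M]
    {l : List R} (h : IsWeaklyRegular R l) : IsWeaklyRegular M l :=
  ((TensorProduct.lid R M).isWeaklyRegular_congr l).mp h.isWeaklyRegular_rTensor

lemma exists_eq_smul_of_smul_eq_smul (h : IsWeaklyRegular F₃ [x, y]) {p q : F₃}
    (hpq : y • p = x • q) : ∃ t, p = x • t := by
  simp only [isWeaklyRegular_cons_iff] at h
  have h_zero : y • (Submodule.Quotient.mk p : QuotSMulTop x F₃) = 0 := by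
    rw [← Submodule.Quotient.mk_smul, Submodule.Quotient.mk_eq_zero, hpq]
    exact Submodule.smul_mem_pointwise_smul q x ⊤ trivial
  have hp := (Submodule.Quotient.mk_eq_zero _).mp (h.2.1.right_eq_zero_of_smul h_zero)
  obtain ⟨t, -, ht⟩ := hp
  exact ⟨t, ht.symm⟩

lemma exists_eq_smul_add_smul_of_smul_eq (h : IsWeaklyRegular F₃ [x, y, z]) {p q r : F₃}
    (hpq : z • p = x • q + y • r) : ∃ s t, p = x • s + y • t := by
  rw [isWeaklyRegular_cons_iff] at h
  have h_quot : z • (Submodule.Quotient.mk p : QuotSMulTop x F₃) =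
      y • Submodule.Quotient.mk r := by
    rw [← Submodule.Quotient.mk_smul, ← Submodule.Quotient.mk_smul, hpq, Submodule.Quotient.mk_add,
      add_eq_right, Submodule.Quotient.mk_eq_zero]
    exact Submodule.smul_mem_pointwise_smul q x ⊤ trivial
  obtain ⟨t, ht⟩ := exists_eq_smul_of_smul_eq_smul h.2 h_quot
  obtain ⟨t, rfl⟩ := Submodule.Quotient.mk_surjective _ t
  rw [← Submodule.Quotient.mk_smul, Submodule.Quotient.eq] at ht
  obtain ⟨s, -, hs⟩ := ht
  exact ⟨s, t, sub_eq_iff_eq_add.mp hs.symm⟩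

lemma mem_range_of_smul_mem_range₂ {d₃ : F₃ →ₗ[R] F₂} (h₃ : Function.Injective d₃)
    (hF₃ : IsWeaklyRegular F₃ [x, y]) (hF₂ : IsSMulRegular F₂ x) {s : F₂}
    (hx : x • s ∈ LinearMap.range d₃) (hy : y • s ∈ LinearMap.range d₃) :
    s ∈ LinearMap.range d₃ := by
  obtain ⟨p, hp⟩ := hx
  obtain ⟨q, hq⟩ := hy
  obtain ⟨t, rfl⟩ := exists_eq_smul_of_smul_eq_smul hF₃ (p := p) (q := q)
    (h₃ (by rw [map_smul, map_smul, hp, hq, smul_comm]))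
  exact ⟨t, hF₂ ((map_smul d₃ x t).symm.trans hp)⟩

lemma mem_range_of_smul_mem_range₃ {d₃ : F₃ →ₗ[R] F₂} {d₂ : F₂ →ₗ[R] F₁}
    (h₃ : Function.Injective d₃) (h₂ : LinearMap.range d₃ = LinearMap.ker d₂)
    (hF₃ : IsWeaklyRegular F₃ [x, y, z]) (hF₂ : IsWeaklyRegular F₂ [x, y])
    (hF₁ : IsSMulRegular F₁ x) {s : F₁} (hx : x • s ∈ LinearMap.range d₂)
    (hy : y • s ∈ LinearMap.range d₂) (hz : z • s ∈ LinearMap.range d₂) :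
    s ∈ LinearMap.range d₂ := by
  have lift {a b : R} {p q : F₂} (hp : d₂ p = a • s) (hq : d₂ q = b • s) :
      ∃ g, d₃ g = b • p - a • q := by
    refine LinearMap.mem_range.mp (h₂ ▸ LinearMap.mem_ker.mpr ?_)
    rw [map_sub, map_smul, map_smul, hp, hq, smul_comm, sub_self]
  obtain ⟨p, hp⟩ := hx
  obtain ⟨q, hq⟩ := hy
  obtain ⟨r, hr⟩ := hz
  obtain ⟨g, hg⟩ := lift hp hq
  obtain ⟨g', hg'⟩ := lift hp hr
  obtain ⟨g'', hg''⟩ := lift hq hr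
  obtain ⟨u, v, rfl⟩ := exists_eq_smul_add_smul_of_smul_eq hF₃ (p := g) (q := -g'') (r := g')
    (h₃ (by
      rw [map_add, map_smul, map_smul, map_smul, map_neg, hg, hg', hg'']
      module))
  have h_key : y • (p - d₃ v) = x • (q + d₃ u) := by
    rw [map_add, map_smul, map_smul, eq_sub_iff_add_eq] at hg
    rw [smul_sub, smul_add, ← hg]
    module
  obtain ⟨t, ht⟩ := exists_eq_smul_of_smul_eq_smul hF₂ h_key
  have h_comp : d₂ (d₃ v) = 0 := LinearMap.mem_ker.mp (h₂ ▸ LinearMap.mem_range_self d₃ v)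
  refine ⟨t, hF₁ ?_⟩
  dsimp only
  rw [← map_smul, ← ht, map_sub, h_comp, sub_zero, hp]

end AcyclicityCriterion

section Jozefiak

variable {R : Type*} [CommRing R] (Φ : Matrix (Fin 3) (Fin 3) R)

/-- The entries of the adjugate on and above the diagonal, i.e. the `2 × 2` minors of a symmetric
`Φ` up to sign, as the differential `F₁ → F₀` of Józefiak's complex. The complex is
`0 → F₃ → F₂ → F₁ → F₀` with `F₃` the alternating matrices `A`, `F₂` the traceless matrices `N`,
`F₁` all matrices `M` modulo the alternating ones and `F₀ = R`; its differentials are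
`A ↦ A Φ`, `N ↦ Φ N` and `M ↦ tr (adj Φ * M)`. The coordinates are
`A₁₀, A₂₀, A₂₁` on `F₃`, next `N₁₀, N₂₀, N₀₁, N₂₁, N₀₂, N₁₂, N₀₀, -N₂₂` on `F₂`, and
`M₀₀, M₀₁ + M₁₀, M₀₂ + M₂₀, M₁₁, M₁₂ + M₂₁, M₂₂` on `F₁`. -/
def symMinors : Fin 6 → R :=
  ![Φ 1 1 * Φ 2 2 - Φ 1 2 * Φ 1 2, Φ 0 2 * Φ 1 2 - Φ 0 1 * Φ 2 2,
    Φ 0 1 * Φ 1 2 - Φ 0 2 * Φ 1 1, Φ 0 0 * Φ 2 2 - Φ 0 2 * Φ 0 2,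
    Φ 0 1 * Φ 0 2 - Φ 0 0 * Φ 1 2, Φ 0 0 * Φ 1 1 - Φ 0 1 * Φ 0 1]

/-- The differential `F₂ → F₁` of Józefiak's complex, in the coordinates of `symMinors`. -/
def jozefiak₂ : Matrix (Fin 6) (Fin 8) R :=
  !![Φ 0 1, Φ 0 2, 0, 0, 0, 0, Φ 0 0, 0;
    Φ 1 1, Φ 1 2, Φ 0 0, Φ 0 2, 0, 0, 0, Φ 0 1;
    Φ 1 2, Φ 2 2, 0, 0, Φ 0 0, Φ 0 1, Φ 0 2, -Φ 0 2;
    0, 0, Φ 0 1, Φ 1 2, 0, 0, -Φ 1 1, Φ 1 1;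
    0, 0, Φ 0 2, Φ 2 2, Φ 0 1, Φ 1 1, -Φ 1 2, 0;
    0, 0, 0, 0, Φ 0 2, Φ 1 2, 0, -Φ 2 2]

/-- The differential `F₃ → F₂` of Józefiak's complex, in the coordinates of `symMinors`. -/
def jozefiak₃ : Matrix (Fin 8) (Fin 3) R :=
  !![Φ 0 0, 0, -Φ 0 2;
    0, Φ 0 0, Φ 0 1;
    -Φ 1 1, -Φ 1 2, 0;
    0, Φ 0 1, Φ 1 1;
    -Φ 1 2, -Φ 2 2, 0;
    Φ 0 2, 0, -Φ 2 2;
    -Φ 0 1, -Φ 0 2, 0;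
    0, -Φ 0 2, -Φ 1 2]

/-- The product `F₁ × F₁ → F₂` of a multiplicative structure on Józefiak's complex; multiplication
by an element of `F₁` is a homotopy contracting its image in `R`. -/
def jozefiakMul₁₁ (s t : Fin 6 → R) : Fin 8 → R :=
  let p i j := s i * t j - s j * t i
  ![Φ 2 2 * p 0 1 - Φ 1 2 * p 0 2 - Φ 0 2 * p 0 4 + Φ 0 1 * p 0 5 + Φ 0 2 * p 1 2,
    -Φ 1 2 * p 0 1 + Φ 1 1 * p 0 2 + Φ 0 2 * p 0 3 - Φ 0 1 * p 1 2 - Φ 0 0 * p 2 3,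
    -Φ 2 2 * p 1 3 + Φ 1 2 * p 1 4 - Φ 1 1 * p 1 5 + Φ 1 2 * p 2 3 - Φ 0 2 * p 3 4 +
      Φ 0 1 * p 3 5,
    -Φ 1 2 * p 0 3 + Φ 1 1 * p 0 4 + Φ 0 2 * p 1 3 - Φ 0 1 * p 1 4 + Φ 0 0 * p 3 4,
    Φ 1 2 * p 2 4 - Φ 1 1 * p 2 5 - Φ 0 2 * p 3 5 + Φ 0 1 * p 4 5,
    -Φ 1 2 * p 0 5 + Φ 0 2 * p 1 5 - Φ 0 2 * p 2 4 + Φ 0 1 * p 2 5 - Φ 0 0 * p 4 5,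
    -Φ 2 2 * p 0 3 + Φ 1 2 * p 0 4 - Φ 1 1 * p 0 5 + Φ 0 2 * p 2 3,
    -Φ 1 1 * p 0 5 + Φ 0 1 * p 1 5 - Φ 0 0 * p 3 5]

/-- The product `F₁ × F₂ → F₃` of the multiplicative structure on Józefiak's complex. -/
def jozefiakMul₁₂ (s : Fin 6 → R) (u : Fin 8 → R) : Fin 3 → R :=
  ![s 0 * (-Φ 2 2 * u 2 + Φ 1 2 * u 4) + s 1 * (Φ 2 2 * u 6 - Φ 0 2 * u 4) +
      s 2 * (Φ 0 2 * u 2 - Φ 1 2 * u 6) + s 3 * (Φ 2 2 * u 0 - Φ 0 2 * u 5) +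
      s 4 * (-Φ 1 2 * u 0 - Φ 0 2 * u 6 + Φ 0 2 * u 7) +
      s 5 * (Φ 1 1 * u 0 + Φ 0 2 * u 3 + Φ 0 1 * u 6),
    s 0 * (Φ 1 2 * u 2 - Φ 1 1 * u 4) + s 1 * (Φ 0 1 * u 4 - Φ 1 2 * u 6) +
      s 2 * (Φ 1 2 * u 3 + Φ 1 1 * u 7) + s 3 * (-Φ 1 2 * u 0 - Φ 0 0 * u 4 + Φ 0 2 * u 7) +
      s 4 * (-Φ 1 2 * u 1 - Φ 0 1 * u 7) + s 5 * (Φ 1 1 * u 1 - Φ 0 1 * u 3),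
    s 0 * (-Φ 0 2 * u 2 - Φ 1 1 * u 5 + Φ 1 2 * u 7) +
      s 1 * (Φ 0 1 * u 5 + Φ 0 2 * u 6 - Φ 0 2 * u 7) + s 2 * (-Φ 0 2 * u 3 - Φ 0 1 * u 7) +
      s 3 * (Φ 0 2 * u 0 - Φ 0 0 * u 5) + s 4 * (Φ 0 2 * u 1 + Φ 0 0 * u 7) +
      s 5 * (-Φ 0 1 * u 1 + Φ 0 0 * u 3)]

lemma symMinors_vecMul_jozefiak₂ : Matrix.vecMul (symMinors Φ) (jozefiak₂ Φ) = 0 := by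
  ext i
  fin_cases i <;>
    simp [symMinors, jozefiak₂, Matrix.vecMul, dotProduct, Fin.sum_univ_succ] <;> ring

lemma jozefiak₂_mul_jozefiak₃ : jozefiak₂ Φ * jozefiak₃ Φ = 0 := by
  ext i j
  fin_cases i <;> fin_cases j <;>
    simp [jozefiak₂, jozefiak₃, Matrix.mul_apply, Fin.sum_univ_succ] <;> ring

lemma jozefiak₂_mulVec_mul₁₁ (s t : Fin 6 → R) :
    (jozefiak₂ Φ).mulVec (jozefiakMul₁₁ Φ s t) =
      (symMinors Φ ⬝ᵥ s) • t - (symMinors Φ ⬝ᵥ t) • s := by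
  ext i
  fin_cases i <;>
    simp [symMinors, jozefiak₂, jozefiakMul₁₁, Matrix.mulVec, dotProduct,
      Fin.sum_univ_succ] <;> ring

lemma jozefiak₃_mulVec_mul₁₂ (s : Fin 6 → R) (u : Fin 8 → R) :
    (jozefiak₃ Φ).mulVec (jozefiakMul₁₂ Φ s u) =
      (symMinors Φ ⬝ᵥ s) • u - jozefiakMul₁₁ Φ s ((jozefiak₂ Φ).mulVec u) := by
  ext i
  fin_cases i <;>
    simp [symMinors, jozefiak₂, jozefiak₃, jozefiakMul₁₁, jozefiakMul₁₂, Matrix.mulVec, dotProduct,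
      Fin.sum_univ_succ] <;> ring

lemma jozefiakMul₁₂_mulVec_jozefiak₃ (s : Fin 6 → R) (v : Fin 3 → R) :
    jozefiakMul₁₂ Φ s ((jozefiak₃ Φ).mulVec v) = (symMinors Φ ⬝ᵥ s) • v := by
  ext i
  fin_cases i <;>
    simp [symMinors, jozefiak₃, jozefiakMul₁₂, Matrix.mulVec, dotProduct,
      Fin.sum_univ_succ] <;> ring

end Jozefiak

section JozefiakExact

variable {R : Type*} [CommRing R] {Φ : Matrix (Fin 3) (Fin 3) R} {x y z : R}

lemma mem_span_range_iff_exists_dotProduct {ι : Type*} [Fintype ι] {w : ι → R} :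
    x ∈ Ideal.span (Set.range w) ↔ ∃ s, w ⬝ᵥ s = x := by
  simp only [Ideal.mem_span_range_iff_exists_fun, dotProduct, mul_comm (w _)]

lemma smul_mem_range_jozefiak₂ (hx : x ∈ Ideal.span (Set.range (symMinors Φ))) {t : Fin 6 → R}
    (ht : symMinors Φ ⬝ᵥ t = 0) : x • t ∈ LinearMap.range (jozefiak₂ Φ).mulVecLin := by
  obtain ⟨s, rfl⟩ := mem_span_range_iff_exists_dotProduct.mp hx
  exact ⟨jozefiakMul₁₁ Φ s t, by simp [jozefiak₂_mulVec_mul₁₁, ht]⟩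

lemma smul_mem_range_jozefiak₃ (hx : x ∈ Ideal.span (Set.range (symMinors Φ))) {u : Fin 8 → R}
    (hu : (jozefiak₂ Φ).mulVec u = 0) : x • u ∈ LinearMap.range (jozefiak₃ Φ).mulVecLin := by
  obtain ⟨s, rfl⟩ := mem_span_range_iff_exists_dotProduct.mp hx
  have h_zero : jozefiakMul₁₁ Φ s 0 = 0 := by
    ext i
    fin_cases i <;> simp [jozefiakMul₁₁]
  exact ⟨jozefiakMul₁₂ Φ s u, by simp [jozefiak₃_mulVec_mul₁₂, hu, h_zero]⟩

lemma smul_eq_zero_of_jozefiak₃_mulVec_eq_zero (hx : x ∈ Ideal.span (Set.range (symMinors Φ)))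
    {v : Fin 3 → R} (hv : (jozefiak₃ Φ).mulVec v = 0) : x • v = 0 := by
  obtain ⟨s, rfl⟩ := mem_span_range_iff_exists_dotProduct.mp hx
  rw [← jozefiakMul₁₂_mulVec_jozefiak₃, hv]
  ext i
  fin_cases i <;> simp [jozefiakMul₁₂]

theorem jozefiak_exact (hx : x ∈ Ideal.span (Set.range (symMinors Φ)))
    (hy : y ∈ Ideal.span (Set.range (symMinors Φ)))
    (hz : z ∈ Ideal.span (Set.range (symMinors Φ))) (h_reg : IsWeaklyRegular R [x, y, z]) :
    Function.Injective (jozefiak₃ Φ).mulVecLin ∧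
      LinearMap.range (jozefiak₃ Φ).mulVecLin = LinearMap.ker (jozefiak₂ Φ).mulVecLin ∧
      ∀ t, symMinors Φ ⬝ᵥ t = 0 → t ∈ LinearMap.range (jozefiak₂ Φ).mulVecLin := by
  have h_reg₁ : IsWeaklyRegular R [x] := ((isWeaklyRegular_append_iff R [x] [y, z]).mp h_reg).1
  have h_reg₂ : IsWeaklyRegular R [x, y] := ((isWeaklyRegular_append_iff R [x, y] [z]).mp h_reg).1
  have h_smul (n : ℕ) : IsSMulRegular (Fin n → R) x :=
    (isWeaklyRegular_singleton_iff _ x).mp (isWeaklyRegular_of_flat (Fin n → R) h_reg₁)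
  have h_inj : Function.Injective (jozefiak₃ Φ).mulVecLin :=
    (injective_iff_map_eq_zero _).mpr fun v hv =>
      (h_smul 3).right_eq_zero_of_smul (smul_eq_zero_of_jozefiak₃_mulVec_eq_zero hx hv)
  have h_range : LinearMap.range (jozefiak₃ Φ).mulVecLin =
      LinearMap.ker (jozefiak₂ Φ).mulVecLin := by
    refine le_antisymm ?_ fun u hu => ?_
    · rw [LinearMap.range_le_ker_iff, ← Matrix.mulVecLin_mul, jozefiak₂_mul_jozefiak₃,
        Matrix.mulVecLin_zero]
    · exact mem_range_of_smul_mem_range₂ h_inj (isWeaklyRegular_of_flat _ h_reg₂) (h_smul 8)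
        (smul_mem_range_jozefiak₃ hx hu) (smul_mem_range_jozefiak₃ hy hu)
  refine ⟨h_inj, h_range, fun t ht => ?_⟩
  exact mem_range_of_smul_mem_range₃ h_inj h_range (isWeaklyRegular_of_flat _ h_reg)
    (isWeaklyRegular_of_flat _ h_reg₂) (h_smul 6) (smul_mem_range_jozefiak₂ hx ht)
    (smul_mem_range_jozefiak₂ hy ht) (smul_mem_range_jozefiak₂ hz ht)

end JozefiakExact

section MinorsFormat

variable {R : Type*} [CommRing R] {Φ : Matrix (Fin 3) (Fin 3) R}

lemma minors2_map {S : Type*} [CommRing S] (φ : R →+* S) {p q : ℕ}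
    (Ψ : Matrix (Fin p) (Fin q) R) : minors2 (Ψ.map φ) = (minors2 Ψ).map φ := by
  rw [minors2, minors2, Ideal.map_span]
  congr 1
  ext d
  constructor
  · rintro ⟨r, c, hr, hc, rfl⟩
    exact ⟨_, ⟨r, c, hr, hc, rfl⟩, by rw [φ.map_det, RingHom.mapMatrix_apply,
      Matrix.submatrix_map]⟩
  · rintro ⟨_, ⟨r, c, hr, hc, rfl⟩, rfl⟩
    exact ⟨r, c, hr, hc, by rw [φ.map_det, RingHom.mapMatrix_apply, Matrix.submatrix_map]⟩

lemma symMinors_map {S : Type*} [CommRing S] (φ : R →+* S) :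
    symMinors (Φ.map φ) = φ ∘ symMinors Φ := by
  ext i
  fin_cases i <;> simp [symMinors]

lemma jozefiak₂_map {S : Type*} [CommRing S] (φ : R →+* S) :
    jozefiak₂ (Φ.map φ) = (jozefiak₂ Φ).map φ := by
  ext i j
  fin_cases i <;> fin_cases j <;> simp [jozefiak₂]

lemma minors2_eq_bot_of_symMinors_eq_zero (hΦ : Φ.IsSymm) (h : symMinors Φ = 0) :
    minors2 Φ = ⊥ := by
  have h₁ := hΦ.apply 0 1
  have h₂ := hΦ.apply 0 2
  have h₃ := hΦ.apply 1 2
  have h_cofactor (p q : Fin 3) :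
      Φ (p + 1) (q + 1) * Φ (p + 2) (q + 2) - Φ (p + 1) (q + 2) * Φ (p + 2) (q + 1) = 0 := by
    simp only [symMinors, Matrix.cons_eq_zero_iff] at h
    fin_cases p <;> fin_cases q <;> simp [h₁, h₂, h₃] <;> grind
  have h_cyclic (i j : Fin 3) (hij : i ≠ j) :
      ∃ p, (i = p + 1 ∧ j = p + 2) ∨ (i = p + 2 ∧ j = p + 1) := by
    revert i j
    decide
  refine Ideal.span_eq_bot.mpr ?_
  rintro _ ⟨r, c, hr, hc, rfl⟩
  rw [Matrix.det_fin_two]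
  simp only [Matrix.submatrix_apply]
  obtain ⟨p, ⟨h₀, h₁⟩ | ⟨h₀, h₁⟩⟩ := h_cyclic (r 0) (r 1) (hr.ne (by decide)) <;>
  obtain ⟨q, ⟨h₂, h₃⟩ | ⟨h₂, h₃⟩⟩ := h_cyclic (c 0) (c 1) (hc.ne (by decide)) <;>
  rw [h₀, h₁, h₂, h₃] <;> grind

theorem minors2_eq_span_symMinors (hΦ : Φ.IsSymm) :
    minors2 Φ = Ideal.span (Set.range (symMinors Φ)) := by
  refine le_antisymm ?_ (Ideal.span_le.mpr ?_)
  · set I := Ideal.span (Set.range (symMinors Φ))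
    have h_zero : symMinors (Φ.map (Ideal.Quotient.mk I)) = 0 := by
      rw [symMinors_map]
      ext i
      exact Ideal.Quotient.eq_zero_iff_mem.mpr (Ideal.subset_span (Set.mem_range_self i))
    have h_map := minors2_eq_bot_of_symMinors_eq_zero (hΦ.map _) h_zero
    rwa [minors2_map, Ideal.map_eq_bot_iff_le_ker, Ideal.mk_ker] at h_map
  · have h_mem (i j k l : Fin 3) (hij : i ≠ j) (hkl : k ≠ l) :
        Φ i k * Φ j l - Φ i l * Φ j k ∈ minors2 Φ := by
      refine Ideal.subset_span ⟨![i, j], ![k, l], ?_, ?_, ?_⟩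
      · simpa [Function.Injective, Fin.forall_fin_two, eq_comm] using hij
      · simpa [Function.Injective, Fin.forall_fin_two, eq_comm] using hkl
      · rw [Matrix.det_fin_two]
        rfl
    have h₁ := hΦ.apply 0 1
    have h₂ := hΦ.apply 0 2
    have h₃ := hΦ.apply 1 2
    rintro _ ⟨i, rfl⟩
    fin_cases i
    · simpa [symMinors, h₃] using h_mem 1 2 1 2 (by decide) (by decide)
    · simpa [symMinors, h₁, h₃, mul_comm] using h_mem 0 2 2 1 (by decide) (by decide)
    · simpa [symMinors, h₁, mul_comm] using h_mem 0 1 1 2 (by decide) (by decide)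
    · simpa [symMinors, h₂] using h_mem 0 2 0 2 (by decide) (by decide)
    · simpa [symMinors, h₁, h₂, mul_comm] using h_mem 1 0 0 2 (by decide) (by decide)
    · simpa [symMinors, h₁] using h_mem 0 1 0 1 (by decide) (by decide)

lemma range_mulVecLin_le {m n : ℕ} {A : Matrix (Fin m) (Fin n) R} {J : Ideal R}
    (hA : ∀ i j, A i j ∈ J) :
    LinearMap.range A.mulVecLin ≤ J • (⊤ : Submodule R (Fin m → R)) := by
  rw [Matrix.range_mulVecLin, Submodule.span_le]
  rintro _ ⟨j, rfl⟩
  rw [← Finset.univ_sum_single (A.col j)]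
  refine sum_mem fun i _ => ?_
  rw [← mul_one (A.col j i), ← smul_eq_mul, Pi.single_smul]
  exact Submodule.smul_mem_smul (hA i j) trivial

lemma jozefiak₂_apply_mem {J : Ideal R} (h : ∀ i j, Φ i j ∈ J) (i : Fin 6) (j : Fin 8) :
    jozefiak₂ Φ i j ∈ J := by
  revert i j
  simp [Fin.forall_fin_succ, jozefiak₂, h]

theorem isGrade3PerfectOfFormat_minors2 [IsLocalRing R] (hΦ : Φ.IsSymm)
    (h_max : ∀ i j, Φ i j ∈ maximalIdeal R)
    (h_reg : ∃ x y z : R, x ∈ minors2 Φ ∧ y ∈ minors2 Φ ∧ z ∈ minors2 Φ ∧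
      IsRegular R [x, y, z]) : IsGrade3PerfectOfFormat (minors2 Φ) 6 3 := by
  refine ⟨h_reg, by decide, by decide, ?_⟩
  rw [minors2_eq_span_symMinors hΦ] at h_reg ⊢
  obtain ⟨x, y, z, hx, hy, hz, h_reg⟩ := h_reg
  obtain ⟨h_inj, h_range₃, h_exact⟩ := jozefiak_exact hx hy hz h_reg.toIsWeaklyRegular
  have h_apply (s) : Fintype.linearCombination R (symMinors Φ) s = symMinors Φ ⬝ᵥ s := by
    simp only [Fintype.linearCombination_apply, dotProduct, smul_eq_mul, mul_comm]
  refine ⟨Fintype.linearCombination R (symMinors Φ), (jozefiak₂ Φ).mulVecLin,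
    (jozefiak₃ Φ).mulVecLin, Fintype.range_linearCombination .., ?_, h_range₃,
    LinearMap.ker_eq_bot.mpr h_inj, ?_, range_mulVecLin_le (jozefiak₂_apply_mem h_max),
    range_mulVecLin_le ?_⟩
  · refine le_antisymm ?_ fun s hs => h_exact s ((h_apply s).symm.trans hs)
    rintro _ ⟨t, rfl⟩
    rw [LinearMap.mem_ker, h_apply, Matrix.mulVecLin_apply, Matrix.dotProduct_mulVec,
      symMinors_vecMul_jozefiak₂, zero_dotProduct]
  · refine Ideal.span_le.mpr (Set.range_subset_iff.mpr fun i => ?_)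
    fin_cases i <;> exact sub_mem (Ideal.mul_mem_left _ _ (h_max _ _))
      (Ideal.mul_mem_left _ _ (h_max _ _))
  · simp [Fin.forall_fin_succ, jozefiak₃, h_max, -mem_maximalIdeal]

end MinorsFormat

/-! ### The square of the maximal ideal -/

section MaximalIdealSquare

variable {R : Type*} [CommRing R]

lemma exists_surjective_of_forall_dotProduct_eq_zero {ι : Type*} [Fintype ι] {w : ι → R}
    {J : Ideal R} (h : ∀ s, w ⬝ᵥ s = 0 → ∀ i, s i ∈ J) :
    ∃ F : Ideal.span (Set.range w) →ₗ[R] (ι → R ⧸ J), Function.Surjective F := by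
  let p : (ι → R) →ₗ[R] Ideal.span (Set.range w) :=
    (dotProductBilin R R w).codRestrict _ fun s =>
      mem_span_range_iff_exists_dotProduct.mpr ⟨s, rfl⟩
  have hp : Function.Surjective p := by
    rintro ⟨x, hx⟩
    obtain ⟨s, rfl⟩ := mem_span_range_iff_exists_dotProduct.mp hx
    exact ⟨s, rfl⟩
  let q : (ι → R) →ₗ[R] (ι → R ⧸ J) := LinearMap.piMap fun _ => J.mkQ
  have hq : Function.Surjective q := Function.Surjective.piMap fun _ => J.mkQ_surjective
  obtain ⟨F, hF⟩ := exists_comp_eq_of_surjective hp q fun s hs =>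
    funext fun i => (Submodule.Quotient.mk_eq_zero J).mpr (h s (congrArg Subtype.val hs) i)
  exact ⟨F, Function.Surjective.of_comp (g := p) (by rw [← LinearMap.coe_comp, hF]; exact hq)⟩

lemma finrank_span_mul_self_le (K : Type*) [Field K] [Algebra K R] {n : ℕ} (v : Fin n → R) :
    Module.Finite K ↥(Submodule.span K (Set.range v) * Submodule.span K (Set.range v)) ∧
    Module.finrank K ↥(Submodule.span K (Set.range v) * Submodule.span K (Set.range v)) ≤
      (n + 1).choose 2 := by
  have h_span : Submodule.span K (Set.range v) * Submodule.span K (Set.range v) =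
      Submodule.span K (Set.range fun s : Sym2 (Fin n) => (s.map v).mul) := by
    rw [Submodule.span_mul_span]
    congr 1
    ext x
    simp [Set.mem_mul, Sym2.exists]
  rw [h_span]
  refine ⟨FiniteDimensional.span_of_finite K (Set.finite_range _), ?_⟩
  have h_card := finrank_range_le_card (R := K) fun s : Sym2 (Fin n) => (s.map v).mul
  rwa [Sym2.card, Fintype.card_fin] at h_card

lemma length_quotient_smul_top_le_length_tensor {ι : Type*} [Fintype ι] {I J : Ideal R}
    {F : I →ₗ[R] (ι → R ⧸ J)} (hF : Function.Surjective F) (M : Type*) [AddCommGroup M]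
    [Module R M] :
    Fintype.card ι * Module.length R (M ⧸ (J • (⊤ : Submodule R M))) ≤
      Module.length R (I ⊗[R] M) := by
  classical
  have h := Module.length_le_of_surjective (F.lTensor M) (LinearMap.lTensor_surjective M hF)
  rw [(TensorProduct.piRight R R M fun _ : ι => R ⧸ J).length_eq, Module.length_pi_of_fintype,
    (TensorProduct.comm R M I).length_eq,
    (TensorProduct.tensorQuotEquivQuotSMul M J).length_eq] at h
  simpa using h

lemma length_quotient_add_one_le_of_lt {M : Type*} [AddCommGroup M] [Module R M]
    {N P : Submodule R M} (h : N < P) :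
    Module.length R (M ⧸ P) + 1 ≤ Module.length R (M ⧸ N) := by
  rw [length_eq_length_add_length_quotient (Submodule.map N.mkQ P),
    (Submodule.quotientQuotientEquivQuotient N P h.le).length_eq, add_comm]
  have : Nontrivial (Submodule.map N.mkQ P) := by
    rw [Submodule.nontrivial_iff_ne_bot, Ne, ← le_bot_iff, Submodule.map_le_iff_le_comap,
      ← LinearMap.ker, Submodule.ker_mkQ]
    exact h.not_ge
  exact add_le_add_left (Order.one_le_iff_pos.mpr Module.length_pos) _

lemma not_isPrincipal_of_surjective_pi {ι : Type*} [Nontrivial ι] {I p : Ideal R} [p.IsPrime]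
    {F : I →ₗ[R] (ι → R ⧸ p)} (hF : Function.Surjective F) : ¬ I.IsPrincipal := by
  classical
  rintro ⟨u, rfl⟩
  obtain ⟨i, j, hij⟩ := exists_pair_ne ι
  set v := F ⟨u, Ideal.mem_span_singleton_self u⟩
  have h_smul (w : ι → R ⧸ p) : ∃ r : R, r • v = w := by
    obtain ⟨⟨_, hx⟩, rfl⟩ := hF w
    obtain ⟨r, rfl⟩ := Submodule.mem_span_singleton.mp hx
    exact ⟨r, (map_smul F r _).symm⟩
  obtain ⟨r, hr⟩ := h_smul (Pi.single i 1)
  obtain ⟨s, hs⟩ := h_smul (Pi.single j 1)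
  have hri : Ideal.Quotient.mk p r * v i = 1 := by simpa [Algebra.smul_def] using congrFun hr i
  have hrj : Ideal.Quotient.mk p r * v j = 0 := by
    simpa [Algebra.smul_def, hij.symm] using congrFun hr j
  have hsj : Ideal.Quotient.mk p s * v j = 1 := by simpa [Algebra.smul_def] using congrFun hs j
  rcases mul_eq_zero.mp hrj with h | h
  · simp [h] at hri
  · simp [h] at hsj

variable [IsLocalRing R]

lemma three_le_length_quotient_maximalIdeal_mul_self [IsNoetherianRing R]
    (h : ¬ (maximalIdeal R).IsPrincipal) :
    3 ≤ Module.length R (R ⧸ maximalIdeal R * maximalIdeal R) := by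
  have h_nakayama {t : R} (ht : maximalIdeal R ≤ Ideal.span {t} ⊔ maximalIdeal R * maximalIdeal R) :
      maximalIdeal R ≤ Ideal.span {t} :=
    Submodule.le_of_le_smul_of_le_jacobson_bot (IsNoetherian.noetherian _)
      (maximalIdeal_le_jacobson ⊥) ht
  have h_lt : maximalIdeal R * maximalIdeal R < maximalIdeal R := by
    refine lt_of_le_not_ge Ideal.mul_le_left fun h_le => h ⟨0, le_antisymm ?_ (by simp)⟩
    exact h_nakayama (h_le.trans le_sup_right)
  obtain ⟨t, ht, ht_sq⟩ := SetLike.exists_of_lt h_lt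
  have ht_le : Ideal.span {t} ≤ maximalIdeal R := (Ideal.span_singleton_le_iff_mem _).mpr ht
  have h_lt₁ : maximalIdeal R * maximalIdeal R < Ideal.span {t} ⊔ maximalIdeal R * maximalIdeal R :=
    right_lt_sup.mpr fun h_le => ht_sq (h_le (Ideal.mem_span_singleton_self t))
  have h_lt₂ : Ideal.span {t} ⊔ maximalIdeal R * maximalIdeal R < maximalIdeal R :=
    lt_of_le_not_ge (sup_le ht_le Ideal.mul_le_left) fun h_le =>
      h ⟨t, le_antisymm (h_nakayama h_le) ht_le⟩
  have h_lt₃ : maximalIdeal R < ⊤ := (maximalIdeal.isMaximal R).ne_top.lt_top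
  calc (3 : ℕ∞) = 0 + 1 + 1 + 1 := by norm_num
    _ ≤ Module.length R (R ⧸ (⊤ : Ideal R)) + 1 + 1 + 1 := by gcongr; exact zero_le
    _ ≤ Module.length R (R ⧸ maximalIdeal R) + 1 + 1 := by
      gcongr; exact length_quotient_add_one_le_of_lt h_lt₃
    _ ≤ _ + 1 := by gcongr; exact length_quotient_add_one_le_of_lt h_lt₂
    _ ≤ _ := length_quotient_add_one_le_of_lt h_lt₁

lemma length_maximalIdeal_smul_top_torsionBySet_le_one {c : Ideal R}
    (hc : IsArtinianGorensteinQuotient c) :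
    Module.length R ↥(maximalIdeal R • (⊤ : Submodule R (Submodule.torsionBySet R (R ⧸ c)
      (maximalIdeal R * maximalIdeal R : Ideal R)))) ≤ 1 := by
  set ω := Submodule.torsionBySet R (R ⧸ c) (maximalIdeal R * maximalIdeal R : Ideal R)
  have h_le : Submodule.map ω.subtype (maximalIdeal R • ⊤) ≤
      Submodule.torsionBySet R (R ⧸ c) (maximalIdeal R) := by
    rw [Submodule.map_smul'', Submodule.smul_le]
    rintro r hr _ ⟨⟨m, hm⟩, -, rfl⟩
    refine mem_torsionBySet_ideal.mpr fun i hi => ?_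
    rw [← mul_smul]
    exact mem_torsionBySet_ideal.mp hm _ (Ideal.mul_mem_mul hi hr)
  rw [(Submodule.equivMapOfInjective ω.subtype ω.injective_subtype _).length_eq]
  exact (Module.length_le_of_injective _ (Submodule.inclusion_injective h_le)).trans hc.2

-- With `ω = (c : 𝔪²)/c`, an equality `ℓ(𝔪² ⊗ ω) = 3 ℓ(R/𝔪²) = 3 ℓ(ω)` and the surjection
-- `𝔪² ⊗ ω → (ω/𝔪ω)⁶` give `6 ℓ(ω/𝔪ω) ≤ 3 ℓ(ω)`; as `𝔪ω` lies in the socle, `ℓ(ω) ≤ 2`.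
theorem not_hasCompleteIntersectionLength_maximalIdeal_mul_self [IsNoetherianRing R]
    (hR : TriplesAreGorenstein R)
    {F : ↥(maximalIdeal R * maximalIdeal R) →ₗ[R] (Fin 6 → R ⧸ maximalIdeal R)}
    (hF : Function.Surjective F)
    (h_reg : ∃ x y z : R, x ∈ maximalIdeal R * maximalIdeal R ∧
      y ∈ maximalIdeal R * maximalIdeal R ∧ z ∈ maximalIdeal R * maximalIdeal R ∧
      IsRegular R [x, y, z]) :
    ¬ HasCompleteIntersectionLength (maximalIdeal R * maximalIdeal R) := by
  intro h
  obtain ⟨x, y, z, hx, hy, hz, h_reg⟩ := h_reg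
  have h_gor := hR x y z h_reg
  have hω := h_gor.length_torsionBySet (span_triple_le.mpr ⟨hx, hy, hz⟩)
  have h_not_principal : ¬ (maximalIdeal R).IsPrincipal := by
    rintro ⟨t, ht⟩
    refine not_isPrincipal_of_surjective_pi hF ⟨t * t, ?_⟩
    exact (congrArg₂ (· * ·) ht ht).trans (Ideal.span_singleton_mul_span_singleton t t)
  have h_three := three_le_length_quotient_maximalIdeal_mul_self h_not_principal
  have h_socle := length_maximalIdeal_smul_top_torsionBySet_le_one h_gor
  have h_length := h x y z hx hy hz h_reg
  set ω := Submodule.torsionBySet R (R ⧸ Ideal.span {x, y, z})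
    (maximalIdeal R * maximalIdeal R : Ideal R)
  have h_six := length_quotient_smul_top_le_length_tensor hF ω
  rw [h_length, Fintype.card_fin, Nat.cast_ofNat] at h_six
  have h_fin : Module.length R (R ⧸ maximalIdeal R * maximalIdeal R) ≠ ⊤ :=
    ne_top_of_le_ne_top h_gor.1 (Module.length_le_of_surjective _
      (Submodule.factor_surjective (span_triple_le.mpr ⟨hx, hy, hz⟩)))
  rw [← hω, length_eq_length_add_length_quotient
    (maximalIdeal R • (⊤ : Submodule R ω))] at h_three h_six h_fin
  obtain ⟨h_fin₁, h_fin₂⟩ := WithTop.add_ne_top.mp h_fin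
  generalize Module.length R ↥(maximalIdeal R • (⊤ : Submodule R ω)) = a at *
  generalize Module.length R (ω ⧸ maximalIdeal R • (⊤ : Submodule R ω)) = b at *
  lift a to ℕ using h_fin₁
  lift b to ℕ using h_fin₂
  norm_cast at h_three h_six h_socle
  omega

end MaximalIdealSquare

section DimensionThree

variable {R : Type*} [CommRing R] [IsLocalRing R] {Φ : Matrix (Fin 3) (Fin 3) R}

lemma mem_maximalIdeal_of_symMinors_dotProduct_eq_zero
    (h_max : ∀ i j, Φ i j ∈ maximalIdeal R)
    (h_reg : ∃ x y z : R, x ∈ Ideal.span (Set.range (symMinors Φ)) ∧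
      y ∈ Ideal.span (Set.range (symMinors Φ)) ∧ z ∈ Ideal.span (Set.range (symMinors Φ)) ∧
      IsRegular R [x, y, z]) {s : Fin 6 → R} (hs : symMinors Φ ⬝ᵥ s = 0) (i : Fin 6) :
    s i ∈ maximalIdeal R := by
  obtain ⟨x, y, z, hx, hy, hz, h_reg⟩ := h_reg
  obtain ⟨t, rfl⟩ := (jozefiak_exact hx hy hz h_reg.toIsWeaklyRegular).2.2 s hs
  simp only [Matrix.mulVecLin_apply, Matrix.mulVec, dotProduct]
  exact sum_mem fun j _ => Ideal.mul_mem_right _ _ (jozefiak₂_apply_mem h_max i j)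

variable {K : Type*} [Field K] [Algebra K R]

lemma linearIndependent_of_forall_dotProduct_eq_zero {ι : Type*} [Fintype ι] {w : ι → R}
    (h : ∀ s, w ⬝ᵥ s = 0 → ∀ i, s i ∈ maximalIdeal R) : LinearIndependent K w := by
  refine Fintype.linearIndependent_iff.mpr fun a ha i => ?_
  have h_mem := h (algebraMap K R ∘ a) (by
    simpa [dotProduct, Algebra.smul_def, mul_comm] using ha) i
  by_contra hi
  exact (mem_maximalIdeal _).mp h_mem ((IsUnit.mk0 _ hi).map (algebraMap K R))

-- Six linearly independent quadratic forms in three variables span all quadratic forms.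
theorem span_symMinors_eq_maximalIdeal_mul_self {v : Fin 3 → R}
    (hv : Ideal.span (Set.range v) = maximalIdeal R)
    (hΦv : ∀ i j, Φ i j ∈ Submodule.span K (Set.range v))
    (h_rel : ∀ s, symMinors Φ ⬝ᵥ s = 0 → ∀ i, s i ∈ maximalIdeal R) :
    Ideal.span (Set.range (symMinors Φ)) = maximalIdeal R * maximalIdeal R := by
  set V := Submodule.span K (Set.range v) with hV
  obtain ⟨_, h_finrank⟩ := finrank_span_mul_self_le K v
  have h_mem (i) : symMinors Φ i ∈ V * V := by
    fin_cases i <;> exact sub_mem (Submodule.mul_mem_mul (hΦv _ _) (hΦv _ _))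
      (Submodule.mul_mem_mul (hΦv _ _) (hΦv _ _))
  have h_span : Submodule.span K (Set.range (symMinors Φ)) = V * V := by
    refine Submodule.eq_of_le_of_finrank_le
      (Submodule.span_le.mpr (Set.range_subset_iff.mpr h_mem)) (h_finrank.trans_eq ?_)
    exact (finrank_span_eq_card (linearIndependent_of_forall_dotProduct_eq_zero h_rel)).symm
  rw [hV, Submodule.span_mul_span] at h_span
  rw [← hv, Ideal.span_mul_span, Ideal.span, Ideal.span, ← Submodule.span_span_of_tower K R,
    h_span, Submodule.span_span_of_tower]

theorem not_licci_minors2_of_span_eq_maximalIdeal [IsNoetherianRing R]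
    (hR : TriplesAreGorenstein R) (hΦ : Φ.IsSymm) {v : Fin 3 → R}
    (hv : Ideal.span (Set.range v) = maximalIdeal R)
    (hΦv : ∀ i j, Φ i j ∈ Submodule.span K (Set.range v))
    (h_reg : ∃ x y z : R, x ∈ minors2 Φ ∧ y ∈ minors2 Φ ∧ z ∈ minors2 Φ ∧
      IsRegular R [x, y, z]) : ¬ Licci (minors2 Φ) := by
  intro h_licci
  have h_max (i j) : Φ i j ∈ maximalIdeal R :=
    hv ▸ Submodule.span_le_restrictScalars K R _ (hΦv i j)
  rw [minors2_eq_span_symMinors hΦ] at h_licci h_reg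
  have h_rel := fun s => mem_maximalIdeal_of_symMinors_dotProduct_eq_zero h_max h_reg (s := s)
  have h_surj := exists_surjective_of_forall_dotProduct_eq_zero h_rel
  have h_eq := span_symMinors_eq_maximalIdeal_mul_self hv hΦv h_rel
  rw [h_eq] at h_licci h_reg h_surj
  obtain ⟨F, hF⟩ := h_surj
  exact not_hasCompleteIntersectionLength_maximalIdeal_mul_self hR hF h_reg
    (h_licci.hasCompleteIntersectionLength hR)

end DimensionThree

/-! ### Generic linear sections -/

section RegularLocal

variable {R : Type*} [CommRing R] [IsLocalRing R] {us zs : List R}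

lemma torsionBySet_maximalIdeal_eq_bot (hus : IsWeaklyRegular R us)
    (hm : Ideal.ofList us = maximalIdeal R) (hz : IsWeaklyRegular R zs)
    (hzm : ∀ z ∈ zs, z ∈ maximalIdeal R) (h_length : zs.length < us.length) :
    Submodule.torsionBySet R (R ⧸ Ideal.ofList zs) (maximalIdeal R) = ⊥ := by
  have hum (u) (hu : u ∈ us) : u ∈ maximalIdeal R := hm ▸ Ideal.subset_span hu
  have h_next := hus.regular_mod_prev zs.length h_length
  rw [smul_eq_mul, Ideal.mul_top] at h_next
  have h_take : IsWeaklyRegular R (us.take zs.length) := by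
    rw [← us.take_append_drop zs.length, isWeaklyRegular_append_iff] at hus
    exact hus.1
  obtain ⟨e⟩ := nonempty_torsionBySet_linearEquiv hzm
    (fun u hu => hum u (List.mem_of_mem_take hu)) (by rw [List.length_take]; lia) hz h_take
  rw [← Submodule.subsingleton_iff_eq_bot]
  refine e.toEquiv.subsingleton_congr.mpr (Submodule.subsingleton_iff_eq_bot.mpr ?_)
  refine (Submodule.eq_bot_iff _).mpr fun m hm =>
    h_next.right_eq_zero_of_smul ?_
  exact mem_torsionBySet_ideal.mp hm _ (hum _ (List.getElem_mem h_length))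

variable {K : Type*} [Field K] [Algebra K R] {V : Submodule K R}

lemma finrank_inf_ofList_lt [FiniteDimensional K V] {l : R} {ls ts : List R} (hlV : l ∈ V)
    (h_lt : ∀ x ∈ ts ++ ls, x ∈ maximalIdeal R)
    (hl : IsSMulRegular (R ⧸ Ideal.ofList (ts ++ ls)) l) :
    Module.finrank K ↥(V ⊓ (Ideal.ofList ls).restrictScalars K) <
      Module.finrank K ↥(V ⊓ (Ideal.ofList (ls ++ [l])).restrictScalars K) := by
  have h_notMem : l ∉ Ideal.ofList ls := fun h_mem => by
    have h_one : (1 : R) ∈ Ideal.ofList (ts ++ ls) :=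
      mem_of_isSMulRegular_quotient_of_smul_mem hl (by
        rw [smul_eq_mul, mul_one, Ideal.ofList_append]
        exact Ideal.mem_sup_right h_mem)
    exact (Ideal.ne_top_iff_one _).mp (maximalIdeal.isMaximal R).ne_top
      (Ideal.span_le.mpr h_lt h_one)
  rw [Ideal.ofList_append, Ideal.ofList_singleton]
  refine Submodule.finrank_lt_finrank_of_lt (SetLike.lt_iff_le_and_exists.mpr
    ⟨inf_le_inf_left _ (Submodule.restrictScalars_mono K le_sup_left), l,
      Submodule.mem_inf.mpr ⟨hlV, ?_⟩, ?_⟩)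
  · exact Ideal.mem_sup_right (Ideal.mem_span_singleton_self l)
  · exact fun h => h_notMem h.2

variable [IsNoetherianRing R]

lemma length_quotient_ofList_ne_top (hz : IsRegular R zs)
    (h_dim : ringKrullDim R = zs.length) : Module.length R (R ⧸ Ideal.ofList zs) ≠ ⊤ := by
  have h_add := ringKrullDim_add_length_eq_ringKrullDim_of_isRegular zs hz
  have h_le : Ring.KrullDimLE 0 (R ⧸ Ideal.ofList zs) := by
    rw [Ring.krullDimLE_iff]
    refine (ENat.WithBot.add_le_add_natCast_right_iff (c := zs.length)).mp ?_
    rw [h_add, h_dim]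
    simp
  have : IsArtinianRing (R ⧸ Ideal.ofList zs) :=
    isArtinianRing_iff_isNoetherianRing_krullDimLE_zero.mpr ⟨inferInstance, h_le⟩
  rw [Module.length_eq_of_surjective (R := R ⧸ Ideal.ofList zs) Ideal.Quotient.mk_surjective]
  exact Module.length_ne_top

theorem isArtinianGorensteinQuotient_ofList (hus : IsWeaklyRegular R us)
    (hm : Ideal.ofList us = maximalIdeal R) (hz : IsWeaklyRegular R zs)
    (hzm : ∀ z ∈ zs, z ∈ maximalIdeal R) (h_length : zs.length = us.length) :
    IsArtinianGorensteinQuotient (Ideal.ofList zs) := by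
  have hum (u) (hu : u ∈ us) : u ∈ maximalIdeal R := hm ▸ Ideal.subset_span hu
  constructor
  · refine length_quotient_ofList_ne_top (.of_isWeaklyRegular_of_mem_maximalIdeal R hzm hz) ?_
    have h_dim := ringKrullDim_add_length_eq_ringKrullDim_of_isRegular us
      (.of_isWeaklyRegular_of_mem_maximalIdeal R hum hus)
    have h_field : ringKrullDim (R ⧸ maximalIdeal R) = 0 :=
      ringKrullDim_eq_zero_of_field (ResidueField R)
    rw [← h_dim, hm, h_field, zero_add, h_length]
  · obtain ⟨e⟩ := nonempty_torsionBySet_linearEquiv hzm hum h_length hz hus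
    rw [e.length_eq, hm]
    have : IsSimpleModule R (R ⧸ maximalIdeal R) :=
      isSimpleModule_iff_quot_maximal.mpr ⟨_, maximalIdeal.isMaximal R, ⟨.refl R _⟩⟩
    rw [← Module.length_eq_one (R := R) (M := R ⧸ maximalIdeal R)]
    exact Module.length_le_of_injective _ (Submodule.injective_subtype _)

variable [Infinite K]

lemma exists_mem_isSMulRegular (hV : maximalIdeal R ≤ Ideal.span V) (Z : Finset (Ideal R))
    (hZ : ∀ c ∈ Z, Submodule.torsionBySet R (R ⧸ c) (maximalIdeal R) = ⊥) :
    ∃ l ∈ V, ∀ c ∈ Z, IsSMulRegular (R ⧸ c) l := by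
  classical
  let trace (P : Ideal R) : Submodule K V := (P.restrictScalars K).comap V.subtype
  let traces : Finset (Submodule K V) :=
    Z.biUnion fun c => (associatedPrimes.finite R (R ⧸ c)).toFinset.image trace
  have mem_traces (P : Submodule K V) :
      P ∈ traces ↔ ∃ c ∈ Z, ∃ p ∈ associatedPrimes R (R ⧸ c), trace p = P := by
    simp [traces]
  have h_top : ⊤ ∉ traces := by
    rw [mem_traces]
    rintro ⟨c, hc, p, hp, h_trace⟩
    obtain ⟨h_prime, m, rfl⟩ := isAssociatedPrime_iff.mp hp
    have h_le : maximalIdeal R ≤ Submodule.colon ⊥ {m} := hV.trans (Ideal.span_le.mpr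
      fun v hv => (h_trace.ge trivial : (⟨v, hv⟩ : V) ∈ trace _))
    have h_zero : m = 0 := (Submodule.eq_bot_iff _).mp (hZ c hc) m
      (mem_torsionBySet_ideal.mpr fun i hi =>
        (Submodule.mem_bot R).mp (Submodule.mem_colon_singleton.mp (h_le hi)))
    exact h_prime.ne_top (by simp [h_zero])
  obtain ⟨l, hl⟩ := (Set.ne_univ_iff_exists_notMem _).mp
    (Subspace.biUnion_ne_univ_of_top_notMem h_top)
  refine ⟨l, l.2, fun c hc => ?_⟩
  by_contra h_zero
  obtain ⟨p, hp, hlp⟩ := Set.mem_iUnion₂.mp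
    ((biUnion_associatedPrimes_eq_compl_regular R (R ⧸ c)).ge h_zero)
  exact hl (Set.mem_iUnion₂.mpr ⟨trace p, (mem_traces _).mpr ⟨c, hc, p, hp, rfl⟩, hlp⟩)

theorem exists_list_isWeaklyRegular_append [FiniteDimensional K V] (hus : IsWeaklyRegular R us)
    (hm : Ideal.ofList us = maximalIdeal R) (hV : Ideal.span V = maximalIdeal R)
    {T : Finset (List R)} (hT_nonempty : T.Nonempty)
    (hTm : ∀ t ∈ T, ∀ x ∈ t, x ∈ maximalIdeal R) (hT : ∀ t ∈ T, IsWeaklyRegular R t) (j : ℕ)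
    (hj : ∀ t ∈ T, t.length + j ≤ us.length) :
    ∃ ls : List R, ls.length = j ∧ (∀ l ∈ ls, l ∈ maximalIdeal R) ∧
      (∀ t ∈ T, IsWeaklyRegular R (t ++ ls)) ∧
      j ≤ Module.finrank K ↥(V ⊓ (Ideal.ofList ls).restrictScalars K) := by
  classical
  induction j with
  | zero => exact ⟨[], rfl, by simp, by simpa using hT, Nat.zero_le _⟩
  | succ j ih =>
    obtain ⟨ls, h_length, h_ls, h_reg, h_finrank⟩ := ih fun t ht => by have := hj t ht; lia
    have h_append (t) (ht : t ∈ T) : ∀ x ∈ t ++ ls, x ∈ maximalIdeal R :=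
      List.forall_mem_append.mpr ⟨hTm t ht, h_ls⟩
    obtain ⟨l, hlV, hl⟩ := exists_mem_isSMulRegular hV.ge
      (T.image fun t => Ideal.ofList (t ++ ls)) (Finset.forall_mem_image.mpr fun t ht =>
        torsionBySet_maximalIdeal_eq_bot hus hm (h_reg t ht) (h_append t ht) (by
          have := hj t ht; rw [List.length_append]; lia))
    rw [Finset.forall_mem_image] at hl
    refine ⟨ls ++ [l], by simp [h_length], List.forall_mem_append.mpr ⟨h_ls, ?_⟩, ?_, ?_⟩
    · simpa using hV.le (Ideal.subset_span hlV)
    · intro t ht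
      rw [← List.append_assoc, isWeaklyRegular_append_iff, isWeaklyRegular_singleton_iff,
        smul_eq_mul, Ideal.mul_top]
      exact ⟨h_reg t ht, hl ht⟩
    · obtain ⟨t, ht⟩ := hT_nonempty
      exact h_finrank.trans_lt (finrank_inf_ofList_lt hlV (h_append t ht) (hl ht))

end RegularLocal

section RegularModMinors

variable {R : Type*} [CommRing R] {L : Ideal R} {l : R}

-- If `l r = w ⬝ᵥ s + p` with `p ∈ L`, then `s` is a relation on `w` modulo `(L, l)`; lifting it,
-- `s` becomes divisible by `l` modulo `L`.
lemma isSMulRegular_quotient_span_range_sup {ι : Type*} [Fintype ι] {w : ι → R}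
    (hl : IsSMulRegular (R ⧸ L) l)
    (h_lift : ∀ s, w ⬝ᵥ s ∈ Ideal.span {l} ⊔ L →
      ∃ t, w ⬝ᵥ t = 0 ∧ ∀ i, s i - t i ∈ Ideal.span {l} ⊔ L) :
    IsSMulRegular (R ⧸ (Ideal.span (Set.range w) ⊔ L)) l := by
  refine (isSMulRegular_quotient_iff_mem_of_smul_mem _ _).mpr fun r hr => ?_
  obtain ⟨_, hs, p, hp, h_sum⟩ := Submodule.mem_sup.mp hr
  obtain ⟨s, rfl⟩ := mem_span_range_iff_exists_dotProduct.mp hs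
  obtain ⟨t, ht, hst⟩ := h_lift s
    (Ideal.mem_span_singleton_sup.mpr ⟨r, -p, neg_mem hp, by linear_combination -h_sum⟩)
  choose s' p' hp' h_split using fun i => Ideal.mem_span_singleton_sup.mp (hst i)
  have hs_eq : s = t + (l • s' + p') := by
    ext i
    simp only [Pi.add_apply, Pi.smul_apply, smul_eq_mul]
    linear_combination -h_split i
  have h_dot : w ⬝ᵥ s = l * (w ⬝ᵥ s') + w ⬝ᵥ p' := by
    rw [hs_eq, dotProduct_add, dotProduct_add, dotProduct_smul, ht, zero_add, smul_eq_mul]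
  have h_mem : l • (r - w ⬝ᵥ s') ∈ L := by
    have h_eq : l • (r - w ⬝ᵥ s') = w ⬝ᵥ p' + p := by
      simp only [smul_eq_mul] at h_sum ⊢
      linear_combination h_dot - h_sum
    rw [h_eq]
    exact add_mem (sum_mem fun i _ => Ideal.mul_mem_left _ _ (hp' i)) hp
  rw [← add_sub_cancel (w ⬝ᵥ s') r]
  exact Submodule.add_mem_sup (mem_span_range_iff_exists_dotProduct.mpr ⟨s', rfl⟩)
    (mem_of_isSMulRegular_quotient_of_smul_mem hl h_mem)

variable {Φ : Matrix (Fin 3) (Fin 3) R} {x y z : R}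

lemma exists_symMinors_dotProduct_eq_zero {J : Ideal R}
    (hx : x ∈ Ideal.span (Set.range (symMinors Φ))) (hy : y ∈ Ideal.span (Set.range (symMinors Φ)))
    (hz : z ∈ Ideal.span (Set.range (symMinors Φ))) (h_reg : IsWeaklyRegular (R ⧸ J) [x, y, z])
    {s : Fin 6 → R} (hs : symMinors Φ ⬝ᵥ s ∈ J) :
    ∃ t, symMinors Φ ⬝ᵥ t = 0 ∧ ∀ i, s i - t i ∈ J := by
  let φ := Ideal.Quotient.mk J
  have h_map (r) (hr : r ∈ Ideal.span (Set.range (symMinors Φ))) :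
      φ r ∈ Ideal.span (Set.range (symMinors (Φ.map φ))) := by
    rw [symMinors_map, Set.range_comp, ← Ideal.map_span]
    exact Ideal.mem_map_of_mem φ hr
  have h_zero : symMinors (Φ.map φ) ⬝ᵥ (φ ∘ s) = 0 := by
    rw [symMinors_map, ← RingHom.map_dotProduct]
    exact Ideal.Quotient.eq_zero_iff_mem.mpr hs
  obtain ⟨u', hu'⟩ := (jozefiak_exact (h_map x hx) (h_map y hy) (h_map z hz)
    ((isWeaklyRegular_map_algebraMap_iff (R ⧸ J) (R ⧸ J) [x, y, z]).mpr h_reg)).2.2 _ h_zero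
  obtain ⟨u, rfl⟩ := Ideal.Quotient.mk_surjective.comp_left u'
  refine ⟨(jozefiak₂ Φ).mulVec u, ?_, fun i => ?_⟩
  · rw [Matrix.dotProduct_mulVec, symMinors_vecMul_jozefiak₂, zero_dotProduct]
  · rw [← Ideal.Quotient.eq, RingHom.map_mulVec, ← jozefiak₂_map]
    exact (congrFun hu' i).symm

theorem isWeaklyRegular_quotient_minors2_sup [IsLocalRing R] [IsNoetherianRing R] {ls : List R}
    (hΦ : Φ.IsSymm) (hx : x ∈ minors2 Φ) (hy : y ∈ minors2 Φ) (hz : z ∈ minors2 Φ)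
    (h_max : ∀ r ∈ [x, y, z] ++ ls, r ∈ maximalIdeal R) (L : Ideal R)
    (h_reg : IsWeaklyRegular (R ⧸ L) ([x, y, z] ++ ls)) :
    IsWeaklyRegular (R ⧸ (minors2 Φ ⊔ L)) ls := by
  induction ls generalizing L with
  | nil => exact .nil _ _
  | cons l ls ih =>
    have h_perm := isWeaklyRegular_of_perm_of_subset_maximalIdeal h_reg List.perm_middle h_max
    rw [isWeaklyRegular_quotient_cons_iff] at h_perm ⊢
    obtain ⟨hl, h_reg⟩ := h_perm
    have h_triple := (isWeaklyRegular_quotient_append_iff.mp h_reg).1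
    refine ⟨?_, ?_⟩
    · rw [minors2_eq_span_symMinors hΦ] at hx hy hz ⊢
      rw [sup_comm L] at h_triple
      exact isSMulRegular_quotient_span_range_sup hl fun s =>
        exists_symMinors_dotProduct_eq_zero hx hy hz h_triple
    · rw [sup_assoc]
      exact ih (fun r hr => h_max r (((List.sublist_cons_self l ls).append_left _).subset hr)) _
        h_reg

end RegularModMinors

section QuotientLinkage

lemma map_span_triple {R S : Type*} [CommRing R] [CommRing S] (f : R →+* S) (x y z : R) :
    (Ideal.span {x, y, z}).map f = Ideal.span {f x, f y, f z} := by
  simp [Ideal.map_span, Set.image_insert_eq]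

variable {R : Type*} [CommRing R] {L : Ideal R}

lemma colon_map_mk (L c I : Ideal R) :
    Submodule.colon (c.map (Ideal.Quotient.mk L)) (I.map (Ideal.Quotient.mk L) : Set (R ⧸ L)) =
      (Submodule.colon (c ⊔ L) ((I ⊔ L : Ideal R) : Set R)).map (Ideal.Quotient.mk L) := by
  ext r
  obtain ⟨r, rfl⟩ := Ideal.Quotient.mk_surjective r
  rw [Ideal.mem_quotient_iff_mem_sup, sup_of_le_left (le_sup_right.trans (le_colon _ _)),
    Submodule.mem_colon, Submodule.mem_colon, Ideal.Quotient.mk_surjective.forall]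
  simp only [SetLike.mem_coe, smul_eq_mul, ← map_mul, Ideal.mem_quotient_iff_mem_sup]

lemma directlyLinked_map_mk {I J : Ideal R} {x y z : R} (h_le : Ideal.span {x, y, z} ≤ I)
    (h_reg : IsRegular (R ⧸ L) ([x, y, z].map (Ideal.Quotient.mk L)))
    (h_colon : Submodule.colon (Ideal.span {x, y, z} ⊔ L) ((I ⊔ L : Ideal R) : Set R) = J ⊔ L) :
    DirectlyLinked (I.map (Ideal.Quotient.mk L)) (J.map (Ideal.Quotient.mk L)) := by
  obtain ⟨hx, hy, hz⟩ := span_triple_le.mp h_le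
  refine ⟨_, _, _, Ideal.mem_map_of_mem _ hx, Ideal.mem_map_of_mem _ hy,
    Ideal.mem_map_of_mem _ hz, h_reg, ?_⟩
  rw [← map_span_triple, colon_map_mk, h_colon, Ideal.map_sup, Ideal.map_quotient_self,
    sup_bot_eq]

variable [IsLocalRing R]

lemma mem_maximalIdeal_of_isRegular {xs : List R} (h : IsRegular R xs) :
    ∀ x ∈ xs, x ∈ maximalIdeal R := by
  intro x hx h_unit
  refine h.top_ne_smul ?_
  rw [smul_eq_mul, Ideal.mul_top]
  have h_mem : x ∈ Ideal.ofList xs := Ideal.subset_span hx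
  exact (Ideal.eq_top_of_isUnit_mem _ h_mem h_unit).symm

variable [IsLocalRing (R ⧸ L)]

lemma mk_mem_maximalIdeal_iff {r : R} :
    Ideal.Quotient.mk L r ∈ maximalIdeal (R ⧸ L) ↔ r ∈ maximalIdeal R := by
  have := IsLocalHom.of_surjective (Ideal.Quotient.mk L) Ideal.Quotient.mk_surjective
  rw [← maximalIdeal_comap (Ideal.Quotient.mk L), Ideal.mem_comap]

lemma IsArtinianGorensteinQuotient.map_mk {c : Ideal R}
    (h : IsArtinianGorensteinQuotient (L ⊔ c)) :
    IsArtinianGorensteinQuotient (c.map (Ideal.Quotient.mk L)) := by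
  have h_surj : Function.Surjective (algebraMap R (R ⧸ L)) := Ideal.Quotient.mk_surjective
  let e : ((R ⧸ L) ⧸ c.map (Ideal.Quotient.mk L)) ≃ₗ[R] R ⧸ (L ⊔ c) :=
    (DoubleQuot.quotQuotEquivQuotSupₐ R L c).toLinearEquiv
  let socle := Submodule.torsionBySet (R ⧸ L) ((R ⧸ L) ⧸ c.map (Ideal.Quotient.mk L))
    (maximalIdeal (R ⧸ L))
  have h_socle : (socle.restrictScalars R).map e.toLinearMap ≤
      Submodule.torsionBySet R (R ⧸ (L ⊔ c)) (maximalIdeal R) := by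
    rintro _ ⟨m, hm, rfl⟩
    refine mem_torsionBySet_ideal.mpr fun r hr => ?_
    have h_zero : r • m = 0 :=
      mem_torsionBySet_ideal.mp hm (Ideal.Quotient.mk L r) (mk_mem_maximalIdeal_iff.mpr hr)
    exact (map_smul e r m).symm.trans ((congrArg e h_zero).trans (map_zero e))
  constructor
  · rw [← Module.length_eq_of_surjective h_surj, e.length_eq]
    exact h.1
  · rw [← Module.length_eq_of_surjective h_surj]
    exact ((e.submoduleMap (socle.restrictScalars R)).length_eq.trans_le
      (Module.length_le_of_injective _ (Submodule.inclusion_injective h_socle))).trans h.2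

end QuotientLinkage

section LinearSections

variable {R : Type*} [CommRing R] [IsLocalRing R] [IsNoetherianRing R] {us ts ls : List R}

lemma isWeaklyRegular_and_isRegular_map_mk [IsLocalRing (R ⧸ Ideal.ofList ls)]
    (h_max : ∀ r ∈ ts ++ ls, r ∈ maximalIdeal R) (h_reg : IsWeaklyRegular R (ts ++ ls)) :
    IsWeaklyRegular R ls ∧
      IsRegular (R ⧸ Ideal.ofList ls) (ts.map (Ideal.Quotient.mk (Ideal.ofList ls))) := by
  have h_comm := isWeaklyRegular_of_perm_of_subset_maximalIdeal h_reg List.perm_append_comm h_max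
  rw [isWeaklyRegular_append_iff, smul_eq_mul, Ideal.mul_top] at h_comm
  refine ⟨h_comm.1, .of_isWeaklyRegular_of_mem_maximalIdeal _ ?_
    ((isWeaklyRegular_map_algebraMap_iff _ _ ts).mpr h_comm.2)⟩
  exact List.forall_mem_map.mpr fun t ht =>
    mk_mem_maximalIdeal_iff.mpr (h_max t (List.mem_append_left _ ht))

theorem triplesAreGorenstein_quotient_ofList [IsLocalRing (R ⧸ Ideal.ofList ls)]
    (hus : IsWeaklyRegular R us) (hm : Ideal.ofList us = maximalIdeal R)
    (h_max : ∀ l ∈ ls, l ∈ maximalIdeal R) (h_reg : IsWeaklyRegular R ls)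
    (h_length : ls.length + 3 = us.length) : TriplesAreGorenstein (R ⧸ Ideal.ofList ls) := by
  intro x y z h_xyz
  obtain ⟨x, rfl⟩ := Ideal.Quotient.mk_surjective x
  obtain ⟨y, rfl⟩ := Ideal.Quotient.mk_surjective y
  obtain ⟨z, rfl⟩ := Ideal.Quotient.mk_surjective z
  have h_xyz_max : ∀ r ∈ [x, y, z], r ∈ maximalIdeal R := fun r hr =>
    mk_mem_maximalIdeal_iff.mp (mem_maximalIdeal_of_isRegular h_xyz _
      (List.mem_map_of_mem (f := Ideal.Quotient.mk (Ideal.ofList ls)) hr))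
  have h_append : IsWeaklyRegular R (ls ++ [x, y, z]) := by
    rw [isWeaklyRegular_append_iff, smul_eq_mul, Ideal.mul_top]
    exact ⟨h_reg, (isWeaklyRegular_map_algebraMap_iff (R ⧸ Ideal.ofList ls) _ [x, y, z]).mp
      h_xyz.toIsWeaklyRegular⟩
  have h_gor := isArtinianGorensteinQuotient_ofList hus hm h_append
    (List.forall_mem_append.mpr ⟨h_max, h_xyz_max⟩) (by simpa using h_length)
  rw [Ideal.ofList_append, ofList_triple] at h_gor
  rw [← map_span_triple]
  exact h_gor.map_mk

lemma directlyLinked_map_mk_and_isWeaklyRegular_colon [IsLocalRing (R ⧸ Ideal.ofList ls)]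
    (hus : IsWeaklyRegular R us) (hm : Ideal.ofList us = maximalIdeal R) {I : Ideal R} {x y z : R}
    (h_le : Ideal.span {x, y, z} ≤ I) (h_max : ∀ r ∈ [x, y, z] ++ ls, r ∈ maximalIdeal R)
    (h_reg : IsWeaklyRegular R ([x, y, z] ++ ls)) (hI : IsWeaklyRegular (R ⧸ I) ls)
    (h_length : ls.length + 3 = us.length) :
    DirectlyLinked (I.map (Ideal.Quotient.mk (Ideal.ofList ls)))
        ((Submodule.colon (Ideal.span {x, y, z}) (I : Set R)).map
          (Ideal.Quotient.mk (Ideal.ofList ls))) ∧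
      IsWeaklyRegular (R ⧸ Submodule.colon (Ideal.span {x, y, z}) (I : Set R)) ls := by
  have h_gor := isArtinianGorensteinQuotient_ofList hus hm h_reg h_max (by simp; lia)
  rw [Ideal.ofList_append, ofList_triple] at h_gor
  have h_ls : IsWeaklyRegular (R ⧸ Ideal.span {x, y, z}) ls := by
    rw [isWeaklyRegular_append_iff, smul_eq_mul, Ideal.mul_top, ofList_triple] at h_reg
    exact h_reg.2
  obtain ⟨-, h_colon, h_colon_reg⟩ := HomsAreScalar.colon_sup_ofList
    (fun l hl => h_max l (List.mem_append_right _ hl)) h_le h_ls hI (h_gor.homsAreScalar _)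
  exact ⟨directlyLinked_map_mk h_le (isWeaklyRegular_and_isRegular_map_mk h_max h_reg).2 h_colon,
    h_colon_reg⟩

-- The section only has to keep regular the finitely many sequences of the linkage chain.
theorem Licci.exists_finset_forall_licci_map_mk (hus : IsWeaklyRegular R us)
    (hm : Ideal.ofList us = maximalIdeal R) {I : Ideal R} (hI : Licci I) :
    ∃ T : Finset (List R), (∀ t ∈ T, IsRegular R t ∧ t.length = 3) ∧
      ∀ (ls : List R) [IsLocalRing (R ⧸ Ideal.ofList ls)], (∀ l ∈ ls, l ∈ maximalIdeal R) →
        ls.length + 3 = us.length → (∀ t ∈ T, IsWeaklyRegular R (t ++ ls)) →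
        IsWeaklyRegular (R ⧸ I) ls → Licci (I.map (Ideal.Quotient.mk (Ideal.ofList ls))) := by
  classical
  obtain ⟨C, h_linked, x, y, z, h_reg, rfl⟩ := hI
  have mem_append {ts ls : List R} (hts : IsRegular R ts) (hls : ∀ l ∈ ls, l ∈ maximalIdeal R) :
      ∀ r ∈ ts ++ ls, r ∈ maximalIdeal R :=
    List.forall_mem_append.mpr ⟨mem_maximalIdeal_of_isRegular hts, hls⟩
  induction h_linked using Relation.ReflTransGen.head_induction_on with
  | refl =>
    refine ⟨{[x, y, z]}, by simp [h_reg], fun ls _ h_max _ hT _ => ?_⟩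
    exact ⟨_, .refl, _, _, _, (isWeaklyRegular_and_isRegular_map_mk (mem_append h_reg h_max)
      (hT _ (Finset.mem_singleton_self _))).2, map_span_triple _ x y z⟩
  | head h_step _ ih =>
    obtain ⟨T, hT, ih⟩ := ih
    obtain ⟨p, q, s, hp, hq, hs, h_pqs, rfl⟩ := h_step
    refine ⟨insert [p, q, s] T, ?_, fun ls _ h_max h_length hT' hI => ?_⟩
    · exact Finset.forall_mem_insert .. |>.mpr ⟨⟨h_pqs, rfl⟩, hT⟩
    · rw [Finset.forall_mem_insert] at hT'
      obtain ⟨h_link, h_colon⟩ := directlyLinked_map_mk_and_isWeaklyRegular_colon hus hm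
        (span_triple_le.mpr ⟨hp, hq, hs⟩) (mem_append h_pqs h_max) hT'.1 hI h_length
      obtain ⟨C, hC, h_ci⟩ := ih ls h_max h_length hT'.2 h_colon
      exact ⟨C, hC.head h_link, h_ci⟩

end LinearSections

section LinearMatrices

variable {K : Type*} [Field K]

lemma exists_fin_span_range_eq {V : Type*} [AddCommGroup V] [Module K V] {W : Submodule K V}
    [FiniteDimensional K W] {n : ℕ} (h : Module.finrank K W ≤ n) :
    ∃ v : Fin n → V, Submodule.span K (Set.range v) = W := by
  let b := Module.finBasis K W
  have hb : Submodule.span K (Set.range (W.subtype ∘ b)) = W := by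
    rw [Set.range_comp, ← Submodule.map_span, b.span_eq, Submodule.map_subtype_top]
  refine ⟨Function.extend (Fin.castLE h) (W.subtype ∘ b) 0, ?_⟩
  rw [Set.range_extend (Fin.castLE_injective h), Submodule.span_union, hb, sup_eq_left,
    Submodule.span_le]
  rintro _ ⟨_, -, rfl⟩
  exact W.zero_mem

lemma finrank_map_add_finrank_inf_ker {V W : Type*} [AddCommGroup V] [Module K V] [AddCommGroup W]
    [Module K W] (f : V →ₗ[K] W) (U : Submodule K V) [FiniteDimensional K U] :
    Module.finrank K (U.map f) + Module.finrank K ↥(U ⊓ LinearMap.ker f) = Module.finrank K U := by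
  rw [← (f.domRestrict U).finrank_range_add_finrank_ker, LinearMap.range_domRestrict,
    LinearMap.ker_domRestrict, ← Submodule.finrank_map_subtype_eq U, Submodule.map_comap_subtype]

variable {R : Type*} [CommRing R] [IsLocalRing R] [Algebra K R]

lemma span_map_mkₐ_eq_maximalIdeal {V : Submodule K R} (hV : Ideal.span V = maximalIdeal R)
    (L : Ideal R) [IsLocalRing (R ⧸ L)] :
    Ideal.span (V.map (Ideal.Quotient.mkₐ K L).toLinearMap : Set (R ⧸ L)) =
      maximalIdeal (R ⧸ L) := by
  rw [← map_maximalIdeal_of_surjective _ (Ideal.Quotient.mk_surjective (I := L)), ← hV,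
    Ideal.map_span]
  rfl

variable [IsNoetherianRing R] {us : List R} {V : Submodule K R} [FiniteDimensional K V]
  {Φ : Matrix (Fin 3) (Fin 3) R}

lemma not_licci_map_mk_minors2 {ls : List R} [IsLocalRing (R ⧸ Ideal.ofList ls)]
    (hus : IsWeaklyRegular R us) (hm : Ideal.ofList us = maximalIdeal R)
    (hV : Ideal.span V = maximalIdeal R) (hΦ : Φ.IsSymm) (hΦV : ∀ i j, Φ i j ∈ V)
    {x y z : R} (hx : x ∈ minors2 Φ) (hy : y ∈ minors2 Φ) (hz : z ∈ minors2 Φ)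
    (h_max : ∀ r ∈ [x, y, z] ++ ls, r ∈ maximalIdeal R)
    (h_reg : IsWeaklyRegular R ([x, y, z] ++ ls)) (h_length : ls.length + 3 = us.length)
    (h_finrank : Module.finrank K V ≤
      Module.finrank K ↥(V ⊓ (Ideal.ofList ls).restrictScalars K) + 3) :
    ¬ Licci ((minors2 Φ).map (Ideal.Quotient.mk (Ideal.ofList ls))) := by
  let π := Ideal.Quotient.mkₐ K (Ideal.ofList ls)
  obtain ⟨h_ls, h_xyz⟩ := isWeaklyRegular_and_isRegular_map_mk h_max h_reg
  have h_ker : LinearMap.ker π.toLinearMap = (Ideal.ofList ls).restrictScalars K := by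
    ext r
    exact Ideal.Quotient.eq_zero_iff_mem
  have h_rank := finrank_map_add_finrank_inf_ker π.toLinearMap V
  obtain ⟨v, hv⟩ := exists_fin_span_range_eq (W := V.map π.toLinearMap) (n := 3)
    (by rw [h_ker] at h_rank; lia)
  have hv_max : Ideal.span (Set.range v) = maximalIdeal (R ⧸ Ideal.ofList ls) := by
    rw [← span_map_mkₐ_eq_maximalIdeal hV, ← hv]
    exact (Submodule.span_span_of_tower K _ _).symm
  have h_mem {w : R} (hw : w ∈ minors2 Φ) :
      π w ∈ minors2 (Φ.map (Ideal.Quotient.mk (Ideal.ofList ls))) := by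
    rw [minors2_map]
    exact Ideal.mem_map_of_mem _ hw
  rw [← minors2_map]
  refine not_licci_minors2_of_span_eq_maximalIdeal (K := K)
    (triplesAreGorenstein_quotient_ofList hus hm (List.forall_mem_append.mp h_max).2 h_ls h_length)
    (hΦ.map _) hv_max (fun i j => ?_) ⟨_, _, _, h_mem hx, h_mem hy, h_mem hz, h_xyz⟩
  rw [hv]
  exact ⟨_, hΦV i j, rfl⟩

theorem not_licci_minors2 [Infinite K] (hus : IsWeaklyRegular R us)
    (hm : Ideal.ofList us = maximalIdeal R) (h_three : 3 ≤ us.length)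
    (hV : Ideal.span V = maximalIdeal R) (hV_finrank : Module.finrank K V ≤ us.length)
    (hΦ : Φ.IsSymm) (hΦV : ∀ i j, Φ i j ∈ V)
    (h_reg : ∃ x y z : R, x ∈ minors2 Φ ∧ y ∈ minors2 Φ ∧ z ∈ minors2 Φ ∧
      IsRegular R [x, y, z]) : ¬ Licci (minors2 Φ) := by
  classical
  intro h_licci
  obtain ⟨x, y, z, hx, hy, hz, h_xyz⟩ := h_reg
  obtain ⟨T, hT, h_section⟩ := h_licci.exists_finset_forall_licci_map_mk hus hm
  have hT' : ∀ t ∈ insert [x, y, z] T, IsRegular R t ∧ t.length = 3 :=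
    Finset.forall_mem_insert .. |>.mpr ⟨⟨h_xyz, rfl⟩, hT⟩
  obtain ⟨ls, h_length, h_max, h_append, h_finrank⟩ := exists_list_isWeaklyRegular_append hus hm hV
    (Finset.insert_nonempty _ _) (fun t ht => mem_maximalIdeal_of_isRegular (hT' t ht).1)
    (fun t ht => (hT' t ht).1.toIsWeaklyRegular) (us.length - 3)
    (fun t ht => by rw [(hT' t ht).2]; lia)
  rw [Finset.forall_mem_insert] at h_append
  have h_xyz_max : ∀ r ∈ [x, y, z] ++ ls, r ∈ maximalIdeal R :=
    List.forall_mem_append.mpr ⟨mem_maximalIdeal_of_isRegular h_xyz, h_max⟩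
  have : Nontrivial (R ⧸ Ideal.ofList ls) := Ideal.Quotient.nontrivial_iff.mpr
    (ne_top_of_le_ne_top (maximalIdeal.isMaximal R).ne_top (Ideal.span_le.mpr h_max))
  have : IsLocalRing (R ⧸ Ideal.ofList ls) :=
    .of_surjective' _ Ideal.Quotient.mk_surjective
  have h_minors : IsWeaklyRegular (R ⧸ minors2 Φ) ls := by
    rw [← sup_bot_eq (minors2 Φ)]
    exact isWeaklyRegular_quotient_minors2_sup hΦ hx hy hz h_xyz_max ⊥
      (isWeaklyRegular_quotient_bot_iff.mpr h_append.1)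
  exact not_licci_map_mk_minors2 hus hm hV hΦ hΦV hx hy hz h_xyz_max h_append.1 (by lia) (by lia)
    (h_section ls h_max (by lia) h_append.2 h_minors)

end LinearMatrices

/-! ### Flat base change -/

section FlatColon

variable {A B : Type*} [CommRing A] [CommRing B] [Algebra A B]

lemma tmul_one_eq_zero_of_mem_map {c : Ideal A} {b : B} (hb : b ∈ c.map (algebraMap A B)) :
    b ⊗ₜ[A] (1 : A ⧸ c) = 0 := by
  induction hb using Submodule.span_induction with
  | mem _ h =>
    obtain ⟨a, ha, rfl⟩ := h
    rw [Algebra.algebraMap_eq_smul_one, TensorProduct.smul_tmul, Algebra.smul_def, mul_one,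
      Ideal.Quotient.algebraMap_eq, Ideal.Quotient.eq_zero_iff_mem.mpr ha, TensorProduct.tmul_zero]
  | zero => exact TensorProduct.zero_tmul _ _
  | add _ _ _ _ hx hy => rw [TensorProduct.add_tmul, hx, hy, add_zero]
  | smul b' _ _ hx => rw [← TensorProduct.smul_tmul', hx, smul_zero]

variable [Module.Flat A B]

lemma mem_map_ker_of_tmul_eq_zero {M : Type*} [AddCommGroup M] [Module A M] (f : A →ₗ[A] M)
    {b : B} (hb : b ⊗ₜ[A] f 1 = 0) : b ∈ Ideal.map (algebraMap A B) (LinearMap.ker f) := by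
  obtain ⟨t, ht⟩ := (Module.Flat.lTensor_exact B f.exact_subtype_ker_map (b ⊗ₜ 1)).mp hb
  have hb' : TensorProduct.rid A B ((LinearMap.ker f).subtype.lTensor B t) = b := by
    rw [ht, TensorProduct.rid_tmul, one_smul]
  rw [← hb']
  clear hb hb' ht
  induction t with
  | zero => simp
  | tmul b' a =>
    rw [LinearMap.lTensor_tmul, TensorProduct.rid_tmul, Algebra.smul_def]
    exact Ideal.mul_mem_right _ _ (Ideal.mem_map_of_mem _ a.2)
  | add _ _ hx hy => simpa only [map_add] using Ideal.add_mem _ hx hy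

lemma map_colon_of_flat {c I : Ideal A} (hI : I.FG) :
    (Submodule.colon c (I : Set A)).map (algebraMap A B) =
      Submodule.colon (c.map (algebraMap A B)) (I.map (algebraMap A B) : Set B) := by
  classical
  obtain ⟨s, rfl⟩ := hI
  refine le_antisymm (Ideal.map_le_iff_le_comap.mpr fun a ha => ?_) fun b hb => ?_
  · rw [Ideal.map_span, Ideal.mem_comap, Ideal.colon_span, Submodule.mem_colon]
    rintro _ ⟨g, hg, rfl⟩
    rw [smul_eq_mul, ← map_mul]
    exact Ideal.mem_map_of_mem _ (Submodule.mem_colon.mp ha g (Ideal.subset_span hg))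
  · let f : A →ₗ[A] (s → A ⧸ c) := LinearMap.pi fun g => g.1 • c.mkQ
    have hf : LinearMap.ker f ≤ Submodule.colon c ((Ideal.span (s : Set A) : Ideal A) : Set A) := by
      intro a ha
      rw [Ideal.colon_span, Submodule.mem_colon]
      intro g hg
      rw [smul_eq_mul, mul_comm, ← Ideal.Quotient.eq_zero_iff_mem]
      exact congrFun ha ⟨g, hg⟩
    refine Ideal.map_mono hf
      (mem_map_ker_of_tmul_eq_zero f ((TensorProduct.piRight A A B _).injective ?_))
    ext g
    have hbg : g.1 • b ∈ c.map (algebraMap A B) := by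
      rw [Algebra.smul_def, mul_comm]
      exact Submodule.mem_colon.mp hb _ (Ideal.mem_map_of_mem _ (Ideal.subset_span g.2))
    calc b ⊗ₜ[A] (g.1 • (1 : A ⧸ c)) = (g.1 • b) ⊗ₜ 1 := (TensorProduct.smul_tmul _ _ _).symm
      _ = 0 := tmul_one_eq_zero_of_mem_map hbg

end FlatColon

theorem Licci.map_of_faithfullyFlat {A B : Type*} [CommRing A] [CommRing B] [IsNoetherianRing A]
    {f : A →+* B} (hf : f.FaithfullyFlat) {I : Ideal A} (hI : Licci I) : Licci (I.map f) := by
  algebraize [f]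
  obtain ⟨C, h_linked, x, y, z, h_reg, rfl⟩ := hI
  refine ⟨_, ?_, _, _, _, h_reg.of_faithfullyFlat, map_span_triple (algebraMap A B) x y z⟩
  refine Relation.ReflTransGen.lift (Ideal.map (algebraMap A B)) ?_ _ _ h_linked
  rintro J _ ⟨p, q, r, hp, hq, hr, h_pqr, rfl⟩
  refine ⟨_, _, _, Ideal.mem_map_of_mem _ hp, Ideal.mem_map_of_mem _ hq,
    Ideal.mem_map_of_mem _ hr, h_pqr.of_faithfullyFlat, ?_⟩
  rw [map_colon_of_flat (IsNoetherian.noetherian J), map_span_triple]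

/-! ### Localized polynomial rings -/

section PolynomialRing

open MvPolynomial

variable {σ k : Type*} [CommRing k]

lemma mem_idealOfVars_iff {p : MvPolynomial σ k} : p ∈ idealOfVars σ k ↔ constantCoeff p = 0 := by
  rw [← pow_one (idealOfVars σ k), mem_pow_idealOfVars_iff']
  simp [Finsupp.degree_eq_zero_iff, constantCoeff_eq]

instance isPrime_idealOfVars [IsDomain k] : (idealOfVars σ k).IsPrime := by
  have h_ker : idealOfVars σ k = RingHom.ker (constantCoeff (σ := σ) (R := k)) := by
    ext p
    rw [mem_idealOfVars_iff, RingHom.mem_ker]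
  rw [h_ker]
  exact RingHom.ker_isPrime _

lemma mem_idealOfVars_of_isHomogeneous_one {p : MvPolynomial σ k} (hp : p.IsHomogeneous 1) :
    p ∈ idealOfVars σ k :=
  mem_idealOfVars_iff.mpr (hp.coeff_eq_zero (d := 0) (by simp))

lemma isSMulRegular_X_quotient {s : Set σ} {i : σ} (hi : i ∉ s) :
    IsSMulRegular (MvPolynomial σ k ⧸ Ideal.span (X '' s : Set (MvPolynomial σ k)))
      (X i : MvPolynomial σ k) := by
  rw [isSMulRegular_quotient_iff_mem_of_smul_mem]
  intro p hp
  rw [smul_eq_mul, mem_ideal_span_X_image] at hp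
  rw [mem_ideal_span_X_image]
  intro m hm
  obtain ⟨j, hj, hmj⟩ := hp (Finsupp.single i 1 + m) (by simpa [coeff_X_mul] using hm)
  have hij : i ≠ j := fun h => hi (h ▸ hj)
  exact ⟨j, hj, by simpa [hij] using hmj⟩

lemma isWeaklyRegular_map_X_quotient {l : List σ} (hl : l.Nodup) {s : Set σ} (hs : ∀ i ∈ l, i ∉ s) :
    IsWeaklyRegular (MvPolynomial σ k ⧸ Ideal.span (X '' s : Set (MvPolynomial σ k)))
      (l.map X : List (MvPolynomial σ k)) := by
  induction l generalizing s with
  | nil => exact .nil _ _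
  | cons i l ih =>
    obtain ⟨hil, hl⟩ := List.nodup_cons.mp hl
    obtain ⟨hi, hs⟩ := List.forall_mem_cons.mp hs
    refine isWeaklyRegular_quotient_cons_iff.mpr ⟨isSMulRegular_X_quotient hi, ?_⟩
    rw [← Ideal.span_union, ← Set.image_singleton, ← Set.image_union]
    refine ih hl fun j hj => ?_
    rintro (hjs | rfl)
    exacts [hs j hj hjs, hil hj]

lemma isWeaklyRegular_map_X {l : List σ} (hl : l.Nodup) :
    IsWeaklyRegular (MvPolynomial σ k) (l.map X : List (MvPolynomial σ k)) := by
  have h := isWeaklyRegular_map_X_quotient (k := k) hl (s := ∅) (by simp)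
  rwa [Set.image_empty, Ideal.span_empty, isWeaklyRegular_quotient_bot_iff] at h

lemma comap_map_idealOfVars {K : Type*} [CommRing K] {f : k →+* K} (hf : Function.Injective f) :
    (idealOfVars σ K).comap (MvPolynomial.map f) = idealOfVars σ k := by
  ext p
  rw [Ideal.mem_comap, mem_idealOfVars_iff, mem_idealOfVars_iff, constantCoeff_map,
    map_eq_zero_iff f hf]

lemma flat_map {K : Type*} [CommRing K] {f : k →+* K} (hf : f.Flat) :
    (MvPolynomial.map (σ := σ) f).Flat := by
  algebraize [f]
  let := algebraMvPolynomial (σ := σ) (R := k) (S := K)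
  have : Module.Flat (MvPolynomial σ k) (MvPolynomial σ K) :=
    Module.Flat.isBaseChange k (MvPolynomial σ k) K (MvPolynomial σ K) Algebra.IsPushout.out
  exact RingHom.flat_algebraMap_iff.mpr this

end PolynomialRing

section LocalizedPolynomialRing

open MvPolynomial

lemma faithfullyFlat_localRingHom {A B : Type*} [CommRing A] [CommRing B] {f : A →+* B}
    (hf : f.Flat) {p : Ideal A} {q : Ideal B} [p.IsPrime] [q.IsPrime] (h : p = q.comap f) :
    (Localization.localRingHom p q f h).FaithfullyFlat := by
  algebraize [Localization.localRingHom p q f h]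
  have : IsLocalHom (algebraMap (Localization.AtPrime p) (Localization.AtPrime q)) :=
    Localization.isLocalHom_localRingHom p q f h
  have : Module.Flat (Localization.AtPrime p) (Localization.AtPrime q) := hf.localRingHom q p h
  exact Module.FaithfullyFlat.of_flat_of_isLocalHom

lemma exists_isRegular_minors2_map {A B : Type*} [CommRing A] [CommRing B] {f : A →+* B}
    (hf : f.FaithfullyFlat) {Φ : Matrix (Fin 3) (Fin 3) A}
    (h_reg : ∃ x y z : A, x ∈ minors2 Φ ∧ y ∈ minors2 Φ ∧ z ∈ minors2 Φ ∧
      IsRegular A [x, y, z]) :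
    ∃ x y z : B, x ∈ minors2 (Φ.map f) ∧ y ∈ minors2 (Φ.map f) ∧ z ∈ minors2 (Φ.map f) ∧
      IsRegular B [x, y, z] := by
  algebraize [f]
  obtain ⟨x, y, z, hx, hy, hz, h_xyz⟩ := h_reg
  rw [minors2_map]
  exact ⟨_, _, _, Ideal.mem_map_of_mem _ hx, Ideal.mem_map_of_mem _ hy, Ideal.mem_map_of_mem _ hz,
    h_xyz.of_faithfullyFlat⟩

lemma minors2_le {A : Type*} [CommRing A] {p q : ℕ} {Φ : Matrix (Fin p) (Fin q) A} {I : Ideal A}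
    (h : ∀ i j, Φ i j ∈ I) : minors2 Φ ≤ I := by
  refine Ideal.span_le.mpr ?_
  rintro _ ⟨r, c, -, -, rfl⟩
  rw [Matrix.det_fin_two]
  exact sub_mem (I.mul_mem_right _ (h _ _)) (I.mul_mem_right _ (h _ _))

lemma exists_isRegular_minors2_localization {A : Type*} [CommRing A] {p : Ideal A} [p.IsPrime]
    {Φ : Matrix (Fin 3) (Fin 3) A} (hΦ : ∀ i j, Φ i j ∈ p)
    (h_reg : ∃ x y z : A, x ∈ minors2 Φ ∧ y ∈ minors2 Φ ∧ z ∈ minors2 Φ ∧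
      IsRegular A [x, y, z]) :
    ∃ x y z : Localization.AtPrime p, x ∈ minors2 (Φ.map (algebraMap A _)) ∧
      y ∈ minors2 (Φ.map (algebraMap A _)) ∧ z ∈ minors2 (Φ.map (algebraMap A _)) ∧
      IsRegular (Localization.AtPrime p) [x, y, z] := by
  obtain ⟨x, y, z, hx, hy, hz, h_xyz⟩ := h_reg
  rw [minors2_map]
  refine ⟨_, _, _, Ideal.mem_map_of_mem _ hx, Ideal.mem_map_of_mem _ hy, Ideal.mem_map_of_mem _ hz,
    h_xyz.toIsWeaklyRegular.isRegular_of_isLocalization_of_mem _ p ?_⟩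
  have h_le := minors2_le hΦ
  simpa using ⟨h_le hx, h_le hy, h_le hz⟩

variable {σ : Type*} [Fintype σ]

lemma ofList_map_algebraMap_X {K : Type*} [Field K] :
    Ideal.ofList ((Finset.univ : Finset σ).toList.map fun i =>
      algebraMap (MvPolynomial σ K) (Localization.AtPrime (idealOfVars σ K)) (X i)) =
      maximalIdeal (Localization.AtPrime (idealOfVars σ K)) := by
  rw [← Localization.AtPrime.map_eq_maximalIdeal, Ideal.map_span, ← Set.range_comp]
  simp [Ideal.ofList, Set.range]

theorem not_licci_minors2_map_algebraMap_of_infinite {K : Type*} [Field K] [Infinite K]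
    (hσ : 3 ≤ Fintype.card σ) {Φ : Matrix (Fin 3) (Fin 3) (MvPolynomial σ K)} (hΦ : Φ.IsSymm)
    (hΦ_linear : ∀ i j, (Φ i j).IsHomogeneous 1)
    (h_reg : ∃ x y z : Localization.AtPrime (idealOfVars σ K),
      x ∈ minors2 (Φ.map (algebraMap _ _)) ∧ y ∈ minors2 (Φ.map (algebraMap _ _)) ∧
      z ∈ minors2 (Φ.map (algebraMap _ _)) ∧
      IsRegular (Localization.AtPrime (idealOfVars σ K)) [x, y, z]) :
    ¬ Licci (minors2 (Φ.map (algebraMap _ (Localization.AtPrime (idealOfVars σ K))))) := by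
  let Q := Localization.AtPrime (idealOfVars σ K)
  let π : MvPolynomial σ K →ₗ[K] Q := (IsScalarTower.toAlgHom K (MvPolynomial σ K) Q).toLinearMap
  let V : Submodule K Q := Submodule.span K (Set.range (π ∘ X))
  have : IsNoetherianRing Q :=
    IsLocalization.isNoetherianRing (idealOfVars σ K).primeCompl Q inferInstance
  have h_vars : IsWeaklyRegular Q ((Finset.univ : Finset σ).toList.map fun i =>
      algebraMap (MvPolynomial σ K) Q (X i)) := by
    have h := (isWeaklyRegular_map_X (k := K) (Finset.nodup_toList Finset.univ)).of_isLocalization Q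
      (idealOfVars σ K).primeCompl
    rwa [List.map_map] at h
  have hV : Ideal.span V = maximalIdeal Q := by
    rw [← Localization.AtPrime.map_eq_maximalIdeal, Ideal.map_span, ← Set.range_comp]
    exact Submodule.span_span_of_tower K _ _
  have : FiniteDimensional K V := .span_of_finite K (Set.finite_range _)
  have hV_finrank : Module.finrank K V ≤ Fintype.card σ := finrank_range_le_card _
  refine not_licci_minors2 h_vars ofList_map_algebraMap_X (by simpa using hσ) hV
    (by simpa using hV_finrank) (hΦ.map _) (fun i j => ?_) h_reg
  have h_mem : Φ i j ∈ homogeneousSubmodule σ K 1 := hΦ_linear i j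
  rw [homogeneousSubmodule_one_eq_span_X] at h_mem
  have hV_eq : V = (Submodule.span K (Set.range X)).map π := by
    rw [Submodule.map_span, ← Set.range_comp]
  exact hV_eq ▸ Submodule.mem_map_of_mem (f := π) h_mem

theorem not_licci_minors2_map_algebraMap {k : Type*} [Field k] (hσ : 3 ≤ Fintype.card σ)
    {Φ : Matrix (Fin 3) (Fin 3) (MvPolynomial σ k)} (hΦ : Φ.IsSymm)
    (hΦ_linear : ∀ i j, (Φ i j).IsHomogeneous 1)
    (h_reg : ∃ x y z : Localization.AtPrime (idealOfVars σ k),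
      x ∈ minors2 (Φ.map (algebraMap _ _)) ∧ y ∈ minors2 (Φ.map (algebraMap _ _)) ∧
      z ∈ minors2 (Φ.map (algebraMap _ _)) ∧
      IsRegular (Localization.AtPrime (idealOfVars σ k)) [x, y, z]) :
    ¬ Licci (minors2 (Φ.map (algebraMap _ (Localization.AtPrime (idealOfVars σ k))))) := by
  intro h_licci
  let f := algebraMap k (AlgebraicClosure k)
  have h_comap := (comap_map_idealOfVars (σ := σ) f.injective).symm
  let ψ := Localization.localRingHom _ _ (MvPolynomial.map f) h_comap
  have hψ : ψ.FaithfullyFlat :=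
    faithfullyFlat_localRingHom (flat_map (RingHom.flat_algebraMap_iff.mpr inferInstance)) h_comap
  have : IsNoetherianRing (Localization.AtPrime (idealOfVars σ k)) :=
    IsLocalization.isNoetherianRing (idealOfVars σ k).primeCompl _ inferInstance
  have : Infinite (AlgebraicClosure k) := IsAlgClosed.instInfinite
  have h_map : (Φ.map (MvPolynomial.map f)).map (algebraMap _ _) =
      (Φ.map (algebraMap _ _)).map ψ := by
    ext i j
    exact (Localization.localRingHom_to_map _ _ _ h_comap (Φ i j)).symm
  refine not_licci_minors2_map_algebraMap_of_infinite hσ (Φ := Φ.map (MvPolynomial.map f))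
    (hΦ.map _) (fun i j => (hΦ_linear i j).map f) ?_ ?_
  · rw [h_map]
    exact exists_isRegular_minors2_map hψ h_reg
  · rw [h_map, minors2_map]
    exact h_licci.map_of_faithfullyFlat hψ

end LocalizedPolynomialRing

/-- **Proposition 2.4 (second case).** Let `k` be a field, `e ≥ 3`, `𝓠 = k[X₁, …, X_e]`,
and `Q` the localization of `𝓠` at the maximal ideal `𝔪 = (X₁, …, X_e)`.  Let `Φ` be a
`3 × 3` symmetric matrix of linear forms in `𝓠` and `𝓘` the ideal of `2 × 2` minors of
`Φ`, and assume `𝓘` contains a `𝓠`-regular sequence of length `3`.  Then the extension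
`I` of `𝓘` to `Q` is a grade `3` perfect ideal of resolution format `(1, 6, 8, 3)` and
`I` is not licci.  (The hypothesis `𝔪.IsPrime` is a consequence of `h𝔪`.) -/
theorem stmt_10 (k : Type*) [Field k] (e : ℕ) (he : 3 ≤ e)
    (𝔪 : Ideal (MvPolynomial (Fin e) k))
    (h𝔪 : 𝔪 = Ideal.span (Set.range MvPolynomial.X)) [𝔪.IsPrime]
    (Φ : Matrix (Fin 3) (Fin 3) (MvPolynomial (Fin e) k))
    (hsymm : Φ.IsSymm)
    (hΦ : ∀ i j, (Φ i j).IsHomogeneous 1)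
    (𝓘 : Ideal (MvPolynomial (Fin e) k)) (h𝓘 : 𝓘 = minors2 Φ)
    (hreg : ∃ x y z : MvPolynomial (Fin e) k, x ∈ 𝓘 ∧ y ∈ 𝓘 ∧ z ∈ 𝓘 ∧
      RingTheory.Sequence.IsRegular (MvPolynomial (Fin e) k) [x, y, z]) :
    IsGrade3PerfectOfFormat
        (𝓘.map (algebraMap (MvPolynomial (Fin e) k) (Localization.AtPrime 𝔪))) 6 3 ∧
      ¬ Licci (𝓘.map (algebraMap (MvPolynomial (Fin e) k) (Localization.AtPrime 𝔪))) := by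
  subst h𝔪 h𝓘
  have h_mem : ∀ i j, Φ i j ∈ MvPolynomial.idealOfVars (Fin e) k :=
    fun i j => mem_idealOfVars_of_isHomogeneous_one (hΦ i j)
  have h_reg := exists_isRegular_minors2_localization h_mem hreg
  rw [← minors2_map]
  refine ⟨isGrade3PerfectOfFormat_minors2 (hsymm.map _) (fun i j => ?_) h_reg,
    not_licci_minors2_map_algebraMap (by simpa using he) hsymm hΦ h_reg⟩
  exact (IsLocalization.AtPrime.to_map_mem_maximal_iff _ _ _).mpr (h_mem i j)
end

section
/- Let k be a field and 𝓠 = k[X, Y, Z] the polynomial ring in three variables, and let 𝓘 = (X², Y², XYZ, XZ², YZ², Z³). Then the colon ideal (X³ − YZ², Y³ − XZ², Z³) : 𝓘 equals the ideal (X³ − YZ², Y³ − XZ², Z³, X²Y², X²YZ, XY²Z, XYZ²). -/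
open MvPolynomial

/-!
Write `J` for the complete intersection, `I` for `𝓘` and `K` for the ideal on the right. Modulo `J`
one has `X⁵Y = XY⁵ = X²Y²Z²`, and the linear functional `φ` adding the coefficients of these three
monomials vanishes on `J`; it is the projection of the Gorenstein ring `𝓠 / J` onto its socle. The
monomials `m` dividing `X²Y²Z²` whose complement `X²Y²Z² / m` lies in `I` span `𝓠` modulo `K`, and
they are dual to their complements under `(f, g) ↦ φ (f g)`. Since `K I ⊆ J`, pairing `f ∈ J : I`
with the complements computes the coefficients of `f` modulo `K`, so these vanish.
-/

theorem colon_eq_of_dual_families {R A ι : Type*} [CommSemiring R] [CommRing A] [Algebra R A]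
    [DecidableEq ι] {I J K : Ideal A} (hKI : K * I ≤ J) (φ : A →ₗ[R] R)
    (hφ : ∀ f ∈ J, φ f = 0) (m d : ι → A) (hd : ∀ i, d i ∈ I)
    (hdual : ∀ i j, φ (m i * d j) = if i = j then 1 else 0)
    (hspan : Submodule.span R (Set.range m) ⊔ K.restrictScalars R = ⊤) :
    Submodule.colon J (I : Set A) = K := by
  refine le_antisymm (fun f hf ↦ ?_) fun f hf ↦
    Submodule.mem_colon.2 fun p hp ↦ hKI (Ideal.mul_mem_mul hf hp)
  obtain ⟨g, hg, h, hh, rfl⟩ := Submodule.mem_sup.1 (hspan.ge (Submodule.mem_top (x := f)))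
  rw [← Finsupp.range_linearCombination] at hg
  obtain ⟨c, rfl⟩ := hg
  have pairing_eq_coeff (j : ι) : φ (Finsupp.linearCombination R m c * d j) = c j := by
    simp [Finsupp.linearCombination_apply, Finsupp.sum, Finset.sum_mul, hdual]
  have hc : c = 0 := by
    ext j
    have hfj : φ ((Finsupp.linearCombination R m c + h) * d j) = 0 :=
      hφ _ (Submodule.mem_colon.1 hf _ (hd j))
    have hhj : φ (h * d j) = 0 := hφ _ (hKI (Ideal.mul_mem_mul hh (hd j)))
    rwa [add_mul, map_add, hhj, add_zero, pairing_eq_coeff] at hfj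
  rw [hc, map_zero, zero_add]
  exact hh

section Trimonomial

variable {A : Type*} [CommSemiring A]

/-- The monomial `x ^ a * y ^ b * z ^ c` with exponent vector `(a, b, c)`. Exponents are triples
so that divisibility of monomials is the product order and multiplication is addition. -/
def trimonomial (x y z : A) (e : ℕ × ℕ × ℕ) : A :=
  x ^ e.1 * y ^ e.2.1 * z ^ e.2.2

variable {x y z : A}

theorem trimonomial_add (e e' : ℕ × ℕ × ℕ) :
    trimonomial x y z (e + e') = trimonomial x y z e * trimonomial x y z e' := by
  simp only [trimonomial, Prod.fst_add, Prod.snd_add]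
  ring

theorem trimonomial_mem_of_le {K : Ideal A} {e e' : ℕ × ℕ × ℕ} (he : trimonomial x y z e ∈ K)
    (hle : e ≤ e') : trimonomial x y z e' ∈ K := by
  obtain ⟨c, rfl⟩ := exists_add_of_le hle
  rw [trimonomial_add]
  exact K.mul_mem_right _ he

end Trimonomial

section Relations

variable {A : Type*} [CommRing A] {x y z : A} {J : Ideal A}

theorem pow_three_mul_mem_of_sub_mem (hx : x ^ 3 - y * z ^ 2 ∈ J) (hz : z ^ 3 ∈ J) :
    x ^ 3 * z ∈ J := by
  have key : x ^ 3 * z = z * (x ^ 3 - y * z ^ 2) + y * z ^ 3 := by ring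
  rw [key]
  exact J.add_mem (J.mul_mem_left _ hx) (J.mul_mem_left _ hz)

theorem pow_three_mul_sq_mem_of_sub_mem (hx : x ^ 3 - y * z ^ 2 ∈ J) (hy : y ^ 3 - x * z ^ 2 ∈ J)
    (hz : z ^ 3 ∈ J) : x ^ 3 * y ^ 2 ∈ J := by
  have key : x ^ 3 * y ^ 2 =
      y ^ 2 * (x ^ 3 - y * z ^ 2) + z ^ 2 * (y ^ 3 - x * z ^ 2) + x * z * z ^ 3 := by ring
  rw [key]
  exact J.add_mem (J.add_mem (J.mul_mem_left _ hx) (J.mul_mem_left _ hy)) (J.mul_mem_left _ hz)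

theorem pow_four_mem_of_sub_mem (hx : x ^ 3 - y * z ^ 2 ∈ J) (hxyz : x * y * z ^ 2 ∈ J) :
    x ^ 4 ∈ J := by
  have key : x ^ 4 = x * (x ^ 3 - y * z ^ 2) + x * y * z ^ 2 := by ring
  rw [key]
  exact J.add_mem (J.mul_mem_left _ hx) hxyz

end Relations

/-- The exponents of the generators of `𝓘 = (X², Y², XYZ, XZ², YZ², Z³)`. -/
def idealExponents : Finset (ℕ × ℕ × ℕ) :=
  {(2, 0, 0), (0, 2, 0), (1, 1, 1), (1, 0, 2), (0, 1, 2), (0, 0, 3)}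

/-- The exponents of the monomials `X²Y²`, `X²YZ`, `XY²Z`, `XYZ²` that generate the link
together with the complete intersection. -/
def linkExponents : Finset (ℕ × ℕ × ℕ) :=
  {(2, 2, 0), (2, 1, 1), (1, 2, 1), (1, 1, 2)}

/-- Exponents of monomials in `(X³ − YZ², Y³ − XZ², Z³)`, enough for each product of a monomial
from `linkExponents` and one from `idealExponents` to be divisible by one of them. -/
def vanishingExponents : Finset (ℕ × ℕ × ℕ) :=
  {(0, 0, 3), (3, 0, 1), (0, 3, 1), (3, 2, 0), (2, 3, 0)}

/-- Exponents of monomials in the link, enough for every monomial to be divisible by one of them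
unless it is standard or one of the four monomials `X³`, `X³Y`, `Y³`, `XY³`. -/
def linkVanishingExponents : Finset (ℕ × ℕ × ℕ) :=
  linkExponents ∪ {(0, 0, 3), (3, 0, 1), (0, 3, 1), (4, 0, 0), (0, 4, 0)}

/-- The exponents of the monomials which the relations `X³ = YZ²`, `Y³ = XZ²` identify with
`X²Y²Z²`, the generator of the socle modulo the complete intersection. -/
def socleExponents : Finset (ℕ × ℕ × ℕ) :=
  {(2, 2, 2), (5, 1, 0), (1, 5, 0)}

/-- The exponents of the divisors of `X²Y²Z²` whose complementary divisor is divisible by a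
generator of `𝓘`. They index an `R`-basis of the polynomial ring modulo the link. -/
def standardExponents : Finset (ℕ × ℕ × ℕ) :=
  {e ∈ Finset.Iic (2, 2, 2) | ∃ g ∈ idealExponents, g ≤ (2, 2, 2) - e}

section Ideals

variable {A : Type*} [CommRing A] (x y z : A)

/-- The ideal `(x³ − yz², y³ − xz², z³)`, through which the link is formed. -/
def completeIntersection : Ideal A :=
  Ideal.span {x ^ 3 - y * z ^ 2, y ^ 3 - x * z ^ 2, z ^ 3}

/-- The ideal `𝓘` for elements `x`, `y`, `z` of any commutative ring. -/
def monomialIdeal : Ideal A :=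
  Ideal.span {x ^ 2, y ^ 2, x * y * z, x * z ^ 2, y * z ^ 2, z ^ 3}

/-- The ideal claimed to be the link `completeIntersection x y z : monomialIdeal x y z`. -/
def linkIdeal : Ideal A :=
  Ideal.span {x ^ 3 - y * z ^ 2, y ^ 3 - x * z ^ 2, z ^ 3,
    x ^ 2 * y ^ 2, x ^ 2 * y * z, x * y ^ 2 * z, x * y * z ^ 2}

theorem monomialIdeal_eq_span_trimonomial :
    monomialIdeal x y z = Ideal.span (trimonomial x y z '' idealExponents) := by
  simp [monomialIdeal, idealExponents, trimonomial, Set.image_insert_eq]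

theorem linkIdeal_eq_sup_span_trimonomial :
    linkIdeal x y z =
      completeIntersection x y z ⊔ Ideal.span (trimonomial x y z '' linkExponents) := by
  simp [linkIdeal, completeIntersection, linkExponents, trimonomial, Set.image_insert_eq,
    ← Ideal.span_union, -Set.union_insert, Set.insert_union]

theorem completeIntersection_le_linkIdeal : completeIntersection x y z ≤ linkIdeal x y z :=
  linkIdeal_eq_sup_span_trimonomial x y z ▸ le_sup_left

variable {x y z}

theorem trimonomial_mem_monomialIdeal {g e : ℕ × ℕ × ℕ} (hg : g ∈ idealExponents)
    (hge : g ≤ e) : trimonomial x y z e ∈ monomialIdeal x y z := by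
  rw [monomialIdeal_eq_span_trimonomial]
  exact trimonomial_mem_of_le (Ideal.subset_span (Set.mem_image_of_mem _ hg)) hge

theorem trimonomial_mem_completeIntersection {g e : ℕ × ℕ × ℕ} (hg : g ∈ vanishingExponents)
    (hge : g ≤ e) : trimonomial x y z e ∈ completeIntersection x y z := by
  have hx : x ^ 3 - y * z ^ 2 ∈ completeIntersection x y z := Ideal.subset_span (by simp)
  have hy : y ^ 3 - x * z ^ 2 ∈ completeIntersection x y z := Ideal.subset_span (by simp)
  have hz : z ^ 3 ∈ completeIntersection x y z := Ideal.subset_span (by simp)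
  refine trimonomial_mem_of_le ?_ hge
  simp only [vanishingExponents, Finset.mem_insert, Finset.mem_singleton] at hg
  rcases hg with rfl | rfl | rfl | rfl | rfl
  · simpa [trimonomial] using hz
  · simpa [trimonomial] using pow_three_mul_mem_of_sub_mem hx hz
  · simpa [trimonomial] using pow_three_mul_mem_of_sub_mem hy hz
  · simpa [trimonomial] using pow_three_mul_sq_mem_of_sub_mem hx hy hz
  · simpa [trimonomial, mul_comm] using pow_three_mul_sq_mem_of_sub_mem hy hx hz

theorem trimonomial_mem_linkIdeal {g e : ℕ × ℕ × ℕ} (hg : g ∈ linkVanishingExponents)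
    (hge : g ≤ e) : trimonomial x y z e ∈ linkIdeal x y z := by
  have hx : x ^ 3 - y * z ^ 2 ∈ linkIdeal x y z := Ideal.subset_span (by simp)
  have hy : y ^ 3 - x * z ^ 2 ∈ linkIdeal x y z := Ideal.subset_span (by simp)
  have hxyz : x * y * z ^ 2 ∈ linkIdeal x y z := Ideal.subset_span (by simp)
  have of_completeIntersection {e : ℕ × ℕ × ℕ} (he : e ∈ vanishingExponents) :
      trimonomial x y z e ∈ linkIdeal x y z :=
    completeIntersection_le_linkIdeal x y z (trimonomial_mem_completeIntersection he le_rfl)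
  refine trimonomial_mem_of_le ?_ hge
  rcases Finset.mem_union.1 hg with hg | hg
  · rw [linkIdeal_eq_sup_span_trimonomial]
    exact Ideal.mem_sup_right (Ideal.subset_span (Set.mem_image_of_mem _ hg))
  simp only [Finset.mem_insert, Finset.mem_singleton] at hg
  rcases hg with rfl | rfl | rfl | rfl | rfl
  · exact of_completeIntersection (by decide)
  · exact of_completeIntersection (by decide)
  · exact of_completeIntersection (by decide)
  · simpa [trimonomial] using pow_four_mem_of_sub_mem hx hxyz
  · simpa [trimonomial] using pow_four_mem_of_sub_mem hy (mul_comm x y ▸ hxyz)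

theorem linkIdeal_mul_monomialIdeal_le :
    linkIdeal x y z * monomialIdeal x y z ≤ completeIntersection x y z := by
  have exists_le_add : ∀ e ∈ linkExponents, ∀ e' ∈ idealExponents,
      ∃ g ∈ vanishingExponents, g ≤ e + e' := by decide
  rw [linkIdeal_eq_sup_span_trimonomial, Ideal.sup_mul, sup_le_iff]
  refine ⟨Ideal.mul_le_left, ?_⟩
  rw [monomialIdeal_eq_span_trimonomial, Ideal.span_mul_span', Ideal.span_le]
  rintro _ ⟨_, ⟨e, he, rfl⟩, _, ⟨e', he', rfl⟩, rfl⟩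
  obtain ⟨g, hg, hle⟩ := exists_le_add e he e' he'
  change trimonomial x y z e * trimonomial x y z e' ∈ completeIntersection x y z
  rw [← trimonomial_add]
  exact trimonomial_mem_completeIntersection hg hle

end Ideals

section Spanning

theorem standard_or_linkVanishing_or_cubic (e : ℕ × ℕ × ℕ) :
    e ∈ standardExponents ∨ (∃ g ∈ linkVanishingExponents, g ≤ e) ∨
      ∃ n ≤ 1, e = (3, n, 0) ∨ e = (n, 3, 0) := by
  obtain ⟨a, b, c⟩ := e
  by_cases hbox : a ≤ 3 ∧ b ≤ 3 ∧ c ≤ 2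
  · obtain ⟨ha, hb, hc⟩ := hbox
    interval_cases a <;> interval_cases b <;> interval_cases c <;> decide
  · have houtside : 4 ≤ a ∨ 4 ≤ b ∨ 3 ≤ c := by omega
    right; left
    rcases houtside with ha | hb | hc
    · exact ⟨(4, 0, 0), by decide, by simpa⟩
    · exact ⟨(0, 4, 0), by decide, by simpa⟩
    · exact ⟨(0, 0, 3), by decide, by simpa⟩

variable (R : Type*) [CommSemiring R]

/-- The `R`-span of the standard monomials in `x`, `y`, `z`. -/
def standardSpan {A : Type*} [CommRing A] [Algebra R A] (x y z : A) : Submodule R A :=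
  Submodule.span R (Set.range fun s : standardExponents ↦ trimonomial x y z s)

theorem trimonomial_mem_standardSpan_sup_linkIdeal {A : Type*} [CommRing A] [Algebra R A]
    (x y z : A) (e : ℕ × ℕ × ℕ) :
    trimonomial x y z e ∈ standardSpan R x y z ⊔ (linkIdeal x y z).restrictScalars R := by
  have of_sub_mem {e s : ℕ × ℕ × ℕ} (hs : s ∈ standardExponents)
      (hes : trimonomial x y z e - trimonomial x y z s ∈ linkIdeal x y z) :
      trimonomial x y z e ∈ standardSpan R x y z ⊔ (linkIdeal x y z).restrictScalars R :=
    Submodule.mem_sup.2 ⟨_, Submodule.subset_span ⟨⟨s, hs⟩, rfl⟩, _, hes, add_sub_cancel _ _⟩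
  have hx : x ^ 3 - y * z ^ 2 ∈ linkIdeal x y z := Ideal.subset_span (by simp)
  have hy : y ^ 3 - x * z ^ 2 ∈ linkIdeal x y z := Ideal.subset_span (by simp)
  rcases standard_or_linkVanishing_or_cubic e with hstd | ⟨g, hg, hge⟩ | ⟨n, hn, rfl | rfl⟩
  · exact Submodule.mem_sup_left (Submodule.subset_span ⟨⟨e, hstd⟩, rfl⟩)
  · exact Submodule.mem_sup_right (trimonomial_mem_linkIdeal hg hge)
  · refine of_sub_mem (s := (0, n + 1, 2)) (by interval_cases n <;> decide) ?_
    convert Ideal.mul_mem_left _ (y ^ n) hx using 1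
    simp only [trimonomial]
    ring
  · refine of_sub_mem (s := (n + 1, 0, 2)) (by interval_cases n <;> decide) ?_
    convert Ideal.mul_mem_left _ (x ^ n) hy using 1
    simp only [trimonomial]
    ring

theorem trimonomial_X_eq_monomial (e : ℕ × ℕ × ℕ) :
    trimonomial (X 0 : MvPolynomial (Fin 3) R) (X 1) (X 2) e =
      monomial (Finsupp.equivFunOnFinite.symm ![e.1, e.2.1, e.2.2]) 1 := by
  rw [monomial_eq, Finsupp.prod_fintype _ _ (by simp), Fin.prod_univ_three]
  simp [trimonomial]

theorem span_range_trimonomial_X :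
    Submodule.span R (Set.range (trimonomial (X 0 : MvPolynomial (Fin 3) R) (X 1) (X 2))) = ⊤ := by
  rw [eq_top_iff, ← (basisMonomials (Fin 3) R).span_eq]
  refine Submodule.span_mono ?_
  rintro _ ⟨e, rfl⟩
  refine ⟨(e 0, e 1, e 2), ?_⟩
  rw [trimonomial_X_eq_monomial, coe_basisMonomials]
  congr 2
  ext i
  fin_cases i <;> rfl

theorem standardSpan_X_sup_linkIdeal_X (R : Type*) [CommRing R] :
    standardSpan R (X 0 : MvPolynomial (Fin 3) R) (X 1) (X 2) ⊔
      (linkIdeal (X 0) (X 1) (X 2)).restrictScalars R = ⊤ := by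
  rw [eq_top_iff, ← span_range_trimonomial_X, Submodule.span_le]
  rintro _ ⟨e, rfl⟩
  exact trimonomial_mem_standardSpan_sup_linkIdeal R _ _ _ e

end Spanning

section SocleFunctional

variable (R : Type*) [CommSemiring R]

/-- The functional on `R[X, Y, Z]` adding the coefficients of `X²Y²Z²`, `X⁵Y` and `XY⁵`. It
represents the projection of `R[X, Y, Z] / (X³ − YZ², Y³ − XZ², Z³)` onto its socle. -/
noncomputable def socleFunctional : MvPolynomial (Fin 3) R →ₗ[R] R :=
  (basisMonomials (Fin 3) R).constr R fun e ↦
    if (e 0, e 1, e 2) ∈ socleExponents then 1 else 0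

theorem socleFunctional_trimonomial (e : ℕ × ℕ × ℕ) :
    socleFunctional R (trimonomial (X 0) (X 1) (X 2) e) =
      if e ∈ socleExponents then 1 else 0 := by
  rw [trimonomial_X_eq_monomial]
  exact (basisMonomials (Fin 3) R).constr_basis R _ _

variable {R}

theorem socleFunctional_mul_eq_zero {p : MvPolynomial (Fin 3) R}
    (hp : ∀ e, socleFunctional R (trimonomial (X 0) (X 1) (X 2) e * p) = 0)
    (f : MvPolynomial (Fin 3) R) : socleFunctional R (f * p) = 0 := by
  have comp_eq_zero : socleFunctional R ∘ₗ LinearMap.mulRight R p = 0 :=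
    LinearMap.ext_on_range (span_range_trimonomial_X R) hp
  exact LinearMap.congr_fun comp_eq_zero f

theorem socleFunctional_mul_trimonomial {s : ℕ × ℕ × ℕ} (hs : ∀ e, e + s ∉ socleExponents)
    (f : MvPolynomial (Fin 3) R) :
    socleFunctional R (f * trimonomial (X 0) (X 1) (X 2) s) = 0 := by
  refine socleFunctional_mul_eq_zero (fun e ↦ ?_) f
  rw [← trimonomial_add, socleFunctional_trimonomial, if_neg (hs e)]

theorem socleFunctional_standard_mul_complement (s t : standardExponents) :
    socleFunctional R (trimonomial (X 0) (X 1) (X 2) s *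
        trimonomial (X 0) (X 1) (X 2) ((2, 2, 2) - t.1)) =
      if s = t then 1 else 0 := by
  have mem_iff : ∀ s t : standardExponents,
      s.1 + ((2, 2, 2) - t.1) ∈ socleExponents ↔ s = t := by
    decide
  rw [← trimonomial_add, socleFunctional_trimonomial]
  simp only [mem_iff]

theorem socleFunctional_mul_trimonomial_sub {R : Type*} [CommRing R] {s t : ℕ × ℕ × ℕ}
    (hst : ∀ e, e + s ∈ socleExponents ↔ e + t ∈ socleExponents) (f : MvPolynomial (Fin 3) R) :
    socleFunctional R
      (f * (trimonomial (X 0) (X 1) (X 2) s - trimonomial (X 0) (X 1) (X 2) t)) = 0 := by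
  refine socleFunctional_mul_eq_zero (fun e ↦ ?_) f
  simp only [mul_sub, ← trimonomial_add, map_sub, socleFunctional_trimonomial, hst, sub_self]

theorem socleFunctional_eq_zero_of_mem {R : Type*} [CommRing R] {f : MvPolynomial (Fin 3) R}
    (hf : f ∈ completeIntersection (X 0) (X 1) (X 2)) : socleFunctional R f = 0 := by
  simp only [completeIntersection, Ideal.mem_span_insert, Ideal.mem_span_singleton'] at hf
  obtain ⟨a, _, ⟨b, _, ⟨c, rfl⟩, rfl⟩, rfl⟩ := hf
  have ha := socleFunctional_mul_trimonomial_sub (s := (3, 0, 0)) (t := (0, 1, 2))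
    (by simp [socleExponents]) a
  have hb := socleFunctional_mul_trimonomial_sub (s := (0, 3, 0)) (t := (1, 0, 2))
    (by simp [socleExponents]) b
  have hc := socleFunctional_mul_trimonomial (s := (0, 0, 3))
    (by simp [socleExponents]) c
  simp only [trimonomial, pow_zero, pow_one, one_mul, mul_one] at ha hb hc
  rw [map_add, map_add, ha, hb, hc, add_zero, add_zero]

end SocleFunctional

theorem stmt_13_general (R : Type*) [CommRing R] :
    Submodule.colon (completeIntersection (X 0 : MvPolynomial (Fin 3) R) (X 1) (X 2))
        (monomialIdeal (X 0 : MvPolynomial (Fin 3) R) (X 1) (X 2)) =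
      linkIdeal (X 0) (X 1) (X 2) := by
  refine colon_eq_of_dual_families linkIdeal_mul_monomialIdeal_le (socleFunctional R)
    (fun f hf ↦ socleFunctional_eq_zero_of_mem hf)
    (fun s : standardExponents ↦ trimonomial (X 0) (X 1) (X 2) s)
    (fun s : standardExponents ↦ trimonomial (X 0) (X 1) (X 2) ((2, 2, 2) - s.1))
    (fun s ↦ ?_) socleFunctional_standard_mul_complement (standardSpan_X_sup_linkIdeal_X R)
  obtain ⟨g, hg, hge⟩ := (Finset.mem_filter.1 s.2).2
  exact trimonomial_mem_monomialIdeal hg hge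

/-- **Example 2.5 (second link).** Let `k` be a field, `𝓠 = k[X, Y, Z]`, and
`𝓘 = (X², Y², XYZ, XZ², YZ², Z³)`.  Then
`(X³ − YZ², Y³ − XZ², Z³) : 𝓘 = (X³ − YZ², Y³ − XZ², Z³, X²Y², X²YZ, XY²Z, XYZ²)`.
Here `X = X 0`, `Y = X 1`, `Z = X 2` in `MvPolynomial (Fin 3) k`. -/
theorem stmt_13 (k : Type*) [Field k]
    (𝓘 : Ideal (MvPolynomial (Fin 3) k))
    (h𝓘 : 𝓘 = Ideal.span {(X 0 : MvPolynomial (Fin 3) k) ^ 2, X 1 ^ 2,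
      X 0 * X 1 * X 2, X 0 * X 2 ^ 2, X 1 * X 2 ^ 2, X 2 ^ 3}) :
    Submodule.colon
        (Ideal.span {(X 0 : MvPolynomial (Fin 3) k) ^ 3 - X 1 * X 2 ^ 2,
          X 1 ^ 3 - X 0 * X 2 ^ 2, X 2 ^ 3}) 𝓘 =
      Ideal.span {(X 0 : MvPolynomial (Fin 3) k) ^ 3 - X 1 * X 2 ^ 2,
        X 1 ^ 3 - X 0 * X 2 ^ 2, X 2 ^ 3,
        X 0 ^ 2 * X 1 ^ 2, X 0 ^ 2 * X 1 * X 2, X 0 * X 1 ^ 2 * X 2,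
        X 0 * X 1 * X 2 ^ 2} := by
  subst h𝓘
  exact stmt_13_general k
end

section
/- Let k be a field and 𝓠 = k[X, Y, Z] the polynomial ring in three variables, and let 𝓘 = (X³, X²Y + YZ², X²Z + XYZ, XY² + XYZ, XZ², Y³, Y²Z, Z³). Then the colon ideal (X³, Y³, Z³) : 𝓘 equals the ideal (X³, X²Y − YZ², XYZ − XZ² − Y²Z, Y³, Z³). -/
open MvPolynomial

/-!
Write `K = (X³, Y³, Z³)`. If `f ∈ K : 𝓘` and `g ∈ 𝓘`, then `f * g ∈ K` has no `X²Y²Z²` term. For a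
monomial `g` this kills the complementary coefficient of `f`; for a sum of two monomials it makes
two coefficients of `f` opposite. What remains is that, up to monomials that are divisible by a cube
or have degree at least four, `f` is a combination of `X²Y - YZ²` and `XYZ - XZ² - Y²Z`. Those
monomials all lie in the right-hand ideal.
-/

section Colon

variable {σ R : Type*} [CommSemiring R] {u s s' t t' : σ →₀ ℕ} {f : MvPolynomial σ R}
  {S : Set (MvPolynomial σ R)}

theorem coeff_eq_zero_of_mem_span_X_pow
    (hf : f ∈ Ideal.span (Set.range fun i => X i ^ (u i + 1))) (hs : s ≤ u) : coeff s f = 0 := by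
  have range_eq : Set.range (fun i => (X i : MvPolynomial σ R) ^ (u i + 1)) =
      (fun m => monomial m 1) '' Set.range fun i => Finsupp.single i (u i + 1) := by
    simp only [← Set.range_comp, Function.comp_def, X_pow_eq_monomial]
  rw [range_eq, mem_ideal_span_monomial_image] at hf
  by_contra hne
  obtain ⟨_, ⟨i, rfl⟩, hi⟩ := hf s (mem_support_iff.2 hne)
  have := (Finsupp.single_le_iff.1 hi).trans (hs i)
  lia

theorem coeff_eq_zero_of_mem_colon
    (hf : f ∈ (Ideal.span (Set.range fun i => X i ^ (u i + 1))).colon S)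
    (ht : monomial t 1 ∈ S) (hst : s + t ≤ u) : coeff s f = 0 := by
  simpa only [smul_eq_mul, coeff_mul_monomial, mul_one] using
    coeff_eq_zero_of_mem_span_X_pow (Submodule.mem_colon.1 hf _ ht) hst

theorem coeff_add_coeff_eq_zero_of_mem_colon
    (hf : f ∈ (Ideal.span (Set.range fun i => X i ^ (u i + 1))).colon S)
    (ht : monomial t 1 + monomial t' 1 ∈ S) (hst : s + t ≤ u) (hst' : s + t = s' + t') :
    coeff s f + coeff s' f = 0 := by
  have h := coeff_eq_zero_of_mem_span_X_pow (Submodule.mem_colon.1 hf _ ht) hst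
  rw [smul_eq_mul, mul_add, coeff_add, coeff_mul_monomial, hst', coeff_mul_monomial] at h
  simpa only [mul_one] using h

end Colon

section Exponent

/-- The exponent vector of `X ^ a * Y ^ b * Z ^ c`. -/
noncomputable def exponent (a b c : ℕ) : Fin 3 →₀ ℕ :=
  Finsupp.equivFunOnFinite.symm ![a, b, c]

variable {a b c a' b' c' : ℕ}

theorem exponent_le_exponent : exponent a b c ≤ exponent a' b' c' ↔ a ≤ a' ∧ b ≤ b' ∧ c ≤ c' := by
  simp [exponent, Finsupp.le_def, Fin.forall_fin_succ]

theorem exponent_inj : exponent a b c = exponent a' b' c' ↔ a = a' ∧ b = b' ∧ c = c' := by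
  simp [exponent]

theorem exponent_add :
    exponent a b c + exponent a' b' c' = exponent (a + a') (b + b') (c + c') := by
  ext i
  fin_cases i <;> rfl

theorem exists_eq_exponent (s : Fin 3 →₀ ℕ) : ∃ a b c, s = exponent a b c := by
  refine ⟨s 0, s 1, s 2, ?_⟩
  ext i
  fin_cases i <;> rfl

theorem monomial_exponent {R : Type*} [CommSemiring R] :
    monomial (exponent a b c) (1 : R) = X 0 ^ a * X 1 ^ b * X 2 ^ c := by
  simp [monomial_eq, Finsupp.prod_fintype, Fin.prod_univ_three, exponent]

end Exponent

section Ideals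

variable (R : Type*) [CommRing R]

/-- The complete intersection `(X³, Y³, Z³)`. -/
noncomputable def cubeIdeal : Ideal (MvPolynomial (Fin 3) R) :=
  Ideal.span {X 0 ^ 3, X 1 ^ 3, X 2 ^ 3}

/-- The ideal `𝓘` of the example. -/
noncomputable def exampleIdeal : Ideal (MvPolynomial (Fin 3) R) :=
  Ideal.span {X 0 ^ 3, X 0 ^ 2 * X 1 + X 1 * X 2 ^ 2, X 0 ^ 2 * X 2 + X 0 * X 1 * X 2,
    X 0 * X 1 ^ 2 + X 0 * X 1 * X 2, X 0 * X 2 ^ 2, X 1 ^ 3, X 1 ^ 2 * X 2, X 2 ^ 3}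

/-- The generator `X²Y - YZ²` of the linked ideal. -/
noncomputable def linkBinomial : MvPolynomial (Fin 3) R :=
  X 0 ^ 2 * X 1 - X 1 * X 2 ^ 2

/-- The generator `XYZ - XZ² - Y²Z` of the linked ideal. -/
noncomputable def linkTrinomial : MvPolynomial (Fin 3) R :=
  X 0 * X 1 * X 2 - X 0 * X 2 ^ 2 - X 1 ^ 2 * X 2

/-- The ideal `(X³, X²Y - YZ², XYZ - XZ² - Y²Z, Y³, Z³)`, linked to `𝓘` by `(X³, Y³, Z³)`. -/
noncomputable def linkedIdeal : Ideal (MvPolynomial (Fin 3) R) :=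
  Ideal.span {X 0 ^ 3, linkBinomial R, linkTrinomial R, X 1 ^ 3, X 2 ^ 3}

theorem cubeIdeal_eq_span_X_pow :
    cubeIdeal R = Ideal.span (Set.range fun i => X i ^ (exponent 2 2 2 i + 1)) := by
  have range_eq : Set.range (fun i => (X i : MvPolynomial (Fin 3) R) ^ (exponent 2 2 2 i + 1)) =
      {X 0 ^ 3, X 1 ^ 3, X 2 ^ 3} := by
    ext p
    simp [Fin.exists_fin_succ, exponent, eq_comm]
  rw [cubeIdeal, range_eq]

end Ideals

section LinkedIdealLe

variable {R : Type*} [CommRing R]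

theorem mem_cubeIdeal_iff {p : MvPolynomial (Fin 3) R} :
    p ∈ cubeIdeal R ↔ ∃ a b c, a * X 0 ^ 3 + b * X 1 ^ 3 + c * X 2 ^ 3 = p :=
  Submodule.mem_span_triple

theorem X_pow_three_mem_cubeIdeal (i : Fin 3) : (X i : MvPolynomial (Fin 3) R) ^ 3 ∈ cubeIdeal R :=
  Ideal.subset_span (by fin_cases i <;> simp)

theorem mem_colon_exampleIdeal {p : MvPolynomial (Fin 3) R}
    (h₁ : p * (X 0 ^ 2 * X 1 + X 1 * X 2 ^ 2) ∈ cubeIdeal R)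
    (h₂ : p * (X 0 ^ 2 * X 2 + X 0 * X 1 * X 2) ∈ cubeIdeal R)
    (h₃ : p * (X 0 * X 1 ^ 2 + X 0 * X 1 * X 2) ∈ cubeIdeal R)
    (h₄ : p * (X 0 * X 2 ^ 2) ∈ cubeIdeal R) (h₅ : p * (X 1 ^ 2 * X 2) ∈ cubeIdeal R) :
    p ∈ (cubeIdeal R).colon (exampleIdeal R) := by
  have cube (i : Fin 3) : p * X i ^ 3 ∈ cubeIdeal R :=
    Ideal.mul_mem_left _ _ (X_pow_three_mem_cubeIdeal i)
  rw [exampleIdeal, Ideal.colon_span, Submodule.mem_colon]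
  rintro _ (rfl | rfl | rfl | rfl | rfl | rfl | rfl | rfl)
  exacts [cube 0, h₁, h₂, h₃, h₄, cube 1, h₅, cube 2]

theorem linkBinomial_mem_colon :
    linkBinomial R ∈ (cubeIdeal R).colon (exampleIdeal R) := by
  unfold linkBinomial
  apply mem_colon_exampleIdeal <;> rw [mem_cubeIdeal_iff]
  · exact ⟨X 0 * X 1 ^ 2, 0, -(X 1 ^ 2 * X 2), by ring⟩
  · exact ⟨X 0 * X 1 * X 2 + X 1 ^ 2 * X 2, 0, -(X 0 ^ 2 * X 1 + X 0 * X 1 ^ 2), by ring⟩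
  · exact ⟨X 1 ^ 3 + X 1 ^ 2 * X 2, -(X 0 * X 2 ^ 2), -(X 0 * X 1 ^ 2), by ring⟩
  · exact ⟨X 1 * X 2 ^ 2, 0, -(X 0 * X 1 * X 2), by ring⟩
  · exact ⟨0, X 0 ^ 2 * X 2 - X 2 ^ 3, 0, by ring⟩

theorem linkTrinomial_mem_colon :
    linkTrinomial R ∈ (cubeIdeal R).colon (exampleIdeal R) := by
  unfold linkTrinomial
  apply mem_colon_exampleIdeal <;> rw [mem_cubeIdeal_iff]
  · exact ⟨X 1 ^ 2 * X 2 - X 1 * X 2 ^ 2, -(X 0 ^ 2 * X 2 + X 2 ^ 3),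
      X 0 * X 1 ^ 2 - X 0 * X 1 * X 2, by ring⟩
  · exact ⟨X 1 * X 2 ^ 2 - X 2 ^ 3, -(X 0 * X 2 ^ 2), -(X 0 ^ 2 * X 1), by ring⟩
  · exact ⟨0, X 0 ^ 2 * X 2 - X 0 * X 1 * X 2 - X 0 * X 2 ^ 2, -(X 0 ^ 2 * X 1), by ring⟩
  · exact ⟨0, 0, X 0 ^ 2 * X 1 - X 0 ^ 2 * X 2 - X 0 * X 1 ^ 2, by ring⟩
  · exact ⟨0, X 0 * X 2 ^ 2 - X 1 * X 2 ^ 2, -(X 0 * X 1 ^ 2), by ring⟩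

theorem linkedIdeal_le_colon : linkedIdeal R ≤ (cubeIdeal R).colon (exampleIdeal R) := by
  have cube (i : Fin 3) : X i ^ 3 ∈ (cubeIdeal R).colon (exampleIdeal R) :=
    Ideal.le_colon (X_pow_three_mem_cubeIdeal i)
  rw [linkedIdeal, Ideal.span_le]
  rintro _ (rfl | rfl | rfl | rfl | rfl)
  exacts [cube 0, linkBinomial_mem_colon, linkTrinomial_mem_colon, cube 1, cube 2]

end LinkedIdealLe

section ColonLe

variable {R : Type*} [CommRing R]

theorem linkBinomial_mem_linkedIdeal : linkBinomial R ∈ linkedIdeal R :=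
  Ideal.subset_span (by simp)

theorem linkTrinomial_mem_linkedIdeal : linkTrinomial R ∈ linkedIdeal R :=
  Ideal.subset_span (by simp)

/-- The exponents of the cubes `X³`, `Y³`, `Z³` and of the monomials of degree four not divisible by
a cube: they generate the monomial part of `linkedIdeal`. -/
def linkedExponents : Set (Fin 3 →₀ ℕ) :=
  {exponent 3 0 0, exponent 0 3 0, exponent 0 0 3, exponent 2 2 0, exponent 2 0 2,
    exponent 0 2 2, exponent 2 1 1, exponent 1 2 1, exponent 1 1 2}

theorem quartic_monomials_mem {A : Type*} [CommRing A] {J : Ideal A} {x y z : A}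
    (hx : x ^ 3 ∈ J) (hy : y ^ 3 ∈ J) (hz : z ^ 3 ∈ J)
    (hbinomial : x ^ 2 * y - y * z ^ 2 ∈ J) (htrinomial : x * y * z - x * z ^ 2 - y ^ 2 * z ∈ J) :
    x ^ 2 * y ^ 2 ∈ J ∧ x ^ 2 * z ^ 2 ∈ J ∧ y ^ 2 * z ^ 2 ∈ J ∧
      x ^ 2 * y * z ∈ J ∧ x * y ^ 2 * z ∈ J ∧ x * y * z ^ 2 ∈ J := by
  simp only [← Ideal.Quotient.eq_zero_iff_mem, map_sub, map_mul, map_pow] at *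
  generalize Ideal.Quotient.mk J x = x, Ideal.Quotient.mk J y = y, Ideal.Quotient.mk J z = z at *
  have hxyzz : x * y * z ^ 2 = 0 := by
    linear_combination y * hx - x * hbinomial
  have hyyzz : y ^ 2 * z ^ 2 = 0 := by
    linear_combination hxyzz - x * hz - z * htrinomial
  have hxxyy : x ^ 2 * y ^ 2 = 0 := by
    linear_combination y * hbinomial + hyyzz
  have hxxyz : x ^ 2 * y * z = 0 := by
    linear_combination z * hbinomial + y * hz
  have hxyyz : x * y ^ 2 * z = 0 := by
    linear_combination y * htrinomial + hxyzz + z * hy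
  have hxxzz : x ^ 2 * z ^ 2 = 0 := by
    linear_combination hxxyz - hxyyz - x * htrinomial
  exact ⟨hxxyy, hxxzz, hyyzz, hxxyz, hxyyz, hxyzz⟩

theorem span_monomial_linkedExponents_le :
    Ideal.span ((fun s => monomial s 1) '' linkedExponents) ≤ linkedIdeal R := by
  have cube (i : Fin 3) : X i ^ 3 ∈ linkedIdeal R :=
    Ideal.subset_span (by fin_cases i <;> simp)
  obtain ⟨h220, h202, h022, h211, h121, h112⟩ := quartic_monomials_mem (cube 0) (cube 1) (cube 2)
    linkBinomial_mem_linkedIdeal linkTrinomial_mem_linkedIdeal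
  rw [Ideal.span_le, Set.image_subset_iff]
  rintro _ (rfl | rfl | rfl | rfl | rfl | rfl | rfl | rfl | rfl) <;>
    simp only [Set.mem_preimage, SetLike.mem_coe, monomial_exponent, pow_zero, pow_one, one_mul,
      mul_one]
  exacts [cube 0, cube 1, cube 2, h220, h202, h022, h211, h121, h112]

theorem monomial_mem_exampleIdeal :
    monomial (exponent 1 0 2) 1 ∈ exampleIdeal R ∧ monomial (exponent 0 2 1) 1 ∈ exampleIdeal R ∧
      monomial (exponent 2 1 1) 1 ∈ exampleIdeal R ∧
      monomial (exponent 2 2 0) 1 ∈ exampleIdeal R := by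
  simp only [monomial_exponent, pow_zero, pow_one, one_mul, mul_one]
  have xzz : X 0 * X 2 ^ 2 ∈ exampleIdeal R := Ideal.subset_span (by simp)
  have yyz : X 1 ^ 2 * X 2 ∈ exampleIdeal R := Ideal.subset_span (by simp)
  have xxz_add : X 0 ^ 2 * X 2 + X 0 * X 1 * X 2 ∈ exampleIdeal R := Ideal.subset_span (by simp)
  have xyy_add : X 0 * X 1 ^ 2 + X 0 * X 1 * X 2 ∈ exampleIdeal R := Ideal.subset_span (by simp)
  have xxyz : X 0 ^ 2 * X 1 * X 2 ∈ exampleIdeal R := by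
    convert sub_mem (Ideal.mul_mem_left _ (X 1) xxz_add) (Ideal.mul_mem_left _ (X 0) yyz) using 1
    ring
  have xxyy : X 0 ^ 2 * X 1 ^ 2 ∈ exampleIdeal R := by
    convert sub_mem (Ideal.mul_mem_left _ (X 0) xyy_add) xxyz using 1
    ring
  exact ⟨xzz, yyz, xxyz, xxyy⟩

/-- The four upper bounds in the second alternative are complementary in `X²Y²Z²` to the monomials
`XZ²`, `Y²Z`, `X²YZ` and `X²Y²` of `𝓘`. -/
theorem exponent_trichotomy (s : Fin 3 →₀ ℕ) :
    (∃ t ∈ linkedExponents, t ≤ s) ∨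
      (s ≤ exponent 1 2 0 ∨ s ≤ exponent 2 0 1 ∨ s ≤ exponent 0 1 1 ∨ s ≤ exponent 0 0 2) ∨
      (s = exponent 2 1 0 ∨ s = exponent 0 1 2 ∨
        s = exponent 1 1 1 ∨ s = exponent 1 0 2 ∨ s = exponent 0 2 1) := by
  obtain ⟨a, b, c, rfl⟩ := exists_eq_exponent s
  simp only [linkedExponents, Set.mem_insert_iff, Set.mem_singleton_iff, exists_eq_or_imp,
    exists_eq_left, exponent_le_exponent, exponent_inj]
  by_cases hcube : 3 ≤ a ∨ 3 ≤ b ∨ 3 ≤ c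
  · left
    lia
  · obtain ⟨ha, hb, hc⟩ : a < 3 ∧ b < 3 ∧ c < 3 := by lia
    interval_cases a <;> interval_cases b <;> interval_cases c <;> decide

variable {f : MvPolynomial (Fin 3) R}

theorem coeff_eq_zero_of_le_corner (hf : f ∈ (cubeIdeal R).colon (exampleIdeal R))
    {s : Fin 3 →₀ ℕ} (hs : s ≤ exponent 1 2 0 ∨ s ≤ exponent 2 0 1 ∨ s ≤ exponent 0 1 1 ∨
      s ≤ exponent 0 0 2) : coeff s f = 0 := by
  rw [cubeIdeal_eq_span_X_pow] at hf
  have of_le {a b c a' b' c' : ℕ} (hmem : monomial (exponent a' b' c') 1 ∈ exampleIdeal R)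
      (hs : s ≤ exponent a b c) (h : exponent a b c + exponent a' b' c' = exponent 2 2 2) :
      coeff s f = 0 :=
    coeff_eq_zero_of_mem_colon hf hmem ((add_le_add_left hs _).trans h.le)
  obtain ⟨xzz, yyz, xxyz, xxyy⟩ := monomial_mem_exampleIdeal (R := R)
  rcases hs with hs | hs | hs | hs
  exacts [of_le xzz hs exponent_add, of_le yyz hs exponent_add, of_le xxyz hs exponent_add,
    of_le xxyy hs exponent_add]

theorem coeff_relations_of_mem_colon (hf : f ∈ (cubeIdeal R).colon (exampleIdeal R)) :
    coeff (exponent 0 1 2) f + coeff (exponent 2 1 0) f = 0 ∧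
      coeff (exponent 0 2 1) f + coeff (exponent 1 1 1) f = 0 ∧
      coeff (exponent 1 0 2) f + coeff (exponent 1 1 1) f = 0 := by
  rw [cubeIdeal_eq_span_X_pow] at hf
  refine ⟨coeff_add_coeff_eq_zero_of_mem_colon (t := exponent 2 1 0) (t' := exponent 0 1 2) hf ?_
      exponent_add.le (by simp only [exponent_add]),
    coeff_add_coeff_eq_zero_of_mem_colon (t := exponent 2 0 1) (t' := exponent 1 1 1) hf ?_
      exponent_add.le (by simp only [exponent_add]),
    coeff_add_coeff_eq_zero_of_mem_colon (t := exponent 1 2 0) (t' := exponent 1 1 1) hf ?_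
      exponent_add.le (by simp only [exponent_add])⟩ <;>
  · simp only [monomial_exponent, pow_zero, pow_one, one_mul, mul_one]
    exact Ideal.subset_span (by simp)

theorem mem_linkedIdeal_of_coeff_eq_zero (hf : f ∈ (cubeIdeal R).colon (exampleIdeal R))
    (h210 : coeff (exponent 2 1 0) f = 0) (h111 : coeff (exponent 1 1 1) f = 0) :
    f ∈ linkedIdeal R := by
  obtain ⟨h012, h021, h102⟩ := coeff_relations_of_mem_colon hf
  rw [h210, add_zero] at h012
  rw [h111, add_zero] at h021 h102
  refine span_monomial_linkedExponents_le (mem_ideal_span_monomial_image.2 fun s hs => ?_)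
  rw [mem_support_iff] at hs
  obtain hdom | hcorner | rfl | rfl | rfl | rfl | rfl := exponent_trichotomy s
  · exact hdom
  · exact absurd (coeff_eq_zero_of_le_corner hf hcorner) hs
  all_goals contradiction

theorem linkBinomial_eq_sub_monomial :
    linkBinomial R = monomial (exponent 2 1 0) 1 - monomial (exponent 0 1 2) 1 := by
  simp only [linkBinomial, monomial_exponent, pow_zero, pow_one, one_mul, mul_one]

theorem linkTrinomial_eq_sub_monomial :
    linkTrinomial R = monomial (exponent 1 1 1) 1 - monomial (exponent 1 0 2) 1 -
      monomial (exponent 0 2 1) 1 := by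
  simp only [linkTrinomial, monomial_exponent, pow_zero, pow_one, one_mul, mul_one]

theorem colon_le_linkedIdeal : (cubeIdeal R).colon (exampleIdeal R) ≤ linkedIdeal R := by
  intro f hf
  let q := C (coeff (exponent 2 1 0) f) * linkBinomial R +
    C (coeff (exponent 1 1 1) f) * linkTrinomial R
  have hq : q ∈ linkedIdeal R :=
    add_mem (Ideal.mul_mem_left _ _ linkBinomial_mem_linkedIdeal)
      (Ideal.mul_mem_left _ _ linkTrinomial_mem_linkedIdeal)
  have hfq : f - q ∈ linkedIdeal R := by
    apply mem_linkedIdeal_of_coeff_eq_zero (sub_mem hf (linkedIdeal_le_colon hq)) <;>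
      simp [q, linkBinomial_eq_sub_monomial, linkTrinomial_eq_sub_monomial, coeff_monomial,
        exponent_inj]
  exact (Submodule.sub_mem_iff_left _ hq).1 hfq

end ColonLe

theorem stmt_15_general (R : Type*) [CommRing R] :
    (cubeIdeal R).colon (exampleIdeal R) = linkedIdeal R :=
  colon_le_linkedIdeal.antisymm linkedIdeal_le_colon

/-- **Example 2.7.** Let `k` be a field, `𝓠 = k[X, Y, Z]`, and
`𝓘 = (X³, X²Y + YZ², X²Z + XYZ, XY² + XYZ, XZ², Y³, Y²Z, Z³)`.  Then
`(X³, Y³, Z³) : 𝓘 = (X³, X²Y − YZ², XYZ − XZ² − Y²Z, Y³, Z³)`.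
Here `X = X 0`, `Y = X 1`, `Z = X 2` in `MvPolynomial (Fin 3) k`. -/
theorem stmt_15 (k : Type*) [Field k]
    (𝓘 : Ideal (MvPolynomial (Fin 3) k))
    (h𝓘 : 𝓘 = Ideal.span {(X 0 : MvPolynomial (Fin 3) k) ^ 3,
      X 0 ^ 2 * X 1 + X 1 * X 2 ^ 2, X 0 ^ 2 * X 2 + X 0 * X 1 * X 2,
      X 0 * X 1 ^ 2 + X 0 * X 1 * X 2, X 0 * X 2 ^ 2, X 1 ^ 3, X 1 ^ 2 * X 2,
      X 2 ^ 3}) :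
    Submodule.colon
        (Ideal.span {(X 0 : MvPolynomial (Fin 3) k) ^ 3, X 1 ^ 3, X 2 ^ 3}) 𝓘 =
      Ideal.span {(X 0 : MvPolynomial (Fin 3) k) ^ 3,
        X 0 ^ 2 * X 1 - X 1 * X 2 ^ 2,
        X 0 * X 1 * X 2 - X 0 * X 2 ^ 2 - X 1 ^ 2 * X 2,
        X 1 ^ 3, X 2 ^ 3} := by
  subst h𝓘
  exact stmt_15_general k
end

section
/- Define h : ℤ → ℤ by h(i) = (i+1)(i+2)/2 for i ≥ 0 and h(i) = 0 for i < 0. For all integers s and d with d ≥ 3 and 2d < s + 3, setting u = s + 2 − ⌈d/2⌉, one has h(u) − h(u − d) − 6·h(u − s − 3 + d) > 2·h(s − u). -/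
/-- The Hilbert function of the polynomial ring `k[X₁, X₂, X₃]`:
`h i = (i+1)(i+2)/2` for `i ≥ 0` and `h i = 0` for `i < 0`. -/
def h (i : ℤ) : ℤ := if 0 ≤ i then (i + 1) * (i + 2) / 2 else 0

/-!
Write `c = s + 2 - u` and `f = d - c`, so that `d = f + c`; for `u = s + 2 - ⌈d/2⌉` these are
`⌈d/2⌉` and `⌊d/2⌋`. After doubling, `h u - h (u - d)` becomes `d * (2 * u + 3 - d)`, while the
other two terms become `6 * f * (f + 1)` and `2 * c * (c - 1)`. For fixed `f` and `c` only the
first of these depends on `s`, and it is smallest at `s = 2 * d - 2`, where the two sides differ by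
`(c - f) * (3 * f + 4 - c) + (f + c)`. This is positive when `f ≤ c ≤ 3 * f + 4` and `0 < d`.
-/

theorem two_mul_h {i : ℤ} (hi : -2 ≤ i) : 2 * h i = (i + 1) * (i + 2) := by
  unfold h
  split_ifs with hi_nonneg
  · have two_dvd : 2 ∣ (i + 1) * (i + 1 + 1) := (Int.even_mul_succ_self (i + 1)).two_dvd
    exact Int.mul_ediv_cancel' (by rwa [add_assoc i] at two_dvd)
  · obtain rfl | rfl : i = -2 ∨ i = -1 := by omega
    all_goals norm_num

theorem two_mul_h_sub_h_sub {u d : ℤ} (hu : -2 ≤ u) (hud : -2 ≤ u - d) :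
    2 * (h u - h (u - d)) = d * (2 * u + 3 - d) := by
  rw [mul_sub, two_mul_h hu, two_mul_h hud]
  ring

theorem six_mul_add_two_mul_lt_add_mul {R : Type*} [CommRing R] [PartialOrder R]
    [IsStrictOrderedRing R] {f c : R} (hfc : f ≤ c) (hcf : c ≤ 3 * f + 4) (hpos : 0 < f + c) :
    6 * (f * (f + 1)) + 2 * ((c - 1) * c) < (f + c) * (3 * f + c + 3) := by
  have product_nonneg : 0 ≤ (c - f) * (3 * f + 4 - c) :=
    mul_nonneg (sub_nonneg.mpr hfc) (sub_nonneg.mpr hcf)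
  have difference_eq : (f + c) * (3 * f + c + 3) - (6 * (f * (f + 1)) + 2 * ((c - 1) * c)) =
      (c - f) * (3 * f + 4 - c) + (f + c) := by ring
  rw [← sub_pos, difference_eq]
  exact add_pos_of_nonneg_of_pos product_nonneg hpos

section CeilHalf

variable (K : Type*) [Field K] [LinearOrder K] [IsStrictOrderedRing K] [FloorRing K] (d : ℤ)

theorem le_two_mul_ceil_half : d ≤ 2 * ⌈(d : K) / 2⌉ := by
  have half_le : (d : K) / 2 ≤ ⌈(d : K) / 2⌉ := Int.le_ceil _
  rw [div_le_iff₀' two_pos] at half_le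
  exact_mod_cast half_le

theorem two_mul_ceil_half_lt : 2 * ⌈(d : K) / 2⌉ < d + 2 := by
  have lt_half_add_one : (⌈(d : K) / 2⌉ : K) < (d : K) / 2 + 1 := Int.ceil_lt_add_one _
  have cast_lt : 2 * (⌈(d : K) / 2⌉ : K) < d + 2 := by linarith
  exact_mod_cast cast_lt

end CeilHalf

theorem stmt_16_general {s d u : ℤ} (hd : 0 < d) (hsd : 2 * d < s + 3)
    (hu_lower : 4 * (s + 1) ≤ 4 * u + 3 * d) (hu_upper : 2 * u + d ≤ 2 * (s + 2)) :
    h u - h (u - d) - 6 * h (u - s - 3 + d) > 2 * h (s - u) := by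
  obtain ⟨c, rfl⟩ : ∃ c, u = s + 2 - c := ⟨s + 2 - u, by ring⟩
  obtain ⟨f, rfl⟩ : ∃ f, d = f + c := ⟨d - c, by ring⟩
  have growth := two_mul_h_sub_h_sub (u := s + 2 - c) (d := f + c) (by omega) (by omega)
  have double_f : 2 * h (s + 2 - c - s - 3 + (f + c)) = f * (f + 1) := by
    rw [two_mul_h (by omega)]
    ring
  have double_c : 2 * h (s - (s + 2 - c)) = (c - 1) * c := by
    rw [two_mul_h (by omega)]
    ring
  have doubled : 6 * (f * (f + 1)) + 2 * ((c - 1) * c) <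
      (f + c) * (2 * (s + 2 - c) + 3 - (f + c)) :=
    calc
      _ < (f + c) * (3 * f + c + 3) :=
        six_mul_add_two_mul_lt_add_mul (by omega) (by omega) hd
      _ ≤ (f + c) * (2 * (s + 2 - c) + 3 - (f + c)) :=
        mul_le_mul_of_nonneg_left (by omega) hd.le
  linarith

/-- **Key estimate in Case 1 of Proposition 3.2.** For all integers `s` and `d` with
`d ≥ 3` and `2d < s + 3`, setting `u = s + 2 − ⌈d/2⌉`, one has
`h(u) − h(u−d) − 6·h(u−s−3+d) > 2·h(s−u)`. -/
theorem stmt_16 (s d : ℤ) (hd : 3 ≤ d) (hsd : 2 * d < s + 3)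
    (u : ℤ) (hu : u = s + 2 - ⌈(d : ℚ) / 2⌉) :
    h u - h (u - d) - 6 * h (u - s - 3 + d) > 2 * h (s - u) := by
  exact stmt_16_general (by omega) hsd (by linarith [two_mul_ceil_half_lt ℚ d])
    (by linarith [le_two_mul_ceil_half ℚ d])
end

section
/- Define h : ℤ → ℤ by h(i) = (i+1)(i+2)/2 for i ≥ 0 and h(i) = 0 for i < 0. For all integers s and d with s ≥ 1, s + 3 ≤ 2d, and d ≤ s + 1, setting u = ⌊(s + d)/2⌋, one has h(u) − 7·h(u − d) > 2·h(s − u). -/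
/-!
Put `a = u - d` and `b = s - u`. The choice of `u` gives `a ≤ b ≤ a + 1`, and `s + 3 ≤ 2 * d` says
`2 * a + b + 3 ≤ u`. As `h` is monotone, it suffices to treat `u = 2 * a + b + 3`, where
`2 * (h u - 7 * h a - 2 * h b) = (b - a) * (3 * a - b + 3) + 2` as soon as `-1 ≤ a`. For `a < -1`
both `h a` and `h b` vanish.
-/

theorem h_of_neg {i : ℤ} (hi : i < 0) : h i = 0 :=
  if_neg hi.not_ge

theorem h_pos {i : ℤ} (hi : 0 ≤ i) : 0 < h i := by
  have formula := two_mul_h (i := i) (by omega)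
  nlinarith

theorem h_nonneg (i : ℤ) : 0 ≤ h i := by
  rcases lt_or_ge i 0 with hneg | hnonneg
  · exact (h_of_neg hneg).ge
  · exact (h_pos hnonneg).le

theorem h_mono : Monotone h := by
  intro i j hij
  rcases lt_or_ge i 0 with hneg | hnonneg
  · exact (h_of_neg hneg).trans_le (h_nonneg j)
  · have formula_i := two_mul_h (i := i) (by omega)
    have formula_j := two_mul_h (i := j) (by omega)
    have : (i + 1) * (i + 2) ≤ (j + 1) * (j + 2) :=
      mul_le_mul (by omega) (by omega) (by omega) (by omega)
    omega

theorem seven_mul_h_add_two_mul_h_lt {a b : ℤ} (hab : a ≤ b) (hba : b ≤ 3 * a + 3) :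
    7 * h a + 2 * h b < h (2 * a + b + 3) := by
  have formula_a := two_mul_h (i := a) (by omega)
  have formula_b := two_mul_h (i := b) (by omega)
  have formula_sum := two_mul_h (i := 2 * a + b + 3) (by omega)
  have twice_difference : 2 * (h (2 * a + b + 3) - 7 * h a - 2 * h b) =
      (b - a) * (3 * a - b + 3) + 2 := by
    linear_combination formula_sum - 7 * formula_a - 2 * formula_b
  have product_nonneg : 0 ≤ (b - a) * (3 * a - b + 3) :=
    mul_nonneg (by omega) (by omega)
  omega

theorem floor_add_div_two (s d : ℤ) : ⌊((s : ℚ) + (d : ℚ)) / 2⌋ = (s + d) / 2 := by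
  exact_mod_cast Rat.floor_intCast_div_natCast (s + d) 2

theorem stmt_17_general (s d : ℤ) (hsd_nonneg : 0 ≤ s + d) (hsd : s + 3 ≤ 2 * d)
    (u : ℤ) (hu : u = ⌊((s : ℚ) + (d : ℚ)) / 2⌋) :
    h u - 7 * h (u - d) > 2 * h (s - u) := by
  rw [floor_add_div_two] at hu
  suffices 7 * h (u - d) + 2 * h (s - u) < h u by omega
  rcases lt_or_ge (u - d) (-1) with hlt | hge
  · rw [h_of_neg (i := u - d) (by omega), h_of_neg (i := s - u) (by omega)]
    exact h_pos (by omega)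
  · calc
      7 * h (u - d) + 2 * h (s - u) < h (2 * (u - d) + (s - u) + 3) :=
        seven_mul_h_add_two_mul_h_lt (by omega) (by omega)
      _ ≤ h u := h_mono (by omega)

/-- **Key estimate in Case 2 of Proposition 3.2.** For all integers `s` and `d` with
`s ≥ 1`, `s + 3 ≤ 2d`, and `d ≤ s + 1`, setting `u = ⌊(s+d)/2⌋`, one has
`h(u) − 7·h(u−d) > 2·h(s−u)`. -/
theorem stmt_17 (s d : ℤ) (hs : 1 ≤ s) (hsd : s + 3 ≤ 2 * d) (hds : d ≤ s + 1)
    (u : ℤ) (hu : u = ⌊((s : ℚ) + (d : ℚ)) / 2⌋) :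
    h u - 7 * h (u - d) > 2 * h (s - u) :=
  stmt_17_general s d (by omega) hsd u hu
end

section
/- Define h : ℤ → ℤ by h(i) = (i+1)(i+2)/2 for i ≥ 0 and h(i) = 0 for i < 0. For all integers s and d with d ≥ 3 and 2d ≤ s + 3, setting u = s + 2 − ⌈d/2⌉, one has h(u) − h(u − d) − 4·h(u − s − 3 + d) > 4·h(s − u). -/
theorem h_add_h_sub_one {i : ℤ} (hi : -1 ≤ i) : h i + h (i - 1) = (i + 1) ^ 2 := by
  have htop := two_mul_h (i := i) (by omega)
  have hpred := two_mul_h (i := i - 1) (by omega)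
  linarith

theorem sq_le_h_sub_h_sub {u d : ℤ} (hd : 0 ≤ d) (hu : 3 * d - 3 ≤ 2 * u) :
    d ^ 2 ≤ h u - h (u - d) := by
  have hdiff := two_mul_h_sub_h_sub (u := u) (d := d) (by omega) (by omega)
  have hmul : d * (2 * d) ≤ d * (2 * u + 3 - d) := mul_le_mul_of_nonneg_left (by omega) hd
  linarith

theorem sq_lt_h_sub_h_sub {u d : ℤ} (hd : 0 < d) (hu : 3 * d - 3 < 2 * u) :
    d ^ 2 < h u - h (u - d) := by
  have hdiff := two_mul_h_sub_h_sub (u := u) (d := d) (by omega) (by omega)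
  have hmul : d * (2 * d) < d * (2 * u + 3 - d) := mul_lt_mul_of_pos_left (by omega) hd
  linarith

theorem ceil_intCast_div_two (d : ℤ) : ⌈(d : ℚ) / 2⌉ = (d + 1) / 2 := by
  have hceil : ⌈(d : ℚ) / 2⌉ = -(-d / 2) := mod_cast Rat.ceil_intCast_div_natCast d 2
  omega

theorem stmt_18_general {s d u : ℤ} (hd : 0 < d) (hsd : 2 * d ≤ s + 3)
    (hu : u = s + 2 - ⌈(d : ℚ) / 2⌉) :
    4 * h (s - u) < h u - h (u - d) - 4 * h (u - s - 3 + d) := by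
  rw [ceil_intCast_div_two] at hu
  obtain ⟨k, rfl | rfl⟩ := Int.even_or_odd' d
  · have hlower : (2 * k) ^ 2 < h u - h (u - 2 * k) := sq_lt_h_sub_h_sub hd (by omega)
    have hupper : h (k - 1) + h (k - 1 - 1) = (k - 1 + 1) ^ 2 := h_add_h_sub_one (by omega)
    rw [show s - u = k - 1 - 1 by omega, show u - s - 3 + 2 * k = k - 1 by omega]
    linarith
  · have hlower : (2 * k + 1) ^ 2 ≤ h u - h (u - (2 * k + 1)) :=
      sq_le_h_sub_h_sub hd.le (by omega)
    have hupper : 2 * h (k - 1) = (k - 1 + 1) * (k - 1 + 2) := two_mul_h (by omega)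
    rw [show s - u = k - 1 by omega, show u - s - 3 + (2 * k + 1) = k - 1 by omega]
    linarith

/-- **Key estimate in Case 1 of Proposition 3.3.** For all integers `s` and `d` with
`d ≥ 3` and `2d ≤ s + 3`, setting `u = s + 2 − ⌈d/2⌉`, one has
`h(u) − h(u−d) − 4·h(u−s−3+d) > 4·h(s−u)`. -/
theorem stmt_18 (s d : ℤ) (hd : 3 ≤ d) (hsd : 2 * d ≤ s + 3)
    (u : ℤ) (hu : u = s + 2 - ⌈(d : ℚ) / 2⌉) :
    h u - h (u - d) - 4 * h (u - s - 3 + d) > 4 * h (s - u) :=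
  stmt_18_general (by omega) hsd hu
end

section
/- Define h : ℤ → ℤ by h(i) = (i+1)(i+2)/2 for i ≥ 0 and h(i) = 0 for i < 0. For all integers s and d with s ≥ 1, s + 3 < 2d, and d ≤ s + 1, setting u = ⌊(s + d)/2⌋, one has h(u) − 5·h(u − d) > 4·h(s − u). -/
theorem five_mul_consecutive_add_four_mul_consecutive_lt {a b u : ℤ} (ha : -1 ≤ a) (hab : a ≤ b)
    (hba : b ≤ a + 1) (hu : 2 * a + b + 4 ≤ u) :
    5 * ((a + 1) * (a + 2)) + 4 * ((b + 1) * (b + 2)) < (u + 1) * (u + 2) :=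
  calc
    5 * ((a + 1) * (a + 2)) + 4 * ((b + 1) * (b + 2))
      < (2 * a + b + 4 + 1) * (2 * a + b + 4 + 2) := by
        obtain rfl | rfl : b = a ∨ b = a + 1 := by lia
        all_goals linarith
    _ ≤ (u + 1) * (u + 2) := by gcongr <;> lia

theorem five_mul_h_add_four_mul_h_lt {a b u : ℤ} (hu₀ : 0 ≤ u) (hab : a ≤ b) (hba : b ≤ a + 1)
    (hu : 2 * a + b + 4 ≤ u) : 5 * h a + 4 * h b < h u := by
  rcases lt_or_ge b 0 with hb | hb
  · simpa only [h_of_neg hb, h_of_neg (hab.trans_lt hb), mul_zero, add_zero] using h_pos hu₀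
  · have quadratic_lt :=
      five_mul_consecutive_add_four_mul_consecutive_lt (by lia) hab hba hu
    rw [← two_mul_h (by lia), ← two_mul_h (by lia), ← two_mul_h (by lia)] at quadratic_lt
    linarith

theorem stmt_19_general (s d : ℤ) (hs : 0 ≤ s + d) (hsd : s + 3 < 2 * d)
    (u : ℤ) (hu : u = ⌊((s : ℚ) + (d : ℚ)) / 2⌋) :
    h u - 5 * h (u - d) > 4 * h (s - u) := by
  have u_eq : u = (s + d) / 2 := by
    rw [hu]
    exact_mod_cast Rat.floor_intCast_div_natCast (s + d) 2
  have sum_lt : 5 * h (u - d) + 4 * h (s - u) < h u :=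
    five_mul_h_add_four_mul_h_lt (by lia) (by lia) (by lia) (by lia)
  linarith

/-- **Key estimate in Case 2 of Proposition 3.3.** For all integers `s` and `d` with
`s ≥ 1`, `s + 3 < 2d`, and `d ≤ s + 1`, setting `u = ⌊(s+d)/2⌋`, one has
`h(u) − 5·h(u−d) > 4·h(s−u)`. -/
theorem stmt_19 (s d : ℤ) (hs : 1 ≤ s) (hsd : s + 3 < 2 * d) (hds : d ≤ s + 1)
    (u : ℤ) (hu : u = ⌊((s : ℚ) + (d : ℚ)) / 2⌋) :
    h u - 5 * h (u - d) > 4 * h (s - u) :=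
  stmt_19_general s d (by lia) hsd u hu
end
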